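/- With the apparatus fixed and p sufficiently large in terms of k, suppose that Λ ≥ 0. Let a and b be integers with 0 ≤ a < b ≤ (32tθ)^{−1} and b ≥ ta, and put g = b − ta. Suppose there are real numbers ψ, c and γ with 0 ≤ c ≤ (2δ)^{−1}θ, γ ≥ −rb and ψ ≥ 0, and a constant C₁ > 0, such that X^Λ·M^{Λψ} ≤ C₁·X^{cδ}·M^{−γ}·⟦K_{a,b}(X)⟧. Then, provided X is sufficiently large in terms of s, k, r, t, N and C₁, there exist an integer h with 0 ≤ h ≤ 15(t−1)b and a constant C₂ depending at most on s, k, r, t, N, C₁, such that X^Λ·M^{Λψ′} ≤ C₂·X^{c′δ}·M^{−γ′}·⟦K_{b,tb+h}(X)⟧, where ψ′ = tψ + (t−1)b, c′ = t(c+1) and γ′ = tγ + (4/3)sh − sg. -/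

import Mathlib

open Filter MeasureTheory Finset

attribute [local instance] Classical.propDecidable

noncomputable section

/-- Number of integral solutions of the Vinogradov system of degree k
in 2s variables from [1,X]. -/
def Jcount (s k : ℕ) (X : ℝ) : ℕ :=
  Set.ncard {xy : (Fin s → ℤ) × (Fin s → ℤ) |
    (∀ i, 1 ≤ xy.1 i ∧ (xy.1 i : ℝ) ≤ X) ∧
    (∀ i, 1 ≤ xy.2 i ∧ (xy.2 i : ℝ) ≤ X) ∧
    ∀ j ∈ Finset.Icc 1 k, ∑ i, ((xy.1 i) ^ j - (xy.2 i) ^ j) = 0}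

/-- e(z) = exp(2πiz). -/
def ec (z : ℝ) : ℂ := Complex.exp (2 * Real.pi * Complex.I * z)

/-- The unit box [0,1)^k. -/
def box (k : ℕ) : Set (Fin k → ℝ) := Set.univ.pi fun _ => Set.Ico (0:ℝ) 1

/-- The exponential sum f_c(α;ξ), over 1 ≤ x ≤ X with x ≡ ξ (mod p^c). -/
def fexp (k p : ℕ) (X : ℝ) (c : ℕ) (ξ : ℤ) (α : Fin k → ℝ) : ℂ :=
  ∑ x ∈ (Finset.Icc (1:ℤ) ⌊X⌋).filter (fun x => Int.ModEq ((p:ℤ)^c) x ξ),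
    ec (∑ j : Fin k, α j * (x:ℝ)^((j:ℕ)+1))

/-- The set Ξ_c^r(ξ): r-tuples in [1,p^{c+1}], congruent to ξ mod p^c,
pairwise distinct mod p^{c+1}. -/
def XiSet (p r c : ℕ) (ξ : ℤ) : Set (Fin r → ℤ) :=
  {v | (∀ i, 1 ≤ v i ∧ v i ≤ (p:ℤ)^(c+1)) ∧
       (∀ i, Int.ModEq ((p:ℤ)^c) (v i) ξ) ∧
       Function.Injective fun i => ((v i : ZMod (p^(c+1))))}

/-- The conditioned exponential sum F_c(α;ξ). -/
def Fexp (k p r : ℕ) (X : ℝ) (c : ℕ) (ξ : ℤ) (α : Fin k → ℝ) : ℂ :=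
  ∑ᶠ v ∈ XiSet p r c ξ, ∏ i, fexp k p X (c+1) (v i) α

/-- The mean value I_{a,b}(X;ξ,η). -/
def Iab (k p r s : ℕ) (X : ℝ) (a b : ℕ) (ξ η : ℤ) : ℝ :=
  ∫ α in box k, ‖Fexp k p r X a ξ α‖^2 * ‖fexp k p X b η α‖^(2*s)

/-- The mean value K_{a,b}(X;ξ,η). -/
def Kab (k p r t : ℕ) (X : ℝ) (a b : ℕ) (ξ η : ℤ) : ℝ :=
  ∫ α in box k, ‖Fexp k p r X a ξ α‖^2 * ‖Fexp k p r X b η α‖^(2*t)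

/-- I_{a,b}(X): the maximum of I_{a,b}(X;ξ,η) over admissible ξ, η. -/
def Imax (k p r s : ℕ) (X : ℝ) (a b : ℕ) : ℝ :=
  sSup {v : ℝ | ∃ ξ η : ℤ, 1 ≤ ξ ∧ ξ ≤ (p:ℤ)^a ∧ 1 ≤ η ∧ η ≤ (p:ℤ)^b ∧
    ¬ Int.ModEq (p:ℤ) η ξ ∧ v = Iab k p r s X a b ξ η}

/-- The set Ξ(η) of members of Ξ_0^r(0) avoiding the class of η mod p. -/
def XiTilde (p r : ℕ) (η : ℤ) : Set (Fin r → ℤ) :=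
  {v | v ∈ XiSet p r 0 0 ∧ ∀ i, ¬ Int.ModEq (p:ℤ) (v i) η}

/-- The pre-conditioned sum F(α;η). -/
def Ftilde (k p r : ℕ) (X : ℝ) (η : ℤ) (α : Fin k → ℝ) : ℂ :=
  ∑ᶠ v ∈ XiTilde p r η, ∏ i, fexp k p X 1 (v i) α

/-- The mean value K̃_c(X;η). -/
def Ktilde (k p r t : ℕ) (X : ℝ) (c : ℕ) (η : ℤ) : ℝ :=
  ∫ α in box k, ‖Ftilde k p r X η α‖^2 * ‖Fexp k p r X c η α‖^(2*t)

/-- K_{a,b}(X): for a ≥ 1 the maximum of K_{a,b}(X;ξ,η) over admissible ξ, η;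
for a = 0 the pre-congruencing quantity K_{0,b}(X) = max_η K̃_b(X;η). -/
def Kmax (k p r t : ℕ) (X : ℝ) (a b : ℕ) : ℝ :=
  if a = 0 then sSup {v : ℝ | ∃ η : ℤ, 1 ≤ η ∧ η ≤ (p:ℤ)^b ∧ v = Ktilde k p r t X b η}
  else sSup {v : ℝ | ∃ ξ η : ℤ, 1 ≤ ξ ∧ ξ ≤ (p:ℤ)^a ∧ 1 ≤ η ∧ η ≤ (p:ℤ)^b ∧
    ¬ Int.ModEq (p:ℤ) η ξ ∧ v = Kab k p r t X a b ξ η}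

/-- λ = limsup_{Y→∞} log J_{sr,k}(Y)/log Y. -/
def lamExp (k sr : ℕ) : ℝ :=
  Filter.limsup (fun Y : ℝ => Real.log ((Jcount sr k Y : ℝ)) / Real.log Y) Filter.atTop

/-- θ = (16t)^{-N-1}. -/
def thetaC (t N : ℕ) : ℝ := (16*(t:ℝ)) ^ (-((N:ℝ)+1))

/-- δ = θ/(1000 N t^N). -/
def deltaC (t N : ℕ) : ℝ := thetaC t N / (1000 * (N:ℝ) * (t:ℝ)^N)

/-- M = X^θ. -/
def Mval (t N : ℕ) (X : ℝ) : ℝ := X ^ thetaC t N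

/-- κ = r(t+1) - (1/2)(t+r-k)(t+r-k-1+(2r-2)/(t-1)). -/
def kappa (k r t : ℕ) : ℝ :=
  (r : ℝ) * ((t : ℝ) + 1) -
    (1/2) * ((t : ℝ) + r - k) * ((t : ℝ) + r - k - 1 + (2*(r:ℝ) - 2)/((t:ℝ) - 1))

/-- Λ = λ - 2(s+r) + κ, with s = rt. -/
def LamC (k r t : ℕ) : ℝ := lamExp k (r*(t+1)) - 2*((r*(t+1) : ℕ) : ℝ) + kappa k r t

/-- The normalised mean value ⟦K_{a,b}(X)⟧ = K_{a,b}(X) (X/M^b)^{-2s} (X/M^a)^{κ-2r}. -/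
def normK (k p r t N : ℕ) (X : ℝ) (a b : ℕ) : ℝ :=
  Kmax k p r t X a b * (X / (Mval t N X)^b) ^ (-(2*((r*t : ℕ):ℝ))) *
    (X / (Mval t N X)^a) ^ (kappa k r t - 2*(r:ℝ))

/-- μ = (1/2)(t+r-k)(t+r-k-1). -/
def muC (k r t : ℕ) : ℝ := (1/2) * ((t:ℝ)+r-k) * ((t:ℝ)+r-k-1)

/-- ν = (1/2)(t+r-k)(k+r-t-1). -/
def nuC (k r t : ℕ) : ℝ := (1/2) * ((t:ℝ)+r-k) * ((k:ℝ)+r-t-1)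

/-!
The proof is one step of Wooley's efficient congruencing.  The mean value `Kab` counts solutions of
the power sum equations whose `F_b`-variables all lie in one class modulo `p ^ b`; translating that
class to the origin forces the `j`-th power sums of the remaining variables to agree modulo
`p ^ (j * b)`.  Integer combinations of the congruences of degrees `k - r + 1, …, k` become power
sum congruences to a polynomial whose derivative is a unit, so a Hensel argument shows that the
conditioned `r`-tuples fall into few classes modulo `p ^ (t * b)`.  Hölder's inequality then bounds
`Kab` at level `(a, b)` by `Iab` at level `(b, t * b)` together with a Vinogradov mean value.

It remains to restore the conditioning at level `t * b`.  Either `Iab` at a given level is dominated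
by the conditioned `Kab`, or two of the variables coincide modulo the next power of `p` and the
level may be raised by one.  If the level were raised by more than `15 * (t - 1) * b`, then Hölder's
inequality and the mean value bound for such short progressions would beat the assumed lower bound,
because `Λ ≥ 0`; so the process stops at some `h ≤ 15 * (t - 1) * b`.
-/

section PowerSums

variable {σ K : Type*} [Fintype σ] [CommRing K] [IsDomain K] {v w : σ → K}

open MvPolynomial in
lemma aeval_esymm_eq_of_sum_pow_eq {n : ℕ} (hK : ∀ j : ℕ, 1 ≤ j → j ≤ n → (j : K) ≠ 0)
    (h : ∀ j, 1 ≤ j → j ≤ n → ∑ i, v i ^ j = ∑ i, w i ^ j) {j : ℕ} (hj : j ≤ n) :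
    aeval v (esymm σ K j) = aeval w (esymm σ K j) := by
  induction j using Nat.strong_induction_on with
  | _ j ih =>
    rcases Nat.eq_zero_or_pos j with rfl | hpos
    · simp
    have newton (u : σ → K) := congrArg (aeval u) (mul_esymm_eq_sum σ K j)
    simp only [map_mul, map_natCast, map_sum, map_pow, map_neg, map_one] at newton
    refine mul_left_cancel₀ (hK j hpos hj) ?_
    rw [newton v, newton w]
    congr 1
    refine sum_congr rfl fun x hx => ?_
    rw [mem_filter, HasAntidiagonal.mem_antidiagonal] at hx
    rw [ih x.1 hx.2 (by omega)]
    congr 1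
    simp only [psum, map_sum, map_pow, aeval_X]
    exact h x.2 (by omega) (by omega)

lemma map_univ_val_eq_of_sum_pow_eq
    (hK : ∀ j : ℕ, 1 ≤ j → j ≤ Fintype.card σ → (j : K) ≠ 0)
    (h : ∀ j, 1 ≤ j → j ≤ Fintype.card σ → ∑ i, v i ^ j = ∑ i, w i ^ j) :
    univ.val.map v = univ.val.map w := by
  have hprod : ((univ.val.map v).map fun x => Polynomial.X - Polynomial.C x).prod
      = ((univ.val.map w).map fun x => Polynomial.X - Polynomial.C x).prod := by
    rw [Multiset.prod_X_sub_X_eq_sum_esymm, Multiset.prod_X_sub_X_eq_sum_esymm]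
    simp only [Multiset.card_map, card_val, card_univ]
    refine sum_congr rfl fun j hj => ?_
    have hes := aeval_esymm_eq_of_sum_pow_eq hK h (Nat.lt_succ_iff.1 (mem_range.1 hj))
    rw [MvPolynomial.aeval_esymm_eq_multiset_esymm,
      MvPolynomial.aeval_esymm_eq_multiset_esymm] at hes
    rw [hes]
  simpa only [Polynomial.roots_multiset_prod_X_sub_C] using congrArg Polynomial.roots hprod

lemma exists_dvd_sub_of_dvd_sum_pow_sub {p : ℕ} (hp : p.Prime) (hσ : Fintype.card σ < p)
    {u u' : σ → ℤ}
    (h : ∀ j, 1 ≤ j → j ≤ Fintype.card σ → (p : ℤ) ∣ ∑ i, u i ^ j - ∑ i, u' i ^ j) (i : σ) :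
    ∃ j, (p : ℤ) ∣ u' i - u j := by
  have : Fact p.Prime := ⟨hp⟩
  have hmap : univ.val.map (fun i => (u i : ZMod p)) = univ.val.map (fun i => (u' i : ZMod p)) := by
    refine map_univ_val_eq_of_sum_pow_eq (fun j hj hjσ h0 => ?_) fun j hj hjσ => ?_
    · have := Nat.le_of_dvd hj ((ZMod.natCast_eq_zero_iff _ _).1 h0)
      omega
    · have := (ZMod.intCast_zmod_eq_zero_iff_dvd _ _).2 (h j hj hjσ)
      push_cast at this
      exact sub_eq_zero.1 this
  have hmem := Multiset.mem_map_of_mem (fun i => (u' i : ZMod p)) (mem_univ_val i)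
  rw [← hmap, Multiset.mem_map] at hmem
  obtain ⟨j, -, hj⟩ := hmem
  refine ⟨j, (ZMod.intCast_zmod_eq_zero_iff_dvd _ _).1 ?_⟩
  rw [Int.cast_sub, hj, sub_self]

end PowerSums

section ScaledAntiderivative

open Polynomial

variable {R : Type*} [CommRing R] (k : ℕ)

/-- `k!` times the antiderivative without constant term of a polynomial of degree less than `k`.
The factor `k!` clears the denominators; coefficients of index at least `k` are discarded. -/
def scaledAntideriv (f : R[X]) : R[X] :=
  ∑ n ∈ range k, C (((k.factorial / (n + 1) : ℕ) : R) * f.coeff n) * X ^ (n + 1)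

lemma derivative_scaledAntideriv {k : ℕ} {f : R[X]} (hf : f.natDegree < k) :
    derivative (scaledAntideriv k f) = C (k.factorial : R) * f := by
  unfold scaledAntideriv
  rw [derivative_sum]
  conv_rhs => rw [f.as_sum_range_C_mul_X_pow' hf, mul_sum]
  refine sum_congr rfl fun n hn => ?_
  have hdvd : (n + 1) ∣ k.factorial := Nat.dvd_factorial n.succ_pos (mem_range.1 hn)
  have hfac : (k.factorial : R) = ((k.factorial / (n + 1) : ℕ) : R) * ((n : R) + 1) := by
    exact_mod_cast congrArg (Nat.cast : ℕ → R) (Nat.div_mul_cancel hdvd).symm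
  rw [derivative_C_mul_X_pow, hfac]
  simp only [Nat.add_sub_cancel, map_mul, map_add, map_one, Nat.cast_add, Nat.cast_one]
  ring

lemma dvd_eval_scaledAntideriv_sub {m : R} {f g : R[X]} (h : C m ∣ f - g) (x : R) :
    m ∣ (scaledAntideriv k f).eval x - (scaledAntideriv k g).eval x := by
  simp only [scaledAntideriv, eval_finsetSum, ← sum_sub_distrib, eval_mul, eval_C, eval_pow, eval_X]
  refine dvd_sum fun n _ => ?_
  rw [← sub_mul, ← mul_sub, ← coeff_sub]
  exact ((C_dvd_iff_dvd_coeff _ _).1 h n).mul_left _ |>.mul_right _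

lemma coeff_scaledAntideriv_zero (f : R[X]) : (scaledAntideriv k f).coeff 0 = 0 := by
  simp [scaledAntideriv, finsetSum_coeff]

lemma coeff_scaledAntideriv_succ (f : R[X]) (n : ℕ) :
    (scaledAntideriv k f).coeff (n + 1) =
      if n < k then ((k.factorial / (n + 1) : ℕ) : R) * f.coeff n else 0 := by
  simp only [scaledAntideriv, finsetSum_coeff, coeff_C_mul, coeff_X_pow, add_left_inj, mul_ite,
    mul_one, mul_zero, sum_ite_eq, mem_range]

lemma natDegree_scaledAntideriv_le (f : R[X]) : (scaledAntideriv k f).natDegree ≤ k :=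
  natDegree_sum_le_of_forall_le _ _ fun _ hn =>
    (natDegree_C_mul_X_pow_le _ _).trans (mem_range.1 hn)

lemma scaledAntideriv_C_mul_X_pow {n : ℕ} (hn : n < k) (c : R) :
    scaledAntideriv k (C c * X ^ n) =
      C (((k.factorial / (n + 1) : ℕ) : R) * c) * X ^ (n + 1) := by
  unfold scaledAntideriv
  refine (sum_eq_single_of_mem n (mem_range.2 hn) fun j _ hj => ?_).trans ?_
  · rw [coeff_C_mul_X_pow, if_neg hj, mul_zero, C_0, zero_mul]
  · rw [coeff_C_mul_X_pow, if_pos rfl]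

lemma eval_scaledAntideriv_eq_sum_Icc {k l : ℕ} (hl : 1 ≤ l) {f : R[X]} (hf : X ^ (l - 1) ∣ f)
    (x : R) :
    (scaledAntideriv k f).eval x = ∑ j ∈ Icc l k, (scaledAntideriv k f).coeff j * x ^ j := by
  rw [eval_eq_sum_range' (Nat.lt_succ_of_le (natDegree_scaledAntideriv_le k f))]
  symm
  refine sum_subset (fun j hj => ?_) fun j hjk hj => ?_
  · simp only [mem_Icc, mem_range] at hj ⊢
    omega
  simp only [mem_Icc, mem_range] at hj hjk
  suffices h : (scaledAntideriv k f).coeff j = 0 by rw [h, zero_mul]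
  rcases j with _ | n
  · exact coeff_scaledAntideriv_zero k f
  · rw [coeff_scaledAntideriv_succ, X_pow_dvd_iff.1 hf n (by omega), mul_zero, ite_self]

end ScaledAntiderivative

section LiftingPolynomial

open Polynomial

variable {k l : ℕ} {ω q : ℤ}

/-- The polynomial `k! ∫₀ʷ (ω + q v)^(l-1) v^(k-l) dv` in `w`. Its derivative is a monomial in `w`
and `ω + q w`, which allows solutions of congruences in `ω + q w` to be lifted. -/
def liftPoly (k l : ℕ) (ω q : ℤ) : ℤ[X] :=
  scaledAntideriv k ((C ω + C q * X) ^ (l - 1) * X ^ (k - l))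

lemma natDegree_pow_mul_pow_lt {R : Type*} [CommRing R] (hl : 1 ≤ l) (hlk : l ≤ k) {A B : R[X]}
    (hA : A.natDegree ≤ 1) (hB : B.natDegree ≤ 1) :
    (A ^ (l - 1) * B ^ (k - l)).natDegree < k := by
  have h1 : (A ^ (l - 1)).natDegree ≤ (l - 1) * 1 := natDegree_pow_le_of_le _ hA
  have h2 : (B ^ (k - l)).natDegree ≤ (k - l) * 1 := natDegree_pow_le_of_le _ hB
  have := natDegree_mul_le (p := A ^ (l - 1)) (q := B ^ (k - l))
  omega

lemma derivative_liftPoly (hl : 1 ≤ l) (hlk : l ≤ k) (ω q : ℤ) :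
    derivative (liftPoly k l ω q) =
      C (k.factorial : ℤ) * ((C ω + C q * X) ^ (l - 1) * X ^ (k - l)) :=
  derivative_scaledAntideriv <|
    natDegree_pow_mul_pow_lt hl hlk (by compute_degree) natDegree_X_le

lemma exists_C_mul_liftPoly_eq (hl : 1 ≤ l) (hlk : l ≤ k) (ω q : ℤ) :
    ∃ d : ℤ, C (q ^ (k - l + 1)) * liftPoly k l ω q =
      C d + (scaledAntideriv k (X ^ (l - 1) * (X - C ω) ^ (k - l))).comp (C ω + C q * X) := by
  set P := scaledAntideriv k (X ^ (l - 1) * (X - C ω) ^ (k - l))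
  have hP' : derivative P = C (k.factorial : ℤ) * (X ^ (l - 1) * (X - C ω) ^ (k - l)) :=
    derivative_scaledAntideriv
      (natDegree_pow_mul_pow_lt hl hlk natDegree_X_le (natDegree_X_sub_C_le ω))
  have hder : derivative (C (q ^ (k - l + 1)) * liftPoly k l ω q - P.comp (C ω + C q * X)) = 0 := by
    have hsub : C ω + C q * X - C ω = C q * X := add_sub_cancel_left _ _
    rw [derivative_sub, derivative_C_mul, derivative_comp, derivative_liftPoly hl hlk, hP']
    simp only [derivative_add, derivative_C, derivative_C_mul, derivative_X, zero_add, mul_one,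
      mul_comp, pow_comp, sub_comp, X_comp, C_comp, hsub, map_pow]
    ring
  obtain ⟨d, hd⟩ := natDegree_eq_zero.1 (derivative_eq_zero.1 hder)
  exact ⟨d, by rw [hd, sub_add_cancel]⟩

lemma exists_mul_eval_liftPoly_eq_sum (hl : 1 ≤ l) (hlk : l ≤ k) (ω q : ℤ) :
    ∃ (d : ℤ) (c : ℕ → ℤ), ∀ w : ℤ,
      q ^ (k - l + 1) * (liftPoly k l ω q).eval w = d + ∑ j ∈ Icc l k, c j * (ω + q * w) ^ j := by
  obtain ⟨d, hd⟩ := exists_C_mul_liftPoly_eq hl hlk ω q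
  refine ⟨d, (scaledAntideriv k (X ^ (l - 1) * (X - C ω) ^ (k - l))).coeff, fun w => ?_⟩
  rw [← eval_scaledAntideriv_eq_sum_Icc hl (dvd_mul_right _ ((X - C ω) ^ (k - l)))]
  simpa only [eval_mul, eval_add, eval_C, eval_comp, eval_X] using congrArg (eval w) hd

lemma dvd_eval_liftPoly_sub (hl : 1 ≤ l) (hlk : l ≤ k) {m : ℤ} (hmq : m ∣ q) (w : ℤ) :
    m ∣ (liftPoly k l ω q).eval w
      - ((k.factorial / (k - l + 1) : ℕ) : ℤ) * ω ^ (l - 1) * w ^ (k - l + 1) := by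
  have hmono : (scaledAntideriv k (C (ω ^ (l - 1)) * X ^ (k - l))).eval w
      = ((k.factorial / (k - l + 1) : ℕ) : ℤ) * ω ^ (l - 1) * w ^ (k - l + 1) := by
    rw [scaledAntideriv_C_mul_X_pow k (by omega), eval_C_mul, eval_pow, eval_X]
  rw [← hmono]
  refine dvd_eval_scaledAntideriv_sub k ?_ w
  rw [map_pow, ← sub_mul]
  refine Dvd.dvd.mul_right (dvd_trans ?_ (sub_dvd_pow_sub_pow _ _ _)) _
  rw [add_sub_cancel_left]
  exact (map_dvd C hmq).mul_right _

end LiftingPolynomial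

section LiftSum

variable {ι : Type*} [Fintype ι] {k l : ℕ} {ω q : ℤ} {w w' : ι → ℤ}

/-- The sum of the values of the lifting polynomial `liftPoly k l ω q` at the coordinates of `w`. -/
def liftSum (k l : ℕ) (ω q : ℤ) (w : ι → ℤ) : ℤ :=
  ∑ i, (liftPoly k l ω q).eval (w i)

lemma dvd_mul_liftSum_sub (hl : 1 ≤ l) (hlk : l ≤ k) {m : ℤ}
    (h : ∀ j ∈ Icc l k, m ∣ ∑ i, (ω + q * w i) ^ j - ∑ i, (ω + q * w' i) ^ j) :
    m ∣ q ^ (k - l + 1) * (liftSum k l ω q w - liftSum k l ω q w') := by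
  obtain ⟨d, c, hdc⟩ := exists_mul_eval_liftPoly_eq_sum hl hlk ω q
  have hsum (u : ι → ℤ) : q ^ (k - l + 1) * liftSum k l ω q u
      = ∑ _i : ι, d + ∑ j ∈ Icc l k, c j * ∑ i, (ω + q * u i) ^ j := by
    simp only [liftSum, mul_sum, hdc, sum_add_distrib]
    rw [sum_comm]
  rw [mul_sub, hsum, hsum, add_sub_add_left_eq_sub, ← sum_sub_distrib]
  refine dvd_sum fun j hj => ?_
  rw [← mul_sub]
  exact (h j hj).mul_left _

lemma dvd_liftSum_sub (hl : 1 ≤ l) (hlk : l ≤ k) {m : ℤ} (hmq : m ∣ q) (w : ι → ℤ) :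
    m ∣ liftSum k l ω q w
      - ((k.factorial / (k - l + 1) : ℕ) : ℤ) * ω ^ (l - 1) * ∑ i, w i ^ (k - l + 1) := by
  rw [liftSum, mul_sum, ← sum_sub_distrib]
  exact dvd_sum fun i _ => dvd_eval_liftPoly_sub hl hlk hmq (w i)

lemma dvd_sum_pow_sub_of_dvd_liftSum_sub {p : ℕ} (hp : p.Prime) (hkp : k < p) (hω : ¬(p : ℤ) ∣ ω)
    (hq : (p : ℤ) ∣ q) {j : ℕ} (hj : 1 ≤ j) (hjk : j ≤ k)
    (h : (p : ℤ) ∣ liftSum k (k - j + 1) ω q w - liftSum k (k - j + 1) ω q w') :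
    (p : ℤ) ∣ ∑ i, w i ^ j - ∑ i, w' i ^ j := by
  have hpz := Nat.prime_iff_prime_int.1 hp
  have hkj : k - (k - j + 1) + 1 = j := by omega
  set c : ℤ := ((k.factorial / j : ℕ) : ℤ) * ω ^ (k - j + 1 - 1)
  have hc : ¬(p : ℤ) ∣ c := by
    refine hpz.not_dvd_mul (fun hdvd => ?_) fun hdvd => hω (hpz.dvd_of_dvd_pow hdvd)
    exact hkp.not_ge (hp.dvd_factorial.1 ((Int.natCast_dvd_natCast.1 hdvd).trans
      (Nat.div_dvd_of_dvd (Nat.dvd_factorial hj hjk))))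
  have hmod (u : ι → ℤ) : (p : ℤ) ∣ liftSum k (k - j + 1) ω q u - c * ∑ i, u i ^ j := by
    have := dvd_liftSum_sub (l := k - j + 1) (by omega) (by omega) hq u (ω := ω) (k := k)
    rwa [hkj] at this
  refine (hpz.dvd_or_dvd ?_).resolve_left hc
  convert dvd_add (dvd_sub (hmod w') (hmod w)) h using 1
  ring

end LiftSum

section HenselLifting

open Polynomial

lemma dvd_sum_derivative_mul_of_pow_succ_dvd {ι R : Type*} [Fintype ι] [CommRing R] [IsDomain R]
    {f : R[X]} {π : R} (hπ : π ≠ 0) {m : ℕ} (hm : 1 ≤ m) {w d : ι → R}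
    (h : π ^ (m + 1) ∣ ∑ i, f.eval (w i + π ^ m * d i) - ∑ i, f.eval (w i)) :
    π ∣ ∑ i, (derivative f).eval (w i) * d i := by
  have htaylor (i : ι) : ∃ c, f.eval (w i + π ^ m * d i) - f.eval (w i)
      = π ^ m * ((derivative f).eval (w i) * d i + π * c) := by
    obtain ⟨c, hc⟩ := binomExpansion f (w i) (π ^ m * d i)
    obtain ⟨n, rfl⟩ := Nat.exists_eq_add_of_le' hm
    refine ⟨c * π ^ n * d i ^ 2, ?_⟩
    rw [hc, pow_succ]
    ring
  choose c hc using htaylor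
  rw [← sum_sub_distrib, sum_congr rfl fun i _ => hc i, ← mul_sum, pow_succ,
    mul_dvd_mul_iff_left (pow_ne_zero m hπ), sum_add_distrib, ← mul_sum] at h
  exact (dvd_add_left (Dvd.intro _ rfl)).1 h

lemma eq_zero_of_sum_pow_mul_pow_mul_eq_zero {K : Type*} [Field K] {r : ℕ} (n : ℕ)
    {y w d : Fin r → K} (hy : ∀ i, y i ≠ 0) (hyw : ∀ i j, i ≠ j → y j * w i - y i * w j ≠ 0)
    (h : ∀ m : Fin r, ∑ i, y i ^ (n + m) * w i ^ (r - 1 - m) * d i = 0) : d = 0 := by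
  have hdet : (Matrix.projVandermonde y w).det ≠ 0 := by
    rw [Matrix.det_projVandermonde]
    exact prod_ne_zero_iff.2 fun i _ => prod_ne_zero_iff.2 fun j hj =>
      hyw i j (mem_Ioi.1 hj).ne
  have hzero : (fun i => y i ^ n * d i) = 0 := by
    refine Matrix.eq_zero_of_vecMul_eq_zero hdet (funext fun m => ?_)
    rw [Pi.zero_apply, ← h m]
    simp only [Matrix.vecMul, dotProduct, Matrix.projVandermonde, Matrix.rectVandermonde,
      Matrix.of_apply, Fin.rev]
    refine sum_congr rfl fun i _ => ?_
    rw [show r - (↑m + 1) = r - 1 - (m : ℕ) by omega]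
    ring
  exact funext fun i => (mul_eq_zero.1 (congrFun hzero i)).resolve_left (pow_ne_zero _ (hy i))

variable {p k r : ℕ} {ω q : ℤ} {w w' : Fin r → ℤ}

lemma dvd_of_dvd_sum_derivative_liftPoly (hp : p.Prime) (hrk : r ≤ k) (hkp : k < p)
    (hω : ¬(p : ℤ) ∣ ω) (hy : ∀ i, ¬(p : ℤ) ∣ ω + q * w i)
    (hw : ∀ i j, i ≠ j → ¬(p : ℤ) ∣ w i - w j) {d : Fin r → ℤ}
    (h : ∀ l ∈ Icc (k - r + 1) k,
      (p : ℤ) ∣ ∑ i, (derivative (liftPoly k l ω q)).eval (w i) * d i) (i : Fin r) :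
    (p : ℤ) ∣ d i := by
  have : Fact p.Prime := ⟨hp⟩
  have hpz := Nat.prime_iff_prime_int.1 hp
  have hfac : ¬(p : ℤ) ∣ k.factorial := fun hdvd =>
    hkp.not_ge (hp.dvd_factorial.1 (Int.natCast_dvd_natCast.1 hdvd))
  have hlin (m : Fin r) :
      (p : ℤ) ∣ ∑ i, (ω + q * w i) ^ (k - r + m) * w i ^ (r - 1 - m) * d i := by
    have hm := h (k - r + 1 + m) (mem_Icc.2 ⟨by omega, by omega⟩)
    rw [derivative_liftPoly (by omega) (by omega)] at hm
    simp only [eval_mul, eval_C, eval_pow, eval_add, eval_X, mul_assoc, ← mul_sum] at hm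
    simp only [mul_assoc]
    rw [show k - r + 1 + (m : ℕ) - 1 = k - r + m by omega,
      show k - (k - r + 1 + (m : ℕ)) = r - 1 - m by omega] at hm
    exact (hpz.dvd_or_dvd hm).resolve_left hfac
  have hzero : (fun i => (d i : ZMod p)) = 0 := by
    refine eq_zero_of_sum_pow_mul_pow_mul_eq_zero (k - r)
      (y := fun i => ((ω + q * w i : ℤ) : ZMod p)) (w := fun i => (w i : ZMod p))
      (fun i h0 => ?_) (fun i j hij h0 => ?_) fun m => ?_
    · exact hy i ((ZMod.intCast_zmod_eq_zero_iff_dvd _ _).1 h0)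
    · refine hpz.not_dvd_mul hω (hw i j hij) ((ZMod.intCast_zmod_eq_zero_iff_dvd _ _).1 ?_)
      rw [← h0]
      push_cast
      ring
    · exact_mod_cast (ZMod.intCast_zmod_eq_zero_iff_dvd _ _).2 (hlin m)
  exact (ZMod.intCast_zmod_eq_zero_iff_dvd _ _).1 (congrFun hzero i)

lemma pow_dvd_sub_of_pow_dvd_liftSum_sub (hp : p.Prime) (hrk : r ≤ k) (hkp : k < p)
    (hω : ¬(p : ℤ) ∣ ω) (hy : ∀ i, ¬(p : ℤ) ∣ ω + q * w i)
    (hw : ∀ i j, i ≠ j → ¬(p : ℤ) ∣ w i - w j) (hww : ∀ i, (p : ℤ) ∣ w' i - w i) {T : ℕ}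
    (hT : ∀ l ∈ Icc (k - r + 1) k,
      (p : ℤ) ^ T ∣ liftSum k l ω q w' - liftSum k l ω q w) (i : Fin r) :
    (p : ℤ) ^ T ∣ w' i - w i := by
  induction T generalizing i with
  | zero => simp only [pow_zero, one_dvd]
  | succ m ih =>
    rcases Nat.eq_zero_or_pos m with rfl | hm
    · simpa only [zero_add, pow_one] using hww i
    have hdvd := ih fun l hl => (pow_dvd_pow _ m.le_succ).trans (hT l hl)
    choose d hd using hdvd
    obtain rfl : w' = fun i => w i + (p : ℤ) ^ m * d i := funext fun i => by
      rw [← hd, add_sub_cancel]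
    have hp0 : (p : ℤ) ≠ 0 := mod_cast hp.ne_zero
    rw [hd i, pow_succ]
    exact mul_dvd_mul_left _ <| dvd_of_dvd_sum_derivative_liftPoly hp hrk hkp hω hy hw
      (fun l hl => dvd_sum_derivative_mul_of_pow_succ_dvd hp0 hm (hT l hl)) i

end HenselLifting

section CountingClasses

lemma card_le_mul_of_dvd_sub {α : Type*} {S : Finset α} {g : α → ℤ} {m : ℤ} {d C : ℕ}
    (hd : d ≠ 0) (hg : ∀ z ∈ S, ∀ z' ∈ S, m ∣ g z - g z')
    (hC : ∀ T ⊆ S, (∀ z ∈ T, ∀ z' ∈ T, m * d ∣ g z - g z') → #T ≤ C) : #S ≤ C * d := by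
  have : NeZero d := ⟨hd⟩
  rcases S.eq_empty_or_nonempty with rfl | ⟨z₀, hz₀⟩
  · exact Nat.zero_le _
  have hquot (z : α) : ∃ u, z ∈ S → g z - g z₀ = m * u := by
    by_cases hz : z ∈ S
    · exact (hg z hz z₀ hz₀).imp fun _ hu _ => hu
    · exact ⟨0, fun h => absurd h hz⟩
  choose u hu using hquot
  have hfibre : ∀ c ∈ S.image fun z => (u z : ZMod d),
      #(S.filter fun z => (u z : ZMod d) = c) ≤ C := fun c _ => by
    refine hC _ (filter_subset _ _) fun z hz z' hz' => ?_
    rw [mem_filter] at hz hz'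
    have hdvd : (d : ℤ) ∣ u z - u z' := by
      rw [← ZMod.intCast_zmod_eq_zero_iff_dvd, Int.cast_sub, hz.2, hz'.2, sub_self]
    rw [← sub_sub_sub_cancel_right _ _ (g z₀), hu z hz.1, hu z' hz'.1, ← mul_sub]
    exact mul_dvd_mul_left m hdvd
  calc #S ≤ C * #(S.image fun z => (u z : ZMod d)) := card_le_mul_card_image S C hfibre
    _ ≤ C * d := Nat.mul_le_mul_left C ((card_le_univ _).trans_eq (ZMod.card d))

lemma card_le_mul_prod_of_dvd_sub {α κ : Type*} {L : Finset κ} {Z : Finset α} {g : κ → α → ℤ}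
    {m : κ → ℤ} {d : κ → ℕ} {C : ℕ} (hd : ∀ l ∈ L, d l ≠ 0)
    (hg : ∀ l ∈ L, ∀ z ∈ Z, ∀ z' ∈ Z, m l ∣ g l z - g l z')
    (hC : ∀ S ⊆ Z, (∀ l ∈ L, ∀ z ∈ S, ∀ z' ∈ S, m l * d l ∣ g l z - g l z') → #S ≤ C) :
    #Z ≤ C * ∏ l ∈ L, d l := by
  induction L using Finset.induction_on generalizing C with
  | empty => simpa only [prod_empty, mul_one] using hC Z subset_rfl (by simp)
  | insert l L hl ih =>
    rw [prod_insert hl, ← mul_assoc]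
    rw [forall_mem_insert] at hd hg
    refine ih hd.2 hg.2 fun S hS hSL => ?_
    refine card_le_mul_of_dvd_sub hd.1 (fun z hz z' hz' => hg.1 z (hS hz) z' (hS hz'))
      fun T hT hTl => hC T (hT.trans hS) ?_
    exact (forall_mem_insert _ _ _).2
      ⟨hTl, fun l' hl' z hz z' hz' => hSL l' hl' z (hT hz) z' (hT hz')⟩

/-- The power sums of degree `j ∈ [1, k]` of `y` and `y'` agree modulo `m ^ j`. -/
def PowerSumsAgree {ι : Type*} [Fintype ι] (k m : ℕ) (y y' : ι → ℤ) : Prop :=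
  ∀ j ∈ Icc 1 k, (m : ℤ) ^ j ∣ ∑ i, y i ^ j - ∑ i, y' i ^ j

variable {p k r t a b : ℕ} {ω : ℤ}

lemma PowerSumsAgree.pow_dvd_liftSum_sub {ι : Type*} [Fintype ι] {w w' : ι → ℤ} (hp : p ≠ 0)
    {l : ℕ} (hl : 1 ≤ l) (hlk : l ≤ k)
    (h : PowerSumsAgree k (p ^ b) (fun i => ω + (p : ℤ) ^ a * w i)
      fun i => ω + (p : ℤ) ^ a * w' i) :
    (p : ℤ) ^ (l * b - (k - l + 1) * a) ∣
      liftSum k l ω ((p : ℤ) ^ a) w - liftSum k l ω ((p : ℤ) ^ a) w' := by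
  rcases le_total (l * b) ((k - l + 1) * a) with hle | hle
  · rw [Nat.sub_eq_zero_of_le hle, pow_zero]
    exact one_dvd _
  have hp0 : (p : ℤ) ^ ((k - l + 1) * a) ≠ 0 := pow_ne_zero _ (mod_cast hp)
  rw [← mul_dvd_mul_iff_left hp0, ← pow_add, Nat.add_sub_cancel' hle, mul_comm _ a, pow_mul _ a]
  refine dvd_mul_liftSum_sub (w := w) (w' := w') hl hlk fun j hj => ?_
  obtain ⟨hlj, hjk⟩ := mem_Icc.1 hj
  refine dvd_trans ?_ (h j (mem_Icc.2 ⟨hl.trans hlj, hjk⟩))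
  rw [mul_comm l, pow_mul, Nat.cast_pow]
  exact pow_dvd_pow _ hlj

lemma PowerSumsAgree.exists_dvd_sub {w w' : Fin r → ℤ} (hp : p.Prime) (hrk : r ≤ k) (hkp : k < p)
    (hb : b ≠ 0) (hω : ¬(p : ℤ) ∣ ω)
    (h : PowerSumsAgree k (p ^ b) (fun i => ω + (p : ℤ) ^ a * w i)
      fun i => ω + (p : ℤ) ^ a * w' i)
    (hlift : ∀ l ∈ Icc (k - r + 1) k,
      (p : ℤ) ∣ liftSum k l ω ((p : ℤ) ^ a) w - liftSum k l ω ((p : ℤ) ^ a) w') (i : Fin r) :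
    ∃ j, (p : ℤ) ∣ w' i - w j := by
  have hrp : Fintype.card (Fin r) < p := by
    rw [Fintype.card_fin]
    omega
  rcases eq_or_ne a 0 with rfl | ha
  · obtain ⟨j, hj⟩ := exists_dvd_sub_of_dvd_sum_pow_sub hp hrp (fun j hj hjr => dvd_trans
      (dvd_pow (mod_cast dvd_pow_self p hb) (by omega))
      (h j (mem_Icc.2 ⟨hj, hjr.trans (by rwa [Fintype.card_fin])⟩))) i
    refine ⟨j, ?_⟩
    simpa only [pow_zero, one_mul, add_sub_add_left_eq_sub] using hj
  · refine exists_dvd_sub_of_dvd_sum_pow_sub hp hrp (fun j hj hjr => ?_) i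
    rw [Fintype.card_fin] at hjr
    exact dvd_sum_pow_sub_of_dvd_liftSum_sub hp hkp hω (dvd_pow_self _ ha) hj (hjr.trans hrk)
      (hlift _ (mem_Icc.2 ⟨by omega, by omega⟩))

/-- A tuple `w` is *admissible* for the base point `ω`, the modulus `q` and the prime `p` if the
integers `ω + q * w i` are prime to `p` and the `w i` are pairwise incongruent modulo `p`. -/
def Admissible (p : ℕ) (ω q : ℤ) (w : Fin r → ℤ) : Prop :=
  (∀ i, ¬(p : ℤ) ∣ ω + q * w i) ∧ ∀ i j, i ≠ j → ¬(p : ℤ) ∣ w i - w j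

variable {W : Finset (Fin r → ℤ)}

lemma card_le_of_pow_dvd_liftSum_sub (hp : p.Prime) (hrk : r ≤ k) (hkp : k < p) (hb : b ≠ 0)
    {T : ℕ} (hT : T ≠ 0) (hω : ¬(p : ℤ) ∣ ω) (hadm : ∀ w ∈ W, Admissible p ω ((p : ℤ) ^ a) w)
    (hagree : ∀ w ∈ W, ∀ w' ∈ W, PowerSumsAgree k (p ^ b) (fun i => ω + (p : ℤ) ^ a * w i)
      fun i => ω + (p : ℤ) ^ a * w' i)
    (hsep : ∀ w ∈ W, ∀ w' ∈ W, (∀ i, (p : ℤ) ^ T ∣ w i - w' i) → w = w')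
    (hlift : ∀ l ∈ Icc (k - r + 1) k, ∀ w ∈ W, ∀ w' ∈ W,
      (p : ℤ) ^ T ∣ liftSum k l ω ((p : ℤ) ^ a) w - liftSum k l ω ((p : ℤ) ^ a) w') :
    #W ≤ r ^ r := by
  rcases W.eq_empty_or_nonempty with rfl | ⟨w₀, hw₀⟩
  · exact Nat.zero_le _
  have hmatch (w : Fin r → ℤ) : ∃ σ : Fin r → Fin r, w ∈ W → ∀ i, (p : ℤ) ∣ w i - w₀ (σ i) := by
    by_cases hw : w ∈ W
    · choose σ hσ using (hagree w₀ hw₀ w hw).exists_dvd_sub hp hrk hkp hb hω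
        fun l hl => (dvd_pow_self _ hT).trans (hlift l hl w₀ hw₀ w hw)
      exact ⟨σ, fun _ => hσ⟩
    · exact ⟨id, fun h => absurd h hw⟩
  choose σ hσ using hmatch
  have hcard : #(univ : Finset (Fin r → Fin r)) = r ^ r := by simp
  rw [← hcard]
  refine card_le_card_of_injOn σ (fun _ _ => mem_univ _) fun w hw w' hw' hσσ => ?_
  have hmod (i : Fin r) : (p : ℤ) ∣ w i - w' i := by
    have := dvd_sub (hσ w hw i) (hσ w' hw' i)
    rwa [← hσσ, sub_sub_sub_cancel_right] at this
  exact hsep w hw w' hw' <| pow_dvd_sub_of_pow_dvd_liftSum_sub hp hrk hkp hω (hadm w' hw').1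
    (hadm w' hw').2 hmod fun l hl => hlift l hl w hw w' hw'

theorem card_le_of_powerSumsAgree (hp : p.Prime) (hrk : r ≤ k) (hkp : k < p) (ht : 1 ≤ t)
    (htk : t ≤ k) (hkt : k ≤ 2 * t + 1) (hab : a < b) (htab : t * a ≤ b) (hω : ¬(p : ℤ) ∣ ω)
    (hadm : ∀ w ∈ W, Admissible p ω ((p : ℤ) ^ a) w)
    (hagree : ∀ w ∈ W, ∀ w' ∈ W, PowerSumsAgree k (p ^ b) (fun i => ω + (p : ℤ) ^ a * w i)
      fun i => ω + (p : ℤ) ^ a * w' i)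
    (hsep : ∀ w ∈ W, ∀ w' ∈ W, (∀ i, (p : ℤ) ^ (t * b - a) ∣ w i - w' i) → w = w') :
    #W ≤ r ^ r * p ^ ∑ l ∈ Icc (k - r + 1) t, ((t - l) * b + (k - l) * a) := by
  have hbtb : 1 * b ≤ t * b := Nat.mul_le_mul_right b ht
  have hsplit (l : ℕ) : (k - l + 1) * a = (k - l) * a + a := by ring
  rw [← prod_pow_eq_pow_sum]
  refine card_le_mul_prod_of_dvd_sub (g := fun l => liftSum k l ω ((p : ℤ) ^ a))
    (m := fun l => (p : ℤ) ^ (l * b - (k - l + 1) * a)) (fun _ _ => pow_ne_zero _ hp.ne_zero)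
    (fun l hl w hw w' hw' =>
      (hagree w hw w' hw').pow_dvd_liftSum_sub hp.ne_zero (by grind) (by grind))
    fun S hS hlift => ?_
  refine card_le_of_pow_dvd_liftSum_sub hp hrk hkp (by omega) (T := t * b - a) (by omega) hω
    (fun w hw => hadm w (hS hw)) (fun w hw w' hw' => hagree w (hS hw) w' (hS hw'))
    (fun w hw w' hw' => hsep w (hS hw) w' (hS hw')) fun l hl w hw w' hw' => ?_
  obtain ⟨hl1, hlk⟩ := mem_Icc.1 hl
  -- Refining the value for `l ≤ t` costs the factor `p ^ ((t - l) * b + (k - l) * a)`; for `l > t`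
  -- it is already determined modulo `p ^ (t * b - a)`.
  rcases le_or_gt l t with hlt | htl
  · refine dvd_trans ?_ (hlift l (mem_Icc.2 ⟨hl1, hlt⟩) w hw w' hw')
    rw [Nat.cast_pow, ← pow_add]
    refine pow_dvd_pow _ ?_
    have h1 : (t - l) * b + l * b = t * b := by rw [← add_mul, Nat.sub_add_cancel hlt]
    have h2 := hsplit l
    omega
  · refine dvd_trans (pow_dvd_pow _ ?_) ((hagree w (hS hw) w' (hS hw')).pow_dvd_liftSum_sub
      hp.ne_zero (by omega) hlk)
    have h1 : (k - l) * a ≤ t * a := Nat.mul_le_mul_right a (by omega)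
    have h2 : (t + 1) * b ≤ l * b := Nat.mul_le_mul_right b htl
    have h3 := hsplit l
    have h4 : (t + 1) * b = t * b + b := by ring
    omega

end CountingClasses

section Characters

variable {k : ℕ} {ι : Type*}

lemma ec_eq_fourierChar (x : ℝ) : ec x = Real.fourierChar x := by
  rw [ec, Real.fourierChar_apply]
  push_cast
  ring_nf

lemma ec_zero : ec 0 = 1 := by
  simp [ec]

lemma ec_add (x y : ℝ) : ec (x + y) = ec x * ec y := by
  simp only [ec_eq_fourierChar, AddChar.map_add_eq_mul, Circle.coe_mul]

lemma ec_sum (s : Finset ι) (x : ι → ℝ) : ec (∑ i ∈ s, x i) = ∏ i ∈ s, ec (x i) := by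
  induction s using Finset.cons_induction with
  | empty => simp [ec_zero]
  | cons a s ha ih => rw [sum_cons, prod_cons, ec_add, ih]

lemma star_ec (x : ℝ) : star (ec x) = ec (-x) := by
  simp only [ec_eq_fourierChar, AddChar.map_neg_eq_inv, Circle.coe_inv_eq_conj, Complex.star_def]

lemma continuous_ec : Continuous ec := by
  unfold ec
  fun_prop

/-- The additive character `α ↦ e(α ⬝ n)` of `ℝ^k` with integral frequency vector `n`. The
exponential sums of the method are finite sums of such characters. -/
def chr (n : Fin k → ℤ) (α : Fin k → ℝ) : ℂ := ec (∑ j, α j * (n j : ℝ))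

lemma chr_zero : chr (0 : Fin k → ℤ) = 1 := by
  ext α
  simp [chr, ec_zero]

lemma chr_add (m n : Fin k → ℤ) : chr (m + n) = chr m * chr n := by
  ext α
  simp only [chr, Pi.add_apply, Int.cast_add, mul_add, sum_add_distrib, ec_add, Pi.mul_apply]

lemma chr_sum (s : Finset ι) (n : ι → Fin k → ℤ) :
    chr (∑ i ∈ s, n i) = ∏ i ∈ s, chr (n i) := by
  induction s using Finset.cons_induction with
  | empty => simp [chr_zero]
  | cons a s ha ih => rw [sum_cons, prod_cons, chr_add, ih]

lemma star_chr (n : Fin k → ℤ) : star (chr n) = chr (-n) := by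
  ext α
  simp only [Pi.star_apply, chr, star_ec, Pi.neg_apply, Int.cast_neg, mul_neg, sum_neg_distrib]

lemma continuous_chr (n : Fin k → ℤ) : Continuous (chr n) := by
  unfold chr
  exact continuous_ec.comp (by fun_prop)

lemma continuous_sum_chr (S : Finset ι) (φ : ι → Fin k → ℤ) :
    Continuous fun α => ∑ u ∈ S, chr (φ u) α :=
  continuous_finsetSum _ fun u _ => continuous_chr (φ u)

lemma integrableOn_box {E : Type*} [NormedAddCommGroup E] {f : (Fin k → ℝ) → E}
    (hf : Continuous f) : IntegrableOn f (box k) :=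
  (hf.continuousOn.integrableOn_compact isCompact_Icc).mono_set fun α hα =>
    (⟨fun i => (hα i trivial).1, fun i => (hα i trivial).2.le⟩ : α ∈ Set.Icc 0 1)

lemma setIntegral_ec (n : ℤ) :
    ∫ x in Set.Ico (0 : ℝ) 1, ec (x * (n : ℝ)) = if n = 0 then 1 else 0 := by
  split_ifs with h
  · simp [h, ec_zero]
  have hc : (2 * Real.pi * Complex.I * n : ℂ) ≠ 0 :=
    mul_ne_zero Complex.two_pi_I_ne_zero (by exact_mod_cast h)
  have hec (x : ℝ) : ec (x * (n : ℝ)) = Complex.exp (2 * Real.pi * Complex.I * n * x) := by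
    unfold ec
    push_cast
    ring_nf
  have hone : Complex.exp (2 * Real.pi * Complex.I * n * ((1 : ℝ) : ℂ)) = 1 :=
    Complex.exp_eq_one_iff.2 ⟨n, by push_cast; ring⟩
  rw [integral_Ico_eq_integral_Ioc, ← intervalIntegral.integral_of_le zero_le_one]
  simp only [hec]
  rw [integral_exp_mul_complex hc, hone]
  simp

lemma integral_chr (n : Fin k → ℤ) : ∫ α in box k, chr n α = if n = 0 then 1 else 0 := by
  unfold chr _root_.box
  simp only [ec_sum]
  rw [volume_pi, Measure.restrict_pi_pi,
    integral_fintype_prod_eq_prod (f := fun (j : Fin k) (x : ℝ) => ec (x * (n j : ℝ)))]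
  simp only [setIntegral_ec]
  split_ifs with h
  · simp [h]
  · obtain ⟨j, hj⟩ := Function.ne_iff.1 h
    exact prod_eq_zero (mem_univ j) (if_neg hj)

end Characters

section TrigonometricSums

variable {k : ℕ} {Q : AddSubgroup (Fin k → ℤ)} {F G : (Fin k → ℝ) → ℂ}

/-- The multiplicative monoid of characters whose frequencies lie in `Q`. -/
def chrSubmonoid (Q : AddSubgroup (Fin k → ℤ)) : Submonoid ((Fin k → ℝ) → ℂ) where
  carrier := chr '' Q
  one_mem' := ⟨0, Q.zero_mem, chr_zero⟩
  mul_mem' := by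
    rintro _ _ ⟨m, hm, rfl⟩ ⟨n, hn, rfl⟩
    exact ⟨m + n, Q.add_mem hm hn, chr_add m n⟩

/-- The trigonometric sums with frequencies in `Q`: finite sums of characters, repetitions
allowed. Since coefficients are natural numbers, integrals of trigonometric sums over the unit box
are non-negative. -/
def trigSum (Q : AddSubgroup (Fin k → ℤ)) : Subsemiring ((Fin k → ℝ) → ℂ) :=
  (chrSubmonoid Q).subsemiringClosure

lemma chr_mem_trigSum {n : Fin k → ℤ} (hn : n ∈ Q) : chr n ∈ trigSum Q :=
  (Submonoid.subsemiringClosure_mem _).2 (AddSubmonoid.subset_closure ⟨n, hn, rfl⟩)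

theorem trigSum_induction {motive : ∀ F, F ∈ trigSum Q → Prop}
    (zero : motive 0 (zero_mem _))
    (chr_add : ∀ n (hn : n ∈ Q) G (hG : G ∈ trigSum Q), motive G hG →
      motive (chr n + G) (add_mem (chr_mem_trigSum hn) hG)) (hF : F ∈ trigSum Q) :
    motive F hF := by
  induction (Submonoid.subsemiringClosure_mem _).1 hF using
    AddSubmonoid.closure_induction_left with
  | zero => exact zero
  | add_left x hx G hG ih =>
    obtain ⟨n, hn, rfl⟩ := hx
    have hG' := (Submonoid.subsemiringClosure_mem _).2 hG
    exact chr_add n hn G hG' (ih hG')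

lemma star_mem_trigSum (hF : F ∈ trigSum Q) : star F ∈ trigSum Q := by
  induction hF using trigSum_induction with
  | zero => simp
  | chr_add n hn G _ ih =>
    rw [star_add, star_chr]
    exact add_mem (chr_mem_trigSum (Q.neg_mem hn)) ih

lemma continuous_of_mem_trigSum (hF : F ∈ trigSum Q) : Continuous F := by
  induction hF using trigSum_induction with
  | zero => exact continuous_zero
  | chr_add n _ G _ ih => exact (continuous_chr n).add ih

lemma exists_integral_eq_of_mem_trigSum (hF : F ∈ trigSum Q) :
    ∃ c : ℝ, 0 ≤ c ∧ ∫ α in box k, F α = c := by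
  induction hF using trigSum_induction with
  | zero => exact ⟨0, le_rfl, by simp⟩
  | chr_add n _ G hG ih =>
    obtain ⟨c, hc, hGc⟩ := ih
    refine ⟨(if n = 0 then 1 else 0) + c, add_nonneg (by split_ifs <;> norm_num) hc, ?_⟩
    simp only [Pi.add_apply]
    rw [integral_add (integrableOn_box (continuous_chr n))
      (integrableOn_box (continuous_of_mem_trigSum hG)), hGc, integral_chr]
    split_ifs <;> simp

lemma integral_mul_chr_eq_zero (hF : F ∈ trigSum Q) {m : Fin k → ℤ} (hm : m ∉ Q) :
    ∫ α in box k, F α * chr m α = 0 := by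
  induction hF using trigSum_induction with
  | zero => simp
  | chr_add n hn G hG ih =>
    have hnm : n + m ≠ 0 := fun h =>
      hm (neg_eq_of_add_eq_zero_right h ▸ Q.neg_mem hn)
    have hmul (α : Fin k → ℝ) : (chr n + G) α * chr m α = chr (n + m) α + G α * chr m α := by
      rw [chr_add, Pi.add_apply, Pi.mul_apply, add_mul]
    simp only [hmul]
    have hint : IntegrableOn (fun α => G α * chr m α) (box k) :=
      integrableOn_box ((continuous_of_mem_trigSum hG).mul (continuous_chr m))
    rw [integral_add (integrableOn_box (continuous_chr _)) hint, integral_chr, if_neg hnm, ih,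
      add_zero]

lemma exists_add_pow_eq {R : Type*} [CommSemiring R] (T : Subsemiring R) {x y : R} (hx : x ∈ T)
    (hy : y ∈ T) (n : ℕ) : ∃ z ∈ T, (x + y) ^ n = x ^ n + z := by
  induction n with
  | zero => exact ⟨0, T.zero_mem, by simp⟩
  | succ n ih =>
    obtain ⟨z, hz, hxy⟩ := ih
    refine ⟨x ^ n * y + z * (x + y), add_mem (mul_mem (pow_mem hx n) hy)
      (mul_mem hz (add_mem hx hy)), ?_⟩
    rw [pow_succ, hxy]
    ring

theorem integral_norm_pow_le_integral_norm_add_pow (hF : F ∈ trigSum Q) (hG : G ∈ trigSum Q)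
    (n : ℕ) : ∫ α in box k, ‖F α‖ ^ (2 * n) ≤ ∫ α in box k, ‖(F + G) α‖ ^ (2 * n) := by
  have hpow {A : (Fin k → ℝ) → ℂ} (α : Fin k → ℝ) :
      ((‖A α‖ ^ (2 * n) : ℝ) : ℂ) = ((A * star A) ^ n) α := by
    rw [Pi.pow_apply, Pi.mul_apply, Pi.star_apply, Complex.star_def, Complex.mul_conj', ← pow_mul,
      Complex.ofReal_pow]
  have hF' := mul_mem hF (star_mem_trigSum hF)
  have hadd : (F + G) * star (F + G) = F * star F + (G * star F + (F + G) * star G) := by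
    rw [star_add]
    ring
  obtain ⟨E, hE, hFE⟩ := exists_add_pow_eq (trigSum Q) hF' (add_mem
    (mul_mem hG (star_mem_trigSum hF)) (mul_mem (add_mem hF hG) (star_mem_trigSum hG))) n
  obtain ⟨c, hc, hEc⟩ := exists_integral_eq_of_mem_trigSum hE
  have hsum : ((∫ α in box k, ‖(F + G) α‖ ^ (2 * n) : ℝ) : ℂ) =
      ((∫ α in box k, ‖F α‖ ^ (2 * n)) + c : ℝ) := by
    rw [Complex.ofReal_add, ← integral_complex_ofReal, ← integral_complex_ofReal, ← hEc,
      ← integral_add (integrableOn_box (by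
        simpa only [hpow] using continuous_of_mem_trigSum (pow_mem hF' n)))
        (integrableOn_box (continuous_of_mem_trigSum hE))]
    simp only [hpow, hadd, hFE]
    rfl
  have := Complex.ofReal_injective hsum
  exact this ▸ le_add_of_nonneg_right hc

end TrigonometricSums

section MeanValueInequalities

variable {k : ℕ} {ι κ : Type*} {Q : AddSubgroup (Fin k → ℤ)}

theorem integral_rpow_mul_rpow_le {X : Type*} [MeasurableSpace X] {μ : Measure X} {f g : X → ℝ}
    (hf : Integrable f μ) (hg : Integrable g μ) (hf0 : 0 ≤ f) (hg0 : 0 ≤ g) {p q : ℝ}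
    (hp : 0 ≤ p) (hq : 0 ≤ q) (hpq : p + q = 1) :
    ∫ x, f x ^ p * g x ^ q ∂μ ≤ (∫ x, f x ∂μ) ^ p * (∫ x, g x ∂μ) ^ q := by
  have hfm := hf.aestronglyMeasurable.aemeasurable
  have hgm := hg.aestronglyMeasurable.aemeasurable
  have hfi : 0 ≤ ∫ x, f x ∂μ := integral_nonneg hf0
  have hgi : 0 ≤ ∫ x, g x ∂μ := integral_nonneg hg0
  rw [integral_eq_lintegral_of_nonneg_ae
    (ae_of_all _ fun x => mul_nonneg (Real.rpow_nonneg (hf0 x) _) (Real.rpow_nonneg (hg0 x) _))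
    ((hfm.pow_const p).mul (hgm.pow_const q)).aestronglyMeasurable]
  refine ENNReal.toReal_le_of_le_ofReal (by positivity) ?_
  simp only [ENNReal.ofReal_mul (Real.rpow_nonneg (hf0 _) p),
    ENNReal.ofReal_mul (Real.rpow_nonneg hfi p),
    ← ENNReal.ofReal_rpow_of_nonneg (hf0 _) hp, ← ENNReal.ofReal_rpow_of_nonneg (hg0 _) hq,
    ← ENNReal.ofReal_rpow_of_nonneg hfi hp, ← ENNReal.ofReal_rpow_of_nonneg hgi hq,
    ofReal_integral_eq_lintegral_ofReal hf (ae_of_all _ hf0),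
    ofReal_integral_eq_lintegral_ofReal hg (ae_of_all _ hg0)]
  exact ENNReal.lintegral_mul_norm_pow_le hfm.ennreal_ofReal hgm.ennreal_ofReal hp hq hpq

theorem integral_pow_mul_pow_mul_le {X : Type*} [MeasurableSpace X] {μ : Measure X}
    {u w h : X → ℝ} {i j : ℕ} (hu : Integrable (fun x => u x ^ (i + j) * h x) μ)
    (hw : Integrable (fun x => w x ^ (i + j) * h x) μ) (hu0 : 0 ≤ u) (hw0 : 0 ≤ w) (hh0 : 0 ≤ h)
    (hij : i + j ≠ 0) :
    (∫ x, u x ^ i * w x ^ j * h x ∂μ) ^ (i + j) ≤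
      (∫ x, u x ^ (i + j) * h x ∂μ) ^ i * (∫ x, w x ^ (i + j) * h x ∂μ) ^ j := by
  have hn : ((i + j : ℕ) : ℝ) ≠ 0 := by exact_mod_cast hij
  have hone : (i / (i + j : ℕ) : ℝ) + j / (i + j : ℕ) = 1 := by
    rw [← add_div, ← Nat.cast_add, div_self hn]
  have hpow {y : ℝ} (hy : 0 ≤ y) (l : ℕ) : (y ^ (l / (i + j : ℕ) : ℝ)) ^ (i + j) = y ^ l := by
    rw [← Real.rpow_mul_natCast hy, div_mul_cancel₀ _ hn, Real.rpow_natCast]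
  have hroot {y : ℝ} (hy : 0 ≤ y) (l : ℕ) : (y ^ (i + j)) ^ (l / (i + j : ℕ) : ℝ) = y ^ l := by
    rw [← Real.rpow_natCast_mul hy, mul_div_cancel₀ _ hn, Real.rpow_natCast]
  have hfu : 0 ≤ fun x => u x ^ (i + j) * h x := fun x => mul_nonneg (pow_nonneg (hu0 x) _) (hh0 x)
  have hfw : 0 ≤ fun x => w x ^ (i + j) * h x := fun x => mul_nonneg (pow_nonneg (hw0 x) _) (hh0 x)
  have hint (x : X) : u x ^ i * w x ^ j * h x =
      (u x ^ (i + j) * h x) ^ (i / (i + j : ℕ) : ℝ) *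
        (w x ^ (i + j) * h x) ^ (j / (i + j : ℕ) : ℝ) := by
    rw [Real.mul_rpow (pow_nonneg (hu0 x) _) (hh0 x), Real.mul_rpow (pow_nonneg (hw0 x) _) (hh0 x),
      hroot (hu0 x), hroot (hw0 x), mul_mul_mul_comm,
      ← Real.rpow_add_of_nonneg (hh0 x) (by positivity) (by positivity), hone, Real.rpow_one]
  simp only [hint]
  rw [← hpow (integral_nonneg hfu) i, ← hpow (integral_nonneg hfw) j, ← mul_pow]
  refine pow_le_pow_left₀ (integral_nonneg fun x => ?_) (integral_rpow_mul_rpow_le hu hw hfu hfw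
    (by positivity) (by positivity) hone) _
  exact mul_nonneg (Real.rpow_nonneg (hfu x) _) (Real.rpow_nonneg (hfw x) _)

lemma prod_le_sum_pow_card {s : Finset ι} (hs : s.Nonempty) {g : ι → ℝ} (hg : ∀ i ∈ s, 0 ≤ g i) :
    ∏ i ∈ s, g i ≤ ∑ i ∈ s, g i ^ #s := by
  obtain ⟨j, hj, hmax⟩ := exists_max_image s g hs
  calc ∏ i ∈ s, g i ≤ ∏ _i ∈ s, g j := prod_le_prod hg hmax
    _ = g j ^ #s := prod_const _
    _ ≤ ∑ i ∈ s, g i ^ #s := single_le_sum (fun i hi => pow_nonneg (hg i hi) _) hj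

lemma ofReal_norm_sq_sum_chr (S : Finset ι) (φ : ι → Fin k → ℤ) (α : Fin k → ℝ) :
    ((‖∑ u ∈ S, chr (φ u) α‖ ^ 2 : ℝ) : ℂ) = ∑ u ∈ S, ∑ v ∈ S, chr (φ u - φ v) α := by
  rw [Complex.ofReal_pow, ← Complex.mul_conj', map_sum, sum_mul_sum]
  simp only [sub_eq_add_neg, chr_add, ← star_chr, Pi.mul_apply, Pi.star_apply, Complex.star_def]

lemma ofReal_integral_norm_sq_sum_chr_mul {H : (Fin k → ℝ) → ℝ} (hH : Continuous H)
    (S : Finset ι) (φ : ι → Fin k → ℤ) :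
    ((∫ α in box k, ‖∑ u ∈ S, chr (φ u) α‖ ^ 2 * H α : ℝ) : ℂ) =
      ∑ u ∈ S, ∑ v ∈ S, ∫ α in box k, (H α : ℂ) * chr (φ u - φ v) α := by
  have hint (u v : ι) : IntegrableOn (fun α => (H α : ℂ) * chr (φ u - φ v) α) (box k) :=
    integrableOn_box ((Complex.continuous_ofReal.comp hH).mul (continuous_chr _))
  rw [← integral_complex_ofReal]
  simp only [Complex.ofReal_mul, ofReal_norm_sq_sum_chr, mul_comm _ (H _ : ℂ), mul_sum]
  rw [integral_finsetSum _ fun u _ => integrable_finsetSum _ fun v _ => hint u v]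
  exact sum_congr rfl fun u _ => integral_finsetSum _ fun v _ => hint u v

lemma continuous_of_ofReal_mem_trigSum {H : (Fin k → ℝ) → ℝ}
    (hH : (fun α => (H α : ℂ)) ∈ trigSum Q) : Continuous H := by
  simpa only [Function.comp_def, Complex.ofReal_re] using
    Complex.continuous_re.comp (continuous_of_mem_trigSum hH)

lemma integral_norm_sq_eq_sum_fibers {H : (Fin k → ℝ) → ℝ}
    (hH : (fun α => (H α : ℂ)) ∈ trigSum Q) (S : Finset ι) (φ : ι → Fin k → ℤ)
    {T : Finset ((Fin k → ℤ) ⧸ Q)} (hT : ∀ u ∈ S, (φ u : (Fin k → ℤ) ⧸ Q) ∈ T) :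
    ∫ α in box k, ‖∑ u ∈ S, chr (φ u) α‖ ^ 2 * H α =
      ∑ l ∈ T, ∫ α in box k,
        ‖∑ u ∈ S with (φ u : (Fin k → ℤ) ⧸ Q) = l, chr (φ u) α‖ ^ 2 * H α := by
  have hHc := continuous_of_ofReal_mem_trigSum hH
  have horth (u v : ι) (huv : (φ v : (Fin k → ℤ) ⧸ Q) ≠ φ u) :
      ∫ α in box k, (H α : ℂ) * chr (φ u - φ v) α = 0 :=
    integral_mul_chr_eq_zero hH fun hmem => huv (by rwa [QuotientAddGroup.eq, neg_add_eq_sub])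
  apply Complex.ofReal_injective
  simp only [Complex.ofReal_sum, ofReal_integral_norm_sq_sum_chr_mul hHc]
  rw [← sum_fiberwise_of_maps_to hT]
  refine sum_congr rfl fun l _ => sum_congr rfl fun u hu => ?_
  rw [sum_filter]
  refine sum_congr rfl fun v _ => ?_
  split_ifs with hv
  · rfl
  · exact horth u v ((mem_filter.1 hu).2 ▸ hv)

lemma norm_sum_sq_le_card_image_mul {E : Type*} [SeminormedAddCommGroup E]
    [DecidableEq κ] (P : Finset ι) (cl : ι → κ) (f : ι → E) :
    ‖∑ u ∈ P, f u‖ ^ 2 ≤ #(P.image cl) * ∑ c ∈ P.image cl, ‖∑ u ∈ P with cl u = c, f u‖ ^ 2 := by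
  rw [← sum_fiberwise_of_maps_to fun u (hu : u ∈ P) => mem_image_of_mem cl hu]
  exact (pow_le_pow_left₀ (norm_nonneg _) (norm_sum_le _ _) 2).trans sq_sum_le_card_mul_sum_sq

theorem integral_norm_sq_le_mul_sum_classes [DecidableEq κ] {H : (Fin k → ℝ) → ℝ}
    (hH : (fun α => (H α : ℂ)) ∈ trigSum Q) (hH0 : 0 ≤ H) (S : Finset ι) (φ : ι → Fin k → ℤ)
    (cl : ι → κ) (n : ℕ) (hn : ∀ u ∈ S, #((S.filter fun v => φ u - φ v ∈ Q).image cl) ≤ n) :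
    ∫ α in box k, ‖∑ u ∈ S, chr (φ u) α‖ ^ 2 * H α ≤
      n * ∑ c ∈ S.image cl, ∫ α in box k, ‖∑ u ∈ S with cl u = c, chr (φ u) α‖ ^ 2 * H α := by
  set T : Finset ((Fin k → ℤ) ⧸ Q) := S.image fun u => (φ u : (Fin k → ℤ) ⧸ Q)
  have hT : ∀ u ∈ S, (φ u : (Fin k → ℤ) ⧸ Q) ∈ T := fun u hu => mem_image_of_mem _ hu
  have hHc := continuous_of_ofReal_mem_trigSum hH
  have hci (P : Finset ι) :
      IntegrableOn (fun α => ‖∑ u ∈ P, chr (φ u) α‖ ^ 2 * H α) (box k) :=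
    integrableOn_box (((continuous_sum_chr P φ).norm.pow 2).mul hHc)
  have hclass (c : κ) : ∫ α in box k, ‖∑ u ∈ S with cl u = c, chr (φ u) α‖ ^ 2 * H α =
      ∑ l ∈ T, ∫ α in box k, ‖∑ u ∈ S with (φ u : (Fin k → ℤ) ⧸ Q) = l ∧ cl u = c,
        chr (φ u) α‖ ^ 2 * H α := by
    rw [integral_norm_sq_eq_sum_fibers hH _ φ fun u hu => hT u (mem_filter.1 hu).1]
    simp only [filter_filter, and_comm]
  rw [integral_norm_sq_eq_sum_fibers hH S φ hT, sum_congr rfl fun c _ => hclass c, sum_comm,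
    mul_sum]
  refine sum_le_sum fun l hl => ?_
  obtain ⟨w, hw, rfl⟩ := mem_image.1 hl
  rw [← integral_finsetSum _ fun c _ => hci _, ← integral_const_mul]
  refine integral_mono (hci _) ((integrable_finsetSum _ fun c _ => hci _).const_mul _) fun α => ?_
  dsimp only
  rw [← sum_mul, ← mul_assoc]
  refine mul_le_mul_of_nonneg_right ?_ (hH0 α)
  have hcard : #((S.filter fun u => (φ u : (Fin k → ℤ) ⧸ Q) = φ w).image cl) ≤ n := by
    simpa only [QuotientAddGroup.eq, neg_add_eq_sub] using hn w hw
  refine (norm_sum_sq_le_card_image_mul _ cl _).trans ?_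
  simp only [filter_filter]
  gcongr
  exact filter_subset _ _

lemma sum_le_sum_sum_of_cover {R : Type*} [AddCommMonoid R] [PartialOrder R]
    [IsOrderedAddMonoid R] {c : ι → R} (hc : 0 ≤ c) {V : Finset ι} {L : Finset κ}
    {W : κ → Finset ι} (hV : ∀ v ∈ V, ∃ l ∈ L, v ∈ W l) :
    ∑ v ∈ V, c v ≤ ∑ l ∈ L, ∑ v ∈ W l, c v := by
  rcases V.eq_empty_or_nonempty with rfl | ⟨v₀, hv₀⟩
  · simpa using sum_nonneg fun l _ => sum_nonneg fun v _ => hc v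
  have : Nonempty κ := ⟨(hV v₀ hv₀).choose⟩
  rw [sum_sigma']
  choose! f hfL hfW using hV
  calc ∑ v ∈ V, c v = ∑ x ∈ V.image fun v => (⟨f v, v⟩ : (_ : κ) × ι), c x.2 := by
        exact (sum_image (g := fun v => (⟨f v, v⟩ : (_ : κ) × ι)) (f := fun x => c x.2)
          fun v _ w _ h => (Sigma.mk.inj h).2.eq).symm
    _ ≤ _ := by
        refine sum_le_sum_of_subset_of_nonneg (image_subset_iff.2 fun v hv => ?_)
          fun x _ _ => hc x.2
        exact mem_sigma.2 ⟨hfL v hv, hfW v hv⟩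

/-- A trigonometric sum correlates non-negatively with every character, so overlaps in the cover
cost nothing. -/
theorem norm_integral_mul_sum_chr_le {G : (Fin k → ℝ) → ℂ} (hG : G ∈ trigSum ⊤)
    (χ : ι → Fin k → ℤ) {V : Finset ι} {L : Finset κ} {W : κ → Finset ι}
    (hV : ∀ v ∈ V, ∃ l ∈ L, v ∈ W l) :
    ‖∫ α in box k, G α * ∑ v ∈ V, chr (χ v) α‖ ≤
      ∑ l ∈ L, ∫ α in box k, ‖G α‖ * ‖∑ v ∈ W l, chr (χ v) α‖ := by
  choose c hc0 hc using fun v => exists_integral_eq_of_mem_trigSum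
    (mul_mem hG (chr_mem_trigSum (AddSubgroup.mem_top (χ v))))
  have hcχ (v : ι) : ∫ α in box k, G α * chr (χ v) α = c v := hc v
  have hnorm (P : Finset ι) : ‖∫ α in box k, G α * ∑ v ∈ P, chr (χ v) α‖ = ∑ v ∈ P, c v := by
    simp only [mul_sum]
    have hint (v : ι) : IntegrableOn (fun α => G α * chr (χ v) α) (box k) :=
      integrableOn_box ((continuous_of_mem_trigSum hG).mul (continuous_chr (χ v)))
    rw [integral_finsetSum _ fun v _ => hint v, sum_congr rfl fun v _ => hcχ v,
      ← Complex.ofReal_sum, Complex.norm_real,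
      Real.norm_of_nonneg (sum_nonneg fun v _ => hc0 v)]
  rw [hnorm]
  refine (sum_le_sum_sum_of_cover hc0 hV).trans (sum_le_sum fun l _ => ?_)
  rw [← hnorm]
  simpa only [norm_mul] using norm_integral_le_integral_norm (μ := volume.restrict (box k))
    fun α => G α * ∑ v ∈ W l, chr (χ v) α

end MeanValueInequalities

section ExponentialSums

variable {k p r : ℕ}

/-- The frequency vector `(x, x², …, x^k)` of an integer `x`. -/
def vec (k : ℕ) (x : ℤ) : Fin k → ℤ := fun j => x ^ ((j : ℕ) + 1)

/-- The integers in `[1, X]` congruent to `ξ` modulo `p^c`. -/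
def progr (p : ℕ) (X : ℝ) (c : ℕ) (ξ : ℤ) : Finset ℤ :=
  (Finset.Icc (1 : ℤ) ⌊X⌋).filter fun x => Int.ModEq ((p : ℤ) ^ c) x ξ

/-- The `r`-tuples from `[1, X]` satisfying `P`. -/
def tuples (r : ℕ) (X : ℝ) (P : (Fin r → ℤ) → Prop) : Finset (Fin r → ℤ) :=
  (Fintype.piFinset fun _ => Finset.Icc (1 : ℤ) ⌊X⌋).filter P

/-- The exponential sum over a finite set of integral tuples, the common form of products of the
sums `fexp` and of the conditioned sums `Fexp`. -/
def tupleSum (k : ℕ) (S : Finset (Fin r → ℤ)) (α : Fin k → ℝ) : ℂ :=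
  ∑ u ∈ S, chr (∑ i, vec k (u i)) α

/-- Conditioned tuples: congruent to `ξ` modulo `p^c`, pairwise distinct modulo `p^(c+1)`. -/
def Conditioned (p c : ℕ) (ξ : ℤ) (u : Fin r → ℤ) : Prop :=
  (∀ i, (p : ℤ) ^ c ∣ u i - ξ) ∧ ∀ i j, i ≠ j → ¬(p : ℤ) ^ (c + 1) ∣ u i - u j

/-- Conditioned tuples avoiding the class of `η` modulo `p`. They carry the sums `F_a(α;ξ)` with
`a ≥ 1`, for `ξ` outside that class, and the sum `F(α;η)`, for `a = 0`. -/
def Separated (p a : ℕ) (ξ η : ℤ) (u : Fin r → ℤ) : Prop :=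
  Conditioned p a ξ u ∧ ∀ i, ¬(p : ℤ) ∣ u i - η

lemma mem_progr {X : ℝ} {c : ℕ} {ξ x : ℤ} :
    x ∈ progr p X c ξ ↔ x ∈ Icc 1 ⌊X⌋ ∧ (p : ℤ) ^ c ∣ x - ξ := by
  rw [progr, mem_filter, Int.modEq_comm, Int.modEq_iff_dvd]

lemma mem_tuples {X : ℝ} {P : (Fin r → ℤ) → Prop} {u : Fin r → ℤ} :
    u ∈ tuples r X P ↔ (∀ i, u i ∈ Icc (1 : ℤ) ⌊X⌋) ∧ P u := by
  rw [tuples, mem_filter, Fintype.mem_piFinset]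

lemma fexp_eq (X : ℝ) (c : ℕ) (ξ : ℤ) (α : Fin k → ℝ) :
    fexp k p X c ξ α = ∑ x ∈ progr p X c ξ, chr (vec k x) α := by
  simp only [fexp, chr, progr, vec, Int.cast_pow]

lemma prod_sum_chr_vec (B : Fin r → Finset ℤ) (α : Fin k → ℝ) :
    ∏ i, ∑ x ∈ B i, chr (vec k x) α = tupleSum k (Fintype.piFinset B) α := by
  simp only [tupleSum, prod_univ_sum, chr_sum, prod_apply]

lemma prod_fexp_eq (X : ℝ) (c : ℕ) (v : Fin r → ℤ) (α : Fin k → ℝ) :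
    ∏ i, fexp k p X c (v i) α = tupleSum k (Fintype.piFinset fun i => progr p X c (v i)) α := by
  simp only [fexp_eq, prod_sum_chr_vec]

lemma fexp_pow_eq (X : ℝ) (c : ℕ) (ξ : ℤ) (n : ℕ) (α : Fin k → ℝ) :
    fexp k p X c ξ α ^ n = tupleSum k (Fintype.piFinset fun _ : Fin n => progr p X c ξ) α := by
  rw [← prod_fexp_eq, prod_const, card_univ, Fintype.card_fin]

/-- The representative of `x` modulo `q` in `[1, q]`, the range of residues used for the
sums `f_c(α;ξ)`. -/
def rep (q x : ℤ) : ℤ := (x - 1) % q + 1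

lemma rep_mem {q : ℤ} (hq : 0 < q) (x : ℤ) : 1 ≤ rep q x ∧ rep q x ≤ q := by
  have h1 := Int.emod_nonneg (x - 1) hq.ne'
  have h2 := Int.emod_lt_of_pos (x - 1) hq
  unfold rep
  omega

lemma dvd_sub_rep (q x : ℤ) : q ∣ x - rep q x := by
  rw [rep, ← sub_sub, sub_right_comm]
  exact Int.dvd_self_sub_emod

lemma rep_eq_iff {q x y : ℤ} (hy : 1 ≤ y ∧ y ≤ q) : rep q x = y ↔ q ∣ x - y := by
  refine ⟨fun h => h ▸ dvd_sub_rep q x, fun h => ?_⟩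
  have hrep := rep_mem (by omega : 0 < q) x
  have hdvd : q ∣ rep q x - y := by
    simpa only [sub_sub_sub_cancel_left] using dvd_sub h (dvd_sub_rep q x)
  exact sub_eq_zero.1 (Int.eq_zero_of_abs_lt_dvd hdvd (abs_lt.2 (by omega)))

lemma dvd_rep_sub_iff {q m x y : ℤ} (h : m ∣ q) : m ∣ rep q x - y ↔ m ∣ x - y := by
  rw [← dvd_add_right (h.trans (dvd_sub_rep q x)), sub_add_sub_cancel]

lemma dvd_rep_sub_rep_iff {q m x y : ℤ} (h : m ∣ q) : m ∣ rep q x - rep q y ↔ m ∣ x - y := by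
  rw [dvd_rep_sub_iff h, dvd_sub_comm, dvd_rep_sub_iff h, dvd_sub_comm]

lemma finsum_prod_fexp_eq (X : ℝ) (c : ℕ) {T : Set (Fin r → ℤ)}
    (hT : ∀ v ∈ T, ∀ i, 1 ≤ v i ∧ v i ≤ (p : ℤ) ^ c) (α : Fin k → ℝ) :
    ∑ᶠ v ∈ T, ∏ i, fexp k p X c (v i) α =
      tupleSum k (tuples r X fun u => (fun i => rep ((p : ℤ) ^ c) (u i)) ∈ T) α := by
  have hfin : T.Finite :=
    (Fintype.piFinset fun _ : Fin r => Icc (1 : ℤ) ((p : ℤ) ^ c)).finite_toSet.subset fun v hv =>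
      Fintype.mem_piFinset.2 fun i => mem_Icc.2 (hT v hv i)
  rw [finsum_mem_eq_finite_toFinset_sum _ hfin, tupleSum, ← sum_fiberwise_of_maps_to
    fun u hu => hfin.mem_toFinset.2 (mem_tuples.1 hu).2]
  refine sum_congr rfl fun v hv => ?_
  rw [hfin.mem_toFinset] at hv
  rw [prod_fexp_eq, tupleSum]
  refine sum_congr ?_ fun _ _ => rfl
  ext u
  rw [Fintype.mem_piFinset, mem_filter, mem_tuples]
  constructor
  · intro h
    have hrep : (fun i => rep ((p : ℤ) ^ c) (u i)) = v :=
      funext fun i => (rep_eq_iff (hT v hv i)).2 (mem_progr.1 (h i)).2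
    exact ⟨⟨fun i => (mem_progr.1 (h i)).1, hrep ▸ hv⟩, hrep⟩
  · rintro ⟨⟨h, -⟩, hrep⟩ i
    exact mem_progr.2 ⟨h i, (rep_eq_iff (hT v hv i)).1 (congrFun hrep i)⟩

lemma injective_intCast_zmod_iff {ι : Type*} {n : ℕ} {v : ι → ℤ} :
    (Function.Injective fun i => (v i : ZMod n)) ↔ ∀ i j, i ≠ j → ¬(n : ℤ) ∣ v i - v j := by
  simp only [Function.Injective, ZMod.intCast_eq_intCast_iff_dvd_sub, ne_eq, not_imp_not,
    dvd_sub_comm (a := (n : ℤ))]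

lemma rep_mem_XiSet_iff (hp : 0 < p) (c : ℕ) (ξ : ℤ) (u : Fin r → ℤ) :
    (fun i => rep ((p : ℤ) ^ (c + 1)) (u i)) ∈ XiSet p r c ξ ↔ Conditioned p c ξ u := by
  have hq : 0 < (p : ℤ) ^ (c + 1) := by positivity
  rw [XiSet, Set.mem_ofPred_eq, injective_intCast_zmod_iff, Conditioned]
  simp only [Nat.cast_pow, dvd_rep_sub_rep_iff dvd_rfl, Int.modEq_comm (b := ξ), Int.modEq_iff_dvd,
    dvd_rep_sub_iff (pow_dvd_pow (p : ℤ) c.le_succ), rep_mem hq, implies_true, and_self, true_and]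

lemma Fexp_eq (hp : 0 < p) (X : ℝ) (c : ℕ) (ξ : ℤ) (α : Fin k → ℝ) :
    Fexp k p r X c ξ α = tupleSum k (tuples r X (Conditioned p c ξ)) α := by
  rw [Fexp, finsum_prod_fexp_eq X (c + 1) fun v hv => hv.1]
  simp only [rep_mem_XiSet_iff hp]

lemma Fexp_eq_of_not_dvd (hp : 0 < p) (X : ℝ) {c : ℕ} (hc : 1 ≤ c) {ξ η : ℤ}
    (hξη : ¬(p : ℤ) ∣ ξ - η) (α : Fin k → ℝ) :
    Fexp k p r X c ξ α =
      tupleSum k (tuples r X (Separated p c ξ η)) α := by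
  rw [Fexp_eq hp]
  congr 2
  ext u
  refine ⟨fun h => ⟨h, fun i hd => hξη ?_⟩, fun h => h.1⟩
  simpa only [sub_sub_sub_cancel_left] using
    dvd_sub hd ((dvd_pow_self (p : ℤ) (Nat.one_le_iff_ne_zero.1 hc)).trans (h.1 i))

lemma Ftilde_eq (hp : 0 < p) (X : ℝ) (ξ η : ℤ) (α : Fin k → ℝ) :
    Ftilde k p r X η α = tupleSum k (tuples r X (Separated p 0 ξ η)) α := by
  have hrep (u : Fin r → ℤ) : (fun i => rep ((p : ℤ) ^ 1) (u i)) ∈ XiTilde p r η ↔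
      Separated p 0 ξ η u := by
    rw [XiTilde, Set.mem_ofPred_eq, ← zero_add 1, rep_mem_XiSet_iff hp]
    simp [Separated, Conditioned, Int.modEq_comm (b := η), Int.modEq_iff_dvd, dvd_rep_sub_iff]
  rw [Ftilde, finsum_prod_fexp_eq X 1 fun v hv => hv.1.1]
  simp only [hrep]

lemma sum_chr_mem_trigSum {ι : Type*} {Q : AddSubgroup (Fin k → ℤ)} {S : Finset ι}
    {φ : ι → Fin k → ℤ} (hφ : ∀ u ∈ S, φ u ∈ Q) : (fun α => ∑ u ∈ S, chr (φ u) α) ∈ trigSum Q := by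
  rw [← sum_fn]
  exact sum_mem fun u hu => chr_mem_trigSum (hφ u hu)

lemma tupleSum_mem_trigSum (S : Finset (Fin r → ℤ)) : tupleSum k S ∈ trigSum ⊤ :=
  sum_chr_mem_trigSum fun _ _ => AddSubgroup.mem_top _

lemma Fexp_mem_trigSum (hp : 0 < p) (X : ℝ) (c : ℕ) (ξ : ℤ) : Fexp k p r X c ξ ∈ trigSum ⊤ := by
  rw [funext (Fexp_eq hp X c ξ)]
  exact tupleSum_mem_trigSum _

lemma fexp_mem_trigSum (X : ℝ) (c : ℕ) (ξ : ℤ) : fexp k p X c ξ ∈ trigSum ⊤ := by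
  rw [funext (fexp_eq X c ξ)]
  exact sum_chr_mem_trigSum fun _ _ => AddSubgroup.mem_top _

lemma continuous_fexp (X : ℝ) (c : ℕ) (ξ : ℤ) : Continuous (fexp k p X c ξ) :=
  continuous_of_mem_trigSum (fexp_mem_trigSum X c ξ)

lemma continuous_Fexp (hp : 0 < p) (X : ℝ) (c : ℕ) (ξ : ℤ) : Continuous (Fexp k p r X c ξ) :=
  continuous_of_mem_trigSum (Fexp_mem_trigSum hp X c ξ)

theorem integral_norm_tupleSum_pow_le {S T : Finset (Fin r → ℤ)} (h : S ⊆ T) (n : ℕ) :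
    ∫ α in box k, ‖tupleSum k S α‖ ^ (2 * n) ≤ ∫ α in box k, ‖tupleSum k T α‖ ^ (2 * n) := by
  have hsum : tupleSum k S + tupleSum k (T \ S) = tupleSum k T := by
    ext α
    exact (add_comm _ _).trans (sum_sdiff h)
  exact hsum ▸ integral_norm_pow_le_integral_norm_add_pow (tupleSum_mem_trigSum S)
    (tupleSum_mem_trigSum (T \ S)) n

lemma tuples_conditioned_subset (X : ℝ) (c : ℕ) (η : ℤ) :
    tuples r X (Conditioned p c η) ⊆ Fintype.piFinset fun _ => progr p X c η := fun _ hu =>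
  have hu := mem_tuples.1 hu
  Fintype.mem_piFinset.2 fun i => mem_progr.2 ⟨hu.1 i, hu.2.1 i⟩

lemma integral_norm_Fexp_pow_le (hp : 0 < p) (X : ℝ) (c : ℕ) (ξ : ℤ) (n : ℕ) :
    ∫ α in box k, ‖Fexp k p r X c ξ α‖ ^ (2 * n) ≤
      ∫ α in box k, ‖fexp k p X c ξ α‖ ^ (2 * (r * n)) := by
  simpa only [← Fexp_eq hp, ← fexp_pow_eq, norm_pow, ← pow_mul, mul_left_comm] using
    integral_norm_tupleSum_pow_le (k := k)
      (tuples_conditioned_subset (p := p) (r := r) X c ξ) n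

end ExponentialSums

section Translation

variable {k p r : ℕ}

open Polynomial in
/-- The linear form in power sums that computes the power sum of degree `j` after translation
by `η`, up to a constant: its coefficients are those of `(X - η)^j`. -/
def shiftForm (η : ℤ) (j : ℕ) : (Fin k → ℤ) →+ ℤ where
  toFun n := ∑ i : Fin k, ((X - C η) ^ j).coeff ((i : ℕ) + 1) * n i
  map_zero' := by simp
  map_add' m n := by simp only [Pi.add_apply, mul_add, sum_add_distrib]

open Polynomial in
lemma shiftForm_vec (η : ℤ) {j : ℕ} (hj : j ≤ k) (x : ℤ) :
    shiftForm η j (vec k x) = (x - η) ^ j - (-η) ^ j := by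
  have hdeg : ((X - C η) ^ j).natDegree < k + 1 := by
    rw [natDegree_pow, natDegree_X_sub_C]
    omega
  have heval := eval_eq_sum_range' hdeg x
  rw [sum_range_succ', sum_range, coeff_zero_eq_eval_zero] at heval
  simp only [eval_pow, eval_sub, eval_X, eval_C, zero_sub, pow_zero, mul_one] at heval
  rw [heval, add_sub_cancel_right]
  rfl

lemma shiftForm_sum_vec (η : ℤ) {j : ℕ} (hj : j ≤ k) (u : Fin r → ℤ) :
    shiftForm η j (∑ i, vec k (u i)) = ∑ i, (u i - η) ^ j - r * (-η) ^ j := by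
  rw [map_sum]
  simp only [shiftForm_vec η hj, sum_sub_distrib, sum_const, card_univ, Fintype.card_fin,
    nsmul_eq_mul]

lemma sum_sub_pow_eq_of_sum_vec_eq {u v : Fin r → ℤ} (h : ∑ i, vec k (u i) = ∑ i, vec k (v i))
    (η : ℤ) {j : ℕ} (hj : j ≤ k) : ∑ i, (u i - η) ^ j = ∑ i, (v i - η) ^ j := by
  simpa only [shiftForm_sum_vec η hj, sub_left_inj] using congrArg (shiftForm η j) h

/-- The frequencies which, translated by `η`, satisfy the congruences modulo `m^j` for
`1 ≤ j ≤ k`. The conditioned sum `F_b(α;η)` only involves differences in this group with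
`m = p^b`. -/
def congGroup (k m : ℕ) (η : ℤ) : AddSubgroup (Fin k → ℤ) where
  carrier := {n | ∀ j ∈ Icc 1 k, (m : ℤ) ^ j ∣ shiftForm η j n}
  zero_mem' j _ := by simp
  add_mem' hm hn j hj := by
    rw [map_add]
    exact dvd_add (hm j hj) (hn j hj)
  neg_mem' hn j hj := by
    rw [map_neg]
    exact dvd_neg.2 (hn j hj)

lemma sub_mem_congGroup_iff {m : ℕ} {η : ℤ} {u v : Fin r → ℤ} :
    ∑ i, vec k (u i) - ∑ i, vec k (v i) ∈ congGroup k m η ↔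
      PowerSumsAgree k m (fun i => u i - η) fun i => v i - η := by
  refine forall₂_congr fun j hj => ?_
  have hjk := (mem_Icc.1 hj).2
  rw [map_sub, shiftForm_sum_vec η hjk, shiftForm_sum_vec η hjk, sub_sub_sub_cancel_right]

lemma ofReal_norm_sq_Fexp_mem_trigSum (hp : 0 < p) (X : ℝ) (b : ℕ) (η : ℤ) :
    (fun α => ((‖Fexp k p r X b η α‖ ^ 2 : ℝ) : ℂ)) ∈ trigSum (congGroup k (p ^ b) η) := by
  simp only [Fexp_eq hp, tupleSum, ofReal_norm_sq_sum_chr, ← sum_product']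
  refine sum_chr_mem_trigSum (φ := fun x : (Fin r → ℤ) × (Fin r → ℤ) =>
    ∑ i, vec k (x.1 i) - ∑ i, vec k (x.2 i)) fun x hx => sub_mem_congGroup_iff.2 fun j _ => ?_
  have hdvd {w : Fin r → ℤ} (hw : w ∈ tuples r X (Conditioned p b η)) :
      ((p ^ b : ℕ) : ℤ) ^ j ∣ ∑ i, (w i - η) ^ j := by
    rw [Nat.cast_pow]
    exact dvd_sum fun i _ => pow_dvd_pow_of_dvd ((mem_tuples.1 hw).2.1 i) j
  exact dvd_sub (hdvd (mem_product.1 hx).1) (hdvd (mem_product.1 hx).2)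

end Translation

section MeanValueBound

variable {k p : ℕ}

lemma integral_norm_sq_sum_chr {ι : Type*} (S : Finset ι) (φ : ι → Fin k → ℤ) :
    ∫ α in box k, ‖∑ u ∈ S, chr (φ u) α‖ ^ 2 = #{x ∈ S ×ˢ S | φ x.1 = φ x.2} := by
  have h := ofReal_integral_norm_sq_sum_chr_mul (continuous_const (y := (1 : ℝ))) S φ
  simp only [mul_one, Complex.ofReal_one, one_mul, integral_chr, sub_eq_zero] at h
  rw [← sum_product' S S fun u v => if φ u = φ v then (1 : ℂ) else 0, sum_boole] at h
  exact_mod_cast h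

lemma finite_setOf_Jcount (s k : ℕ) (Y : ℝ) : {xy : (Fin s → ℤ) × (Fin s → ℤ) |
    (∀ i, 1 ≤ xy.1 i ∧ (xy.1 i : ℝ) ≤ Y) ∧ (∀ i, 1 ≤ xy.2 i ∧ (xy.2 i : ℝ) ≤ Y) ∧
    ∀ j ∈ Icc 1 k, ∑ i, ((xy.1 i) ^ j - (xy.2 i) ^ j) = 0}.Finite := by
  refine ((Set.finite_Icc 1 fun _ => ⌊Y⌋).prod (Set.finite_Icc 1 fun _ => ⌊Y⌋)).subset ?_
  rintro ⟨x, y⟩ ⟨hx, hy, -⟩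
  exact ⟨⟨fun i => (hx i).1, fun i => Int.le_floor.2 (hx i).2⟩,
    ⟨fun i => (hy i).1, fun i => Int.le_floor.2 (hy i).2⟩⟩

/-- The affine map onto an initial segment carrying the progression `η (mod q)` to consecutive
integers, `η` being the residue in `[1, q]`. -/
def progrIndex (q η x : ℤ) : ℤ := (x - η) / q + 1

lemma sub_eq_mul_progrIndex {q η x : ℤ} (h : q ∣ x - η) :
    x - (η - q) = q * progrIndex q η x := by
  rw [progrIndex, mul_add, Int.mul_ediv_cancel' h]
  ring

lemma progrIndex_mem {X Y : ℝ} {c : ℕ} {η x : ℤ} (hp : 0 < p) (h1 : 1 ≤ η) (hη : η ≤ (p : ℤ) ^ c)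
    (hY : X / (p : ℝ) ^ c + 1 ≤ Y) (hx : x ∈ progr p X c η) :
    1 ≤ progrIndex ((p : ℤ) ^ c) η x ∧ (progrIndex ((p : ℤ) ^ c) η x : ℝ) ≤ Y := by
  have : (0 : ℤ) < (p : ℤ) ^ c := by positivity
  obtain ⟨hx, hdvd⟩ := mem_progr.1 hx
  obtain ⟨hx1, hxX⟩ := mem_Icc.1 hx
  have heq := sub_eq_mul_progrIndex hdvd
  have heq' : (x : ℝ) - (η - (p : ℝ) ^ c) = (p : ℝ) ^ c * progrIndex ((p : ℤ) ^ c) η x := by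
    exact_mod_cast heq
  have h1' : (1 : ℝ) ≤ η := by exact_mod_cast h1
  refine ⟨by by_contra! hneg; nlinarith, le_trans ?_ hY⟩
  rw [← sub_le_iff_le_add, le_div_iff₀ (by positivity)]
  linarith [Int.le_floor.1 hxX]

/-- Dilations and translations preserve the Vinogradov system. -/
theorem card_solutions_progr_le_Jcount (hp : 0 < p) {X Y : ℝ} {c : ℕ} {η : ℤ} (h1 : 1 ≤ η)
    (hη : η ≤ (p : ℤ) ^ c) (n : ℕ) (hY : X / (p : ℝ) ^ c + 1 ≤ Y) :
    #{x ∈ (Fintype.piFinset fun _ : Fin n => progr p X c η) ×ˢ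
        (Fintype.piFinset fun _ : Fin n => progr p X c η) |
      ∑ i, vec k (x.1 i) = ∑ i, vec k (x.2 i)} ≤ Jcount n k Y := by
  set S := Fintype.piFinset fun _ : Fin n => progr p X c η
  set q : ℤ := (p : ℤ) ^ c
  have hq : 0 < q := by positivity
  have hS_mem {u : Fin n → ℤ} (hu : u ∈ S) (i : Fin n) : u i ∈ progr p X c η :=
    Fintype.mem_piFinset.1 hu i
  have hsub {u : Fin n → ℤ} (hu : u ∈ S) (i : Fin n) :
      u i - (η - q) = q * progrIndex q η (u i) :=
    sub_eq_mul_progrIndex (mem_progr.1 (hS_mem hu i)).2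
  have hpow {u : Fin n → ℤ} (hu : u ∈ S) (j : ℕ) :
      ∑ i, (u i - (η - q)) ^ j = q ^ j * ∑ i, progrIndex q η (u i) ^ j := by
    simp only [mul_sum, ← mul_pow, hsub hu]
  have hinj {u v : Fin n → ℤ} (hu : u ∈ S) (hv : v ∈ S)
      (huv : progrIndex q η ∘ u = progrIndex q η ∘ v) : u = v := by
    ext i
    have hi : progrIndex q η (u i) = progrIndex q η (v i) := congrFun huv i
    exact sub_left_injective ((hsub hu i).trans (hi ▸ (hsub hv i).symm))
  rw [Jcount, ← Set.ncard_coe_finset]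
  refine Set.ncard_le_ncard_of_injOn (fun x => (progrIndex q η ∘ x.1, progrIndex q η ∘ x.2))
    ?_ ?_ (finite_setOf_Jcount n k Y)
  · rintro ⟨u, v⟩ huv
    obtain ⟨⟨hu, hv⟩, he⟩ := by simpa only [mem_coe, mem_filter, mem_product] using huv
    refine ⟨fun i => progrIndex_mem hp h1 hη hY (hS_mem hu i),
      fun i => progrIndex_mem hp h1 hη hY (hS_mem hv i), fun j hj => ?_⟩
    rw [sum_sub_distrib, sub_eq_zero]
    exact mul_left_cancel₀ (pow_ne_zero j hq.ne') ((hpow hu j).symm.trans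
      ((sum_sub_pow_eq_of_sum_vec_eq he (η - q) (mem_Icc.1 hj).2).trans (hpow hv j)))
  · rintro ⟨u, v⟩ huv ⟨u', v'⟩ huv' he
    obtain ⟨⟨hu, hv⟩, -⟩ := by simpa only [mem_coe, mem_filter, mem_product] using huv
    obtain ⟨⟨hu', hv'⟩, -⟩ := by simpa only [mem_coe, mem_filter, mem_product] using huv'
    rw [Prod.mk.injEq] at he
    rw [hinj hu hu' he.1, hinj hv hv' he.2]

theorem integral_norm_fexp_pow_le_Jcount (hp : 0 < p) {X Y : ℝ} {c : ℕ} {η : ℤ} (h1 : 1 ≤ η)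
    (hη : η ≤ (p : ℤ) ^ c) (n : ℕ) (hY : X / (p : ℝ) ^ c + 1 ≤ Y) :
    ∫ α in box k, ‖fexp k p X c η α‖ ^ (2 * n) ≤ Jcount n k Y := by
  have hnorm (α : Fin k → ℝ) : ‖fexp k p X c η α‖ ^ (2 * n) =
      ‖∑ u ∈ Fintype.piFinset fun _ : Fin n => progr p X c η, chr (∑ i, vec k (u i)) α‖ ^ 2 := by
    rw [← tupleSum, ← fexp_pow_eq, norm_pow, ← pow_mul, mul_comm]
  simp only [hnorm, integral_norm_sq_sum_chr]
  exact_mod_cast card_solutions_progr_le_Jcount hp h1 hη n hY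

end MeanValueBound

section Congruencing

variable {k p r t a b : ℕ} {ξ η : ℤ}

lemma card_residues_le (hp : 0 < p) {c : ℕ} (hac : a ≤ c) (ξ : ℤ) :
    #{z ∈ Icc (1 : ℤ) ((p : ℤ) ^ c) | (p : ℤ) ^ a ∣ z - ξ} ≤ p ^ (c - a) := by
  have hq : 0 < (p : ℤ) ^ a := by positivity
  have hpow : (p : ℤ) ^ c = (p : ℤ) ^ (c - a) * (p : ℤ) ^ a := (pow_sub_mul_pow _ hac).symm
  have hIcc : Icc (1 : ℤ) ((p : ℤ) ^ c) = Ioc 0 ((p : ℤ) ^ c) := by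
    ext
    simp only [mem_Icc, mem_Ioc, Int.add_one_le_iff.symm, zero_add]
  have hcard := Int.Ioc_filter_modEq_card 0 ((p : ℤ) ^ c) hq ξ
  have hfloor : ⌊(((p : ℤ) ^ c : ℤ) - ξ : ℚ) / ((p : ℤ) ^ a : ℤ)⌋ =
      (p : ℤ) ^ (c - a) + ⌊(((0 : ℤ) : ℚ) - ξ) / ((p : ℤ) ^ a : ℤ)⌋ := by
    rw [← Int.floor_intCast_add, hpow]
    congr 1
    field_simp
    push_cast
    ring
  rw [hfloor, add_sub_cancel_right, max_eq_left (by positivity)] at hcard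
  simp only [Int.modEq_comm (b := ξ), Int.modEq_iff_dvd] at hcard
  rw [hIcc]
  exact_mod_cast hcard.le

/-- The tuple of residues in `[1, q]`, labelling the class of `u` modulo `q`. -/
def residues (q : ℤ) (u : Fin r → ℤ) : Fin r → ℤ := fun i => rep q (u i)

lemma residues_eq_residues_iff {q : ℤ} (hq : 0 < q) {u w : Fin r → ℤ} :
    residues q u = residues q w ↔ ∀ i, q ∣ u i - w i := by
  simp only [funext_iff, residues, rep_eq_iff (rep_mem hq _), dvd_sub_comm (b := u _),
    dvd_rep_sub_iff dvd_rfl]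

lemma Separated.of_dvd_sub {q : ℤ} (hq : (p : ℤ) ^ (a + 1) ∣ q) {u w : Fin r → ℤ}
    (hw : Separated p a ξ η w) (h : ∀ i, q ∣ u i - w i) : Separated p a ξ η u := by
  have hdvd {m : ℤ} (hm : m ∣ q) (i : Fin r) (x : ℤ) : m ∣ u i - x ↔ m ∣ w i - x := by
    rw [← sub_add_sub_cancel (u i) (w i) x, dvd_add_right (hm.trans (h i))]
  have hpa : (p : ℤ) ^ a ∣ q := (pow_dvd_pow _ a.le_succ).trans hq
  have hp1 : (p : ℤ) ∣ q := (dvd_pow_self _ a.succ_ne_zero).trans hq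
  refine ⟨⟨fun i => (hdvd hpa i _).2 (hw.1.1 i), fun i j hij => ?_⟩,
    fun i => (hdvd hp1 i _).not.2 (hw.2 i)⟩
  rw [hdvd hq, dvd_sub_comm, hdvd hq, dvd_sub_comm]
  exact hw.1.2 i j hij

lemma filter_residues_eq {X : ℝ} {c : ℕ} (hp : 0 < p) (hc : a + 1 ≤ c) {w : Fin r → ℤ}
    (hw : Separated p a ξ η w) :
    (tuples r X (Separated p a ξ η)).filter
        (fun u => residues ((p : ℤ) ^ c) u = residues ((p : ℤ) ^ c) w) =
      Fintype.piFinset fun i => progr p X c (residues ((p : ℤ) ^ c) w i) := by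
  have hq : 0 < (p : ℤ) ^ c := by positivity
  ext u
  simp only [mem_filter, mem_tuples, residues_eq_residues_iff hq, Fintype.mem_piFinset, mem_progr,
    residues, dvd_sub_comm (b := u _), dvd_rep_sub_iff dvd_rfl]
  simp only [dvd_sub_comm (c := u _)]
  exact ⟨fun h i => ⟨h.1.1 i, h.2 i⟩, fun h => ⟨⟨fun i => (h i).1,
    hw.of_dvd_sub (pow_dvd_pow _ hc) fun i => (h i).2⟩, fun i => (h i).2⟩⟩

/-- The bound of `card_le_of_powerSumsAgree` for the number of classes modulo `p^{tb}`. -/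
def classBound (k p r t a b : ℕ) : ℕ :=
  r ^ r * p ^ ∑ l ∈ Icc (k - r + 1) t, ((t - l) * b + (k - l) * a)

lemma card_le_classBound (hp : p.Prime) (hrk : r ≤ k) (hkp : k < p) (ht : 1 ≤ t) (htk : t ≤ k)
    (hkt : k ≤ 2 * t + 1) (hab : a < b) (htab : t * a ≤ b) (hω : ¬(p : ℤ) ∣ ξ - η)
    {Z : Finset (Fin r → ℤ)} (hZ : ∀ z ∈ Z, Separated p a ξ η z)
    (hagree : ∀ z ∈ Z, ∀ z' ∈ Z, ∑ i, vec k (z i) - ∑ i, vec k (z' i) ∈ congGroup k (p ^ b) η)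
    (hsep : ∀ z ∈ Z, ∀ z' ∈ Z, (∀ i, (p : ℤ) ^ (t * b) ∣ z i - z' i) → z = z') :
    #Z ≤ classBound k p r t a b := by
  have hpa : (p : ℤ) ^ a ≠ 0 := pow_ne_zero _ (by exact_mod_cast hp.ne_zero)
  set w : (Fin r → ℤ) → Fin r → ℤ := fun z i => (z i - ξ) / (p : ℤ) ^ a
  have hw : ∀ z ∈ Z, ∀ i, z i = ξ + (p : ℤ) ^ a * w z i := fun z hz i => by
    rw [Int.mul_ediv_cancel' ((hZ z hz).1.1 i)]
    ring
  have hw_sub : ∀ z ∈ Z, ∀ i, z i - η = ξ - η + (p : ℤ) ^ a * w z i := fun z hz i => by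
    rw [hw z hz i]
    ring
  have hw_dvd {m : ℕ} : ∀ z ∈ Z, ∀ z' ∈ Z, ∀ i,
      (p : ℤ) ^ (a + m) ∣ z i - z' i ↔ (p : ℤ) ^ m ∣ w z i - w z' i := fun z hz z' hz' i => by
    rw [hw z hz, hw z' hz', add_sub_add_left_eq_sub, ← mul_sub, pow_add, mul_dvd_mul_iff_left hpa]
  have hinj : Set.InjOn w Z := fun z hz z' hz' h => by
    ext i
    rw [hw z hz, hw z' hz', h]
  have hatb : a ≤ t * b := hab.le.trans (Nat.le_mul_of_pos_left b ht)
  rw [← card_image_of_injOn hinj]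
  refine card_le_of_powerSumsAgree hp hrk hkp ht htk hkt hab htab hω
    (forall_mem_image.2 fun z hz => ⟨fun i => ?_, fun i j hij => ?_⟩)
    (forall_mem_image.2 fun z hz => forall_mem_image.2 fun z' hz' => ?_)
    (forall_mem_image.2 fun z hz => forall_mem_image.2 fun z' hz' h => ?_)
  · exact hw_sub z hz i ▸ (hZ z hz).2 i
  · have hij' := (hZ z hz).1.2 i j hij
    rwa [hw z hz i, hw z hz j, add_sub_add_left_eq_sub, ← mul_sub, pow_succ,
      mul_dvd_mul_iff_left hpa] at hij'
  · simpa only [hw_sub z hz, hw_sub z' hz'] using sub_mem_congGroup_iff.1 (hagree z hz z' hz')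
  · refine congrArg w (hsep z hz z' hz' fun i => ?_)
    rw [← Nat.add_sub_cancel' hatb]
    exact (hw_dvd z hz z' hz' i).2 (h i)

lemma card_image_residues_le (hp : p.Prime) (hrk : r ≤ k) (hkp : k < p) (ht : 1 ≤ t) (htk : t ≤ k)
    (hkt : k ≤ 2 * t + 1) (hab : a < b) (htab : t * a ≤ b) (hω : ¬(p : ℤ) ∣ ξ - η)
    {S : Finset (Fin r → ℤ)} (hS : ∀ u ∈ S, Separated p a ξ η u) (m : Fin k → ℤ) :
    #((S.filter fun v => m - ∑ i, vec k (v i) ∈ congGroup k (p ^ b) η).image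
      (residues ((p : ℤ) ^ (t * b)))) ≤ classBound k p r t a b := by
  have hq : 0 < (p : ℤ) ^ (t * b) := pow_pos (by exact_mod_cast hp.pos) _
  set S' := S.filter fun v => m - ∑ i, vec k (v i) ∈ congGroup k (p ^ b) η
  obtain ⟨Z, hZS, hinj, himage⟩ := exists_subset_injOn_image_eq_of_surjOn
    (f := residues ((p : ℤ) ^ (t * b))) (S' : Set _) (S'.image (residues ((p : ℤ) ^ (t * b))))
    (by rw [coe_image]; exact Set.surjOn_image _ _)
  rw [← himage, card_image_of_injOn hinj]
  refine card_le_classBound hp hrk hkp ht htk hkt hab htab hω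
    (fun z hz => hS z (mem_filter.1 (hZS hz)).1) (fun z hz z' hz' => ?_)
    fun z hz z' hz' h => hinj hz hz' ((residues_eq_residues_iff hq).2 h)
  simpa only [sub_sub_sub_cancel_left] using
    sub_mem (mem_filter.1 (hZS hz')).2 (mem_filter.1 (hZS hz)).2

lemma integral_norm_prod_fexp_sq_mul_le (hr : 1 ≤ r) (X : ℝ) (c : ℕ) (v : Fin r → ℤ)
    {H : (Fin k → ℝ) → ℝ} (hH : Continuous H) (hH0 : 0 ≤ H) {B : ℝ}
    (hB : ∀ i, ∫ α in box k, ‖fexp k p X c (v i) α‖ ^ (2 * r) * H α ≤ B) :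
    ∫ α in box k, ‖∏ i, fexp k p X c (v i) α‖ ^ 2 * H α ≤ r * B := by
  have hne : (univ : Finset (Fin r)).Nonempty := univ_nonempty_iff.2 ⟨⟨0, hr⟩⟩
  have hf (i : Fin r) := continuous_fexp (k := k) (p := p) X c (v i)
  have hint (i : Fin r) : IntegrableOn (fun α => ‖fexp k p X c (v i) α‖ ^ (2 * r) * H α) (box k) :=
    integrableOn_box (((hf i).norm.pow _).mul hH)
  calc ∫ α in box k, ‖∏ i, fexp k p X c (v i) α‖ ^ 2 * H α
      ≤ ∫ α in box k, ∑ i, ‖fexp k p X c (v i) α‖ ^ (2 * r) * H α := by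
        refine integral_mono (integrableOn_box
          (((continuous_finsetProd _ fun i _ => hf i).norm.pow 2).mul hH))
          (integrable_finsetSum _ fun i _ => hint i) fun α => ?_
        dsimp only
        rw [← sum_mul, norm_prod, ← prod_pow]
        refine mul_le_mul_of_nonneg_right ?_ (hH0 α)
        simpa only [card_univ, Fintype.card_fin, pow_mul] using
          prod_le_sum_pow_card hne fun i _ => sq_nonneg ‖fexp k p X c (v i) α‖
    _ = ∑ i, ∫ α in box k, ‖fexp k p X c (v i) α‖ ^ (2 * r) * H α :=
        integral_finsetSum _ fun i _ => hint i
    _ ≤ ∑ _i : Fin r, B := sum_le_sum fun i _ => hB i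
    _ = r * B := by rw [sum_const, card_univ, Fintype.card_fin, nsmul_eq_mul]

lemma integral_fexp_mul_Fexp_pow_le (hp : 0 < p) (ht : 1 ≤ t) (X : ℝ) (b c : ℕ) (η z : ℤ) :
    (∫ α in box k, ‖fexp k p X c z α‖ ^ (2 * r) * ‖Fexp k p r X b η α‖ ^ (2 * t)) ^ t ≤
      Iab k p r (r * t) X b c η z *
        (∫ α in box k, ‖Fexp k p r X b η α‖ ^ (2 * (t + 1))) ^ (t - 1) := by
  have hf := (continuous_fexp (k := k) (p := p) X c z).norm
  have hF := (continuous_Fexp (k := k) (r := r) hp X b η).norm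
  have hsub : 1 + (t - 1) = t := Nat.add_sub_cancel' ht
  have h := integral_pow_mul_pow_mul_le (i := 1) (j := t - 1)
    (u := fun α => ‖fexp k p X c z α‖ ^ (2 * r)) (w := fun α => ‖Fexp k p r X b η α‖ ^ 2)
    (h := fun α => ‖Fexp k p r X b η α‖ ^ 2)
    (integrableOn_box (((hf.pow (2 * r)).pow (1 + (t - 1))).mul (hF.pow 2)))
    (integrableOn_box (((hF.pow 2).pow (1 + (t - 1))).mul (hF.pow 2)))
    (fun α => by positivity) (fun α => by positivity) (fun α => by positivity) (by omega)
  have hFF (x : ℝ) : x ^ (2 * (t - 1)) * x ^ 2 = x ^ (2 * t) := by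
    rw [← pow_add, ← mul_add_one, Nat.sub_add_cancel ht]
  simp only [hsub, pow_one, ← pow_mul, mul_assoc, hFF, ← mul_add_one, ← pow_add] at h
  simpa only [Iab, mul_comm (‖Fexp k p r X b η _‖ ^ 2)] using h

lemma exists_sum_classes_le (hp : 0 < p) (hr : 1 ≤ r) {c : ℕ} (hc : a + 1 ≤ c)
    (hω : ¬(p : ℤ) ∣ ξ - η) (X : ℝ) {H : (Fin k → ℝ) → ℝ} (hH : Continuous H) (hH0 : 0 ≤ H) :
    ∃ z : ℤ, 1 ≤ z ∧ z ≤ (p : ℤ) ^ c ∧ ¬(p : ℤ) ∣ z - η ∧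
      ∑ l ∈ (tuples r X (Separated p a ξ η)).image (residues ((p : ℤ) ^ c)), ∫ α in box k,
          ‖∑ u ∈ tuples r X (Separated p a ξ η) with residues ((p : ℤ) ^ c) u = l,
            chr (∑ i, vec k (u i)) α‖ ^ 2 * H α ≤
        ((p : ℝ) ^ (c - a)) ^ r * (r * ∫ α in box k, ‖fexp k p X c z α‖ ^ (2 * r) * H α) := by
  set S := tuples r X (Separated p a ξ η)
  set q : ℤ := (p : ℤ) ^ c
  have hq : 0 < q := by positivity
  have hqa : (p : ℤ) ^ a ∣ q := pow_dvd_pow _ (by omega)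
  have hqp : (p : ℤ) ∣ q := dvd_pow_self _ (by omega)
  set R := {z ∈ Icc (1 : ℤ) q | (p : ℤ) ^ a ∣ z - ξ ∧ ¬(p : ℤ) ∣ z - η}
  have hres : ∀ u ∈ S, ∀ i, residues q u i ∈ R := fun u hu i => by
    obtain ⟨-, hu⟩ := mem_tuples.1 hu
    exact mem_filter.2 ⟨mem_Icc.2 (rep_mem hq _), (dvd_rep_sub_iff hqa).2 (hu.1.1 i),
      (dvd_rep_sub_iff hqp).not.2 (hu.2 i)⟩
  have hRne : R.Nonempty := ⟨rep q ξ, mem_filter.2 ⟨mem_Icc.2 (rep_mem hq ξ),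
    (dvd_rep_sub_iff hqa).2 (by simp), (dvd_rep_sub_iff hqp).not.2 hω⟩⟩
  have hcard : #(S.image (residues q)) ≤ (p ^ (c - a)) ^ r := by
    calc #(S.image (residues q)) ≤ #(Fintype.piFinset fun _ : Fin r => R) :=
          card_le_card (image_subset_iff.2 fun u hu => Fintype.mem_piFinset.2 (hres u hu))
      _ = #R ^ r := by simp
      _ ≤ _ := Nat.pow_le_pow_left ((card_le_card (monotone_filter_right _ fun _ _ h => h.1)).trans
            (card_residues_le hp (by omega) ξ)) r
  obtain ⟨z, hzR, hz_max⟩ := exists_max_image R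
    (fun z => ∫ α in box k, ‖fexp k p X c z α‖ ^ (2 * r) * H α) hRne
  obtain ⟨hz, -, hzη⟩ := mem_filter.1 hzR
  refine ⟨z, (mem_Icc.1 hz).1, (mem_Icc.1 hz).2, hzη, ?_⟩
  refine (sum_le_card_nsmul _ _ _ (forall_mem_image.2 fun w hw => ?_)).trans
    ((nsmul_eq_mul _ _).trans_le (mul_le_mul_of_nonneg_right (by exact_mod_cast hcard)
      (mul_nonneg r.cast_nonneg (integral_nonneg fun α => mul_nonneg (by positivity) (hH0 α)))))
  have hprod (α : Fin k → ℝ) :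
      ∑ u ∈ S with residues q u = residues q w, chr (∑ i, vec k (u i)) α =
        ∏ i, fexp k p X c (residues q w i) α := by
    rw [filter_residues_eq hp hc (mem_tuples.1 hw).2, prod_fexp_eq, tupleSum]
  simpa only [hprod] using integral_norm_prod_fexp_sq_mul_le hr X c (residues q w) hH hH0
    fun i => hz_max _ (hres w hw i)

/-- The congruences implicit in the conditioned block confine the variables of the first block to
few classes modulo `p^{tb}`. -/
theorem exists_integral_separated_le (hp : p.Prime) (hr : 1 ≤ r) (hrk : r ≤ k) (hkp : k < p)
    (ht : 2 ≤ t) (htk : t ≤ k) (hkt : k ≤ 2 * t + 1) (hab : a < b) (htab : t * a ≤ b)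
    (hω : ¬(p : ℤ) ∣ ξ - η) (X : ℝ) :
    ∃ z : ℤ, 1 ≤ z ∧ z ≤ (p : ℤ) ^ (t * b) ∧ ¬(p : ℤ) ∣ z - η ∧
      ∫ α in box k, ‖tupleSum k (tuples r X (Separated p a ξ η)) α‖ ^ 2 *
          ‖Fexp k p r X b η α‖ ^ (2 * t) ≤
        classBound k p r t a b * (((p : ℝ) ^ (t * b - a)) ^ r * (r *
          ∫ α in box k, ‖fexp k p X (t * b) z α‖ ^ (2 * r) * ‖Fexp k p r X b η α‖ ^ (2 * t))) := by
  have hH_mem : (fun α => ((‖Fexp k p r X b η α‖ ^ (2 * t) : ℝ) : ℂ)) ∈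
      trigSum (congGroup k (p ^ b) η) := by
    have hpow := pow_mem (ofReal_norm_sq_Fexp_mem_trigSum (k := k) (r := r) hp.pos X b η) t
    convert hpow using 1
    ext α
    simp [pow_mul]
  have hHc : Continuous fun α => ‖Fexp k p r X b η α‖ ^ (2 * t) :=
    (continuous_Fexp hp.pos X b η).norm.pow _
  have hH0 : (0 : (Fin k → ℝ) → ℝ) ≤ fun α => ‖Fexp k p r X b η α‖ ^ (2 * t) :=
    fun α => by positivity
  have hatb : a + 1 ≤ t * b := hab.trans_le (Nat.le_mul_of_pos_left b (by omega))
  obtain ⟨z, hz1, hz2, hzη, hz⟩ := exists_sum_classes_le hp.pos hr hatb hω X hHc hH0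
  have hclasses := integral_norm_sq_le_mul_sum_classes hH_mem hH0
    (tuples r X (Separated p a ξ η)) (fun u => ∑ i, vec k (u i))
    (residues ((p : ℤ) ^ (t * b))) (classBound k p r t a b) fun u _ =>
      card_image_residues_le hp hrk hkp (by omega) htk hkt hab htab hω
        (fun v hv => (mem_tuples.1 hv).2) _
  exact ⟨z, hz1, hz2, hzη, hclasses.trans (mul_le_mul_of_nonneg_left hz (Nat.cast_nonneg _))⟩

end Congruencing

section Conditioning

lemma exists_embedding_injective_or_constant {ι κ : Type*} [Fintype ι] {r t : ℕ} (ht : 1 ≤ t)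
    (hι : r * t ≤ Fintype.card ι) (v : ι → κ) :
    (∃ e : Fin r ↪ ι, Function.Injective (v ∘ e)) ∨
      ∃ y, ∃ e : Fin (t + 1) ↪ ι, ∀ i, v (e i) = y := by
  by_cases h : r ≤ Fintype.card (Set.range v)
  · obtain ⟨f⟩ : Nonempty (Fin r ↪ Set.range v) :=
      Function.Embedding.nonempty_of_card_le (by simpa using h)
    refine .inl ⟨f.trans ⟨_, Set.rangeSplitting_injective v⟩, fun i j hij => ?_⟩
    simpa [Set.apply_rangeSplitting, Subtype.val_inj] using hij
  · have hlt : Fintype.card (Set.range v) * t < Fintype.card ι :=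
      (Nat.mul_lt_mul_of_pos_right (not_le.1 h) ht).trans_le hι
    obtain ⟨y, hy⟩ := Fintype.exists_lt_card_fiber_of_mul_lt_card (Set.rangeFactorization v) hlt
    obtain ⟨f⟩ : Nonempty (Fin (t + 1) ↪ {i // Set.rangeFactorization v i = y}) :=
      Function.Embedding.nonempty_of_card_le (by simpa [Fintype.card_subtype] using hy)
    exact .inr ⟨y, f.trans (Function.Embedding.subtype _), fun i => congrArg Subtype.val (f i).2⟩

section Reindexing

variable {ι κ ρ A R : Type*} [Fintype ι] [Fintype κ] [Fintype ρ] [DecidableEq ι]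
  [DecidableEq κ] [DecidableEq ρ] [DecidableEq A] [CommSemiring R] {B : Finset A} (g : A → R)

lemma sum_filter_comp_inl_prod {D : Finset (ι → A)} (hD : D ⊆ Fintype.piFinset fun _ => B) :
    ∑ v ∈ (Fintype.piFinset fun _ : ι ⊕ ρ => B) with v ∘ Sum.inl ∈ D, ∏ i, g (v i) =
      (∑ u ∈ D, ∏ i, g (u i)) * (∑ x ∈ B, g x) ^ Fintype.card ρ := by
  rw [← card_univ, ← prod_const, prod_univ_sum, sum_mul_sum, ← sum_product']
  refine sum_equiv (Equiv.sumArrowEquivProdArrow ι ρ A) (fun v => ?_)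
    fun v _ => Fintype.prod_sum_type _
  have hinl : v ∘ Sum.inl ∈ D → ∀ i, v (Sum.inl i) ∈ B := fun h => Fintype.mem_piFinset.1 (hD h)
  simp only [mem_filter, mem_product, Fintype.mem_piFinset, Sum.forall,
    Equiv.sumArrowEquivProdArrow]
  tauto

lemma sum_filter_comp_embedding_prod (e : ι ↪ κ) {D : Finset (ι → A)}
    (hD : D ⊆ Fintype.piFinset fun _ => B) :
    ∑ v ∈ (Fintype.piFinset fun _ : κ => B) with v ∘ e ∈ D, ∏ i, g (v i) =
      (∑ u ∈ D, ∏ i, g (u i)) * (∑ x ∈ B, g x) ^ (Fintype.card κ - Fintype.card ι) := by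
  let σ : ι ⊕ ↥(Set.range e)ᶜ ≃ κ :=
    ((Equiv.ofInjective e e.injective).sumCongr (.refl _)).trans (Equiv.Set.sumCompl _)
  have hcard : Fintype.card ↥(Set.range e)ᶜ = Fintype.card κ - Fintype.card ι := by
    rw [← Fintype.card_congr σ, Fintype.card_sum, Nat.add_sub_cancel_left]
  rw [← hcard, ← sum_filter_comp_inl_prod g hD]
  refine sum_equiv (σ.symm.arrowCongr (.refl A)) (fun v => ?_) fun v _ => ?_
  · simp only [mem_filter, Fintype.mem_piFinset]
    exact and_congr (σ.forall_congr_right (q := fun i => v i ∈ B)).symm Iff.rfl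
  · exact (σ.prod_comp fun i => g (v i)).symm

end Reindexing

variable {k p r t a c : ℕ} {ξ η : ℤ}

lemma Iab_nonneg (k p r s : ℕ) (X : ℝ) (a b : ℕ) (ξ η : ℤ) : 0 ≤ Iab k p r s X a b ξ η :=
  integral_nonneg fun α => by positivity

lemma Kab_nonneg (k p r t : ℕ) (X : ℝ) (a b : ℕ) (ξ η : ℤ) : 0 ≤ Kab k p r t X a b ξ η :=
  integral_nonneg fun α => by positivity

lemma tupleSum_filter_comp_embedding {m s : ℕ} (e : Fin m ↪ Fin s) (X : ℝ)
    {D : Finset (Fin m → ℤ)} (hD : D ⊆ Fintype.piFinset fun _ => progr p X c η)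
    (α : Fin k → ℝ) :
    tupleSum k {v ∈ Fintype.piFinset fun _ => progr p X c η | v ∘ e ∈ D} α =
      tupleSum k D α * fexp k p X c η α ^ (s - m) := by
  simpa only [tupleSum, fexp_eq, chr_sum, prod_apply, Fintype.card_fin] using
    sum_filter_comp_embedding_prod (fun x => chr (vec k x) α) e hD

/-- Representatives of the residue classes modulo `p^(c+1)` contained in the class of `η` modulo
`p^c`. -/
def subclasses (p c : ℕ) (η : ℤ) : Finset ℤ :=
  {z ∈ Icc 1 ((p : ℤ) ^ (c + 1)) | (p : ℤ) ^ c ∣ z - η}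

lemma mem_subclasses {z : ℤ} :
    z ∈ subclasses p c η ↔ (1 ≤ z ∧ z ≤ (p : ℤ) ^ (c + 1)) ∧ (p : ℤ) ^ c ∣ z - η := by
  rw [subclasses, mem_filter, mem_Icc]

lemma rep_mem_subclasses (hp : 0 < p) {x : ℤ} (hx : (p : ℤ) ^ c ∣ x - η) :
    rep ((p : ℤ) ^ (c + 1)) x ∈ subclasses p c η :=
  mem_subclasses.2 ⟨rep_mem (by positivity) x, (dvd_rep_sub_iff (pow_dvd_pow _ c.le_succ)).2 hx⟩

lemma progr_subset_progr_of_mem_subclasses {z : ℤ} (hz : z ∈ subclasses p c η) (X : ℝ) :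
    progr p X (c + 1) z ⊆ progr p X c η := fun x hx => by
  obtain ⟨hx, hxz⟩ := mem_progr.1 hx
  refine mem_progr.2 ⟨hx, ?_⟩
  simpa using dvd_add ((pow_dvd_pow (p : ℤ) c.le_succ).trans hxz) (mem_subclasses.1 hz).2

lemma exists_embedding_conditioned_or_progr (hp : 0 < p) (ht : 1 ≤ t) {X : ℝ}
    {v : Fin (r * t) → ℤ} (hv : v ∈ Fintype.piFinset fun _ => progr p X c η) :
    (∃ e : Fin r ↪ Fin (r * t), v ∘ e ∈ tuples r X (Conditioned p c η)) ∨
      ∃ z ∈ subclasses p c η, ∃ e : Fin (t + 1) ↪ Fin (r * t),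
        v ∘ e ∈ Fintype.piFinset fun _ => progr p X (c + 1) z := by
  have hv (i) := mem_progr.1 (Fintype.mem_piFinset.1 hv i)
  rcases exists_embedding_injective_or_constant ht (Fintype.card_fin _).ge
    fun i => rep ((p : ℤ) ^ (c + 1)) (v i) with ⟨e, he⟩ | ⟨y, e, he⟩
  · refine .inl ⟨e, mem_tuples.2 ⟨fun i => (hv _).1, fun i => (hv _).2, fun i j hij hd =>
      hij (he ((rep_eq_iff (rep_mem (by positivity) _)).2 ?_))⟩⟩
    rwa [dvd_sub_comm, dvd_rep_sub_iff dvd_rfl, dvd_sub_comm]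
  · have hy : y ∈ subclasses p c η := he 0 ▸ rep_mem_subclasses hp (hv _).2
    exact .inr ⟨y, hy, e, Fintype.mem_piFinset.2 fun i =>
      mem_progr.2 ⟨(hv _).1, (rep_eq_iff (mem_subclasses.1 hy).1).1 (he i)⟩⟩

theorem integral_norm_sq_mul_norm_pow_le_sum {F f : (Fin k → ℝ) → ℂ} (hF : F ∈ trigSum ⊤)
    (hf : f ∈ trigSum ⊤) {κ : Type*} {m s : ℕ} {V : Finset (Fin m → ℤ)}
    (hV : ∀ α, f α ^ s = tupleSum k V α) {L : Finset κ} {W : κ → Finset (Fin m → ℤ)}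
    (hVL : ∀ v ∈ V, ∃ l ∈ L, v ∈ W l) :
    ∫ α in box k, ‖F α‖ ^ 2 * ‖f α‖ ^ (2 * s) ≤
      ∑ l ∈ L, ∫ α in box k, ‖f α‖ ^ s * ‖tupleSum k (W l) α‖ * ‖F α‖ ^ 2 := by
  have hG : F * star F * star f ^ s ∈ trigSum ⊤ :=
    mul_mem (mul_mem hF (star_mem_trigSum hF)) (pow_mem (star_mem_trigSum hf) s)
  have hint (α : Fin k → ℝ) : (F * star F * star f ^ s) α * ∑ v ∈ V, chr (∑ i, vec k (v i)) α =
      ((‖F α‖ ^ 2 * ‖f α‖ ^ (2 * s) : ℝ) : ℂ) := by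
    simp only [Pi.mul_apply, Pi.pow_apply, Pi.star_apply, Complex.star_def, Complex.mul_conj']
    rw [← tupleSum, ← hV, mul_assoc, ← mul_pow, Complex.conj_mul']
    push_cast
    ring
  have h := norm_integral_mul_sum_chr_le hG (fun v => ∑ i, vec k (v i)) hVL
  simp only [hint, integral_complex_ofReal, Complex.norm_real] at h
  refine (le_abs_self _).trans (h.trans_eq (sum_congr rfl fun l _ => ?_))
  simp [sq, tupleSum, mul_assoc, mul_comm]

/-- The number of ways of choosing the places of `r` variables forming a conditioned tuple, or of
`t + 1` variables in a common class, among `rt` variables. -/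
def placements (r t : ℕ) : ℕ :=
  Fintype.card (Fin r ↪ Fin (r * t)) + Fintype.card (Fin (t + 1) ↪ Fin (r * t))

lemma placements_pos (r : ℕ) (ht : 1 ≤ t) : 0 < placements r t :=
  Nat.add_pos_left (Fintype.card_pos_iff.2 ⟨Fin.castLEEmb (Nat.le_mul_of_pos_right r ht)⟩) _

lemma norm_pow_mul_norm_tupleSum_conditioned (hp : 0 < p) (ht : 1 ≤ t) (X : ℝ)
    (e : Fin r ↪ Fin (r * t)) (α : Fin k → ℝ) :
    ‖fexp k p X c η α‖ ^ (r * t) * ‖tupleSum k {v ∈ Fintype.piFinset fun _ => progr p X c η |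
        v ∘ e ∈ tuples r X (Conditioned p c η)} α‖ =
      ‖Fexp k p r X c η α‖ ^ 1 * (‖fexp k p X c η α‖ ^ r) ^ (2 * t - 1) := by
  rw [tupleSum_filter_comp_embedding e X (tuples_conditioned_subset X c _), ← Fexp_eq hp, norm_mul,
    norm_pow, mul_left_comm, ← pow_add, ← pow_mul, pow_one]
  obtain ⟨t, rfl⟩ := Nat.exists_eq_add_of_le' ht
  congr 2
  rw [mul_add_one, Nat.add_sub_cancel, show 2 * (t + 1) - 1 = 2 * t + 1 by omega]
  ring

lemma norm_pow_mul_norm_tupleSum_progr (X : ℝ) (e : Fin (t + 1) ↪ Fin (r * t)) {z : ℤ}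
    (hz : z ∈ subclasses p c η) (α : Fin k → ℝ) :
    ‖fexp k p X c η α‖ ^ (r * t) * ‖tupleSum k {v ∈ Fintype.piFinset fun _ => progr p X c η |
        v ∘ e ∈ Fintype.piFinset fun _ => progr p X (c + 1) z} α‖ =
      ‖fexp k p X (c + 1) z α‖ ^ (t + 1) *
        ‖fexp k p X c η α‖ ^ (2 * (r * t) - (t + 1)) := by
  have hle : t + 1 ≤ r * t := by simpa using Fintype.card_le_of_embedding e
  rw [tupleSum_filter_comp_embedding e X (Fintype.piFinset_subset _ _ fun _ =>
    progr_subset_progr_of_mem_subclasses hz X), ← fexp_pow_eq, norm_mul, norm_pow, norm_pow,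
    mul_left_comm, ← pow_add]
  congr 2
  omega

theorem Iab_le_placements_mul (hp : 0 < p) (ht : 1 ≤ t) (X : ℝ) (a c : ℕ) (ξ η : ℤ) :
    Iab k p r (r * t) X a c ξ η ≤ placements r t *
      ((∫ α in box k, ‖Fexp k p r X c η α‖ ^ 1 * (‖fexp k p X c η α‖ ^ r) ^ (2 * t - 1) *
          ‖Fexp k p r X a ξ α‖ ^ 2) +
        ∑ z ∈ subclasses p c η, ∫ α in box k, ‖fexp k p X (c + 1) z α‖ ^ (t + 1) *
          ‖fexp k p X c η α‖ ^ (2 * (r * t) - (t + 1)) * ‖Fexp k p r X a ξ α‖ ^ 2) := by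
  set V : Finset (Fin (r * t) → ℤ) := Fintype.piFinset fun _ => progr p X c η
  let W : (Fin r ↪ Fin (r * t)) ⊕ ℤ × (Fin (t + 1) ↪ Fin (r * t)) → Finset (Fin (r * t) → ℤ) :=
    Sum.elim (fun e => {v ∈ V | v ∘ e ∈ tuples r X (Conditioned p c η)})
      fun x => {v ∈ V | v ∘ x.2 ∈ Fintype.piFinset fun _ => progr p X (c + 1) x.1}
  have hcover : ∀ v ∈ V, ∃ l ∈ univ.disjSum (subclasses p c η ×ˢ univ), v ∈ W l := fun v hv => by
    rcases exists_embedding_conditioned_or_progr hp ht hv with ⟨e, he⟩ | ⟨z, hz, e, he⟩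
    · exact ⟨.inl e, by simp, mem_filter.2 ⟨hv, he⟩⟩
    · exact ⟨.inr (z, e), by simp [hz], mem_filter.2 ⟨hv, he⟩⟩
  refine (integral_norm_sq_mul_norm_pow_le_sum (Fexp_mem_trigSum hp X a ξ)
    (fexp_mem_trigSum X c η) (fexp_pow_eq X c η (r * t)) hcover).trans ?_
  simp only [sum_disjSum, sum_product, W, V, Sum.elim_inl, Sum.elim_inr,
    norm_pow_mul_norm_tupleSum_conditioned hp ht, sum_const, card_univ, nsmul_eq_mul, mul_add]
  rw [mul_sum]
  gcongr with z hz
  · exact Nat.le_add_right _ _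
  · simp only [norm_pow_mul_norm_tupleSum_progr X _ hz, sum_const, card_univ, nsmul_eq_mul]
    gcongr
    exact Nat.le_add_left _ _

theorem Iab_le_integral_or_exists_subclass (hp : 0 < p) (ht : 1 ≤ t) (X : ℝ) (a c : ℕ)
    (ξ η : ℤ) :
    Iab k p r (r * t) X a c ξ η ≤ 2 * placements r t *
      (∫ α in box k, ‖Fexp k p r X c η α‖ ^ 1 * (‖fexp k p X c η α‖ ^ r) ^ (2 * t - 1) *
        ‖Fexp k p r X a ξ α‖ ^ 2) ∨
    ∃ ζ ∈ subclasses p c η, Iab k p r (r * t) X a c ξ η ≤ 2 * placements r t * p *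
      ∫ α in box k, ‖fexp k p X (c + 1) ζ α‖ ^ (t + 1) *
        ‖fexp k p X c η α‖ ^ (2 * (r * t) - (t + 1)) * ‖Fexp k p r X a ξ α‖ ^ 2 := by
  set T₁ := ∫ α in box k, ‖Fexp k p r X c η α‖ ^ 1 * (‖fexp k p X c η α‖ ^ r) ^ (2 * t - 1) *
    ‖Fexp k p r X a ξ α‖ ^ 2
  let T₂ := fun ζ => ∫ α in box k, ‖fexp k p X (c + 1) ζ α‖ ^ (t + 1) *
    ‖fexp k p X c η α‖ ^ (2 * (r * t) - (t + 1)) * ‖Fexp k p r X a ξ α‖ ^ 2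
  have hI : Iab k p r (r * t) X a c ξ η ≤ placements r t * (T₁ + ∑ ζ ∈ subclasses p c η, T₂ ζ) :=
    Iab_le_placements_mul hp ht X a c ξ η
  obtain ⟨ζ, hζ, hmax⟩ := exists_max_image (subclasses p c η) T₂
    ⟨_, rep_mem_subclasses hp (x := η) (by simp)⟩
  have hT₂ : 0 ≤ T₂ ζ := integral_nonneg fun α => by positivity
  have hcard : #(subclasses p c η) ≤ p := by
    simpa [subclasses] using card_residues_le hp c.le_succ η
  have hsum : ∑ z ∈ subclasses p c η, T₂ z ≤ p * T₂ ζ :=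
    (sum_le_card_nsmul _ _ _ hmax).trans <| by
      rw [nsmul_eq_mul]
      exact mul_le_mul_of_nonneg_right (mod_cast hcard) hT₂
  rcases le_total (p * T₂ ζ) T₁ with h | h
  · left
    calc _ ≤ placements r t * (T₁ + T₁) := hI.trans (by gcongr; exact hsum.trans h)
      _ = _ := by ring
  · refine .inr ⟨ζ, hζ, ?_⟩
    calc _ ≤ placements r t * (p * T₂ ζ + p * T₂ ζ) := hI.trans (by gcongr)
      _ = 2 * placements r t * p * T₂ ζ := by ring

lemma pow_le_pow_mul_of_le_mul_of_pow_le {I E T K : ℝ} {i j : ℕ} (hI : 0 ≤ I) (hE : 0 ≤ E)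
    (hK : 0 ≤ K) (hi : i ≠ 0) (hIT : I ≤ E * T) (hT : T ^ (i + j) ≤ K ^ i * I ^ j) :
    I ^ i ≤ E ^ (i + j) * K ^ i := by
  rcases hI.eq_or_lt with rfl | hpos
  · rw [zero_pow hi]
    positivity
  refine le_of_mul_le_mul_right ?_ (pow_pos hpos j)
  calc I ^ i * I ^ j = I ^ (i + j) := (pow_add _ _ _).symm
    _ ≤ (E * T) ^ (i + j) := pow_le_pow_left₀ hI hIT _
    _ = E ^ (i + j) * T ^ (i + j) := mul_pow _ _ _
    _ ≤ E ^ (i + j) * (K ^ i * I ^ j) := by gcongr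
    _ = _ := (mul_assoc _ _ _).symm

lemma le_rpow_div_mul_of_pow_le {I A I' : ℝ} {m n l : ℕ} (hA : 1 ≤ A) (hI' : 0 ≤ I') (hl : 0 < l)
    (hln : l ≤ n) (h : I ^ n ≤ A ^ m * I' ^ n) : I ≤ A ^ ((m : ℝ) / l) * I' := by
  have hn : n ≠ 0 := (hl.trans_le hln).ne'
  refine le_of_pow_le_pow_left₀ hn (by positivity) (h.trans ?_)
  rw [mul_pow, ← Real.rpow_natCast, ← Real.rpow_natCast (A ^ _), ← Real.rpow_mul (by positivity)]
  gcongr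
  rw [div_mul_eq_mul_div, le_div_iff₀ (by positivity)]
  gcongr

/-- The constant lost in one conditioning step. -/
def condConst (r t : ℕ) : ℝ := (2 * placements r t) ^ (2 * (r * t))

lemma condConst_nonneg (r t : ℕ) : 0 ≤ condConst r t := by
  rw [condConst]
  positivity

lemma one_le_two_mul_placements (r : ℕ) (ht : 1 ≤ t) : (1 : ℝ) ≤ 2 * placements r t := by
  exact_mod_cast Nat.mul_pos two_pos (placements_pos r ht)

lemma Iab_le_condConst_mul_Kab (hp : 0 < p) (hr : 1 ≤ r) (ht : 1 ≤ t) {X : ℝ}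
    (hI : Iab k p r (r * t) X a c ξ η ≤ 2 * placements r t *
      ∫ α in box k, ‖Fexp k p r X c η α‖ ^ 1 * (‖fexp k p X c η α‖ ^ r) ^ (2 * t - 1) *
        ‖Fexp k p r X a ξ α‖ ^ 2) :
    Iab k p r (r * t) X a c ξ η ≤ condConst r t * Kab k p r t X a c ξ η := by
  have hF := continuous_Fexp (k := k) (r := r) hp X c η
  have hf := continuous_fexp (k := k) (p := p) X c η
  have hFa := continuous_Fexp (k := k) (r := r) hp X a ξ
  have hölder := integral_pow_mul_pow_mul_le (μ := volume.restrict (box k)) (i := 1)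
    (j := 2 * t - 1) (u := fun α => ‖Fexp k p r X c η α‖) (w := fun α => ‖fexp k p X c η α‖ ^ r)
    (h := fun α => ‖Fexp k p r X a ξ α‖ ^ 2)
    (integrableOn_box (by fun_prop)) (integrableOn_box (by fun_prop)) (fun α => norm_nonneg _)
    (fun α => by positivity) (fun α => by positivity) (by omega)
  have hj : 1 + (2 * t - 1) = 2 * t := by omega
  have hexp : r * (2 * t) = 2 * (r * t) := by ring
  rw [hj] at hölder
  have h := pow_le_pow_mul_of_le_mul_of_pow_le (i := 1) (j := 2 * t - 1) (Iab_nonneg ..)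
    (by positivity) (Kab_nonneg k p r t X a c ξ η) one_ne_zero hI <| by
      rw [hj]
      simpa only [Iab, Kab, mul_comm (‖Fexp k p r X a ξ _‖ ^ 2), ← pow_mul, hexp] using hölder
  rw [pow_one, pow_one, hj] at h
  refine h.trans (mul_le_mul_of_nonneg_right ?_ (Kab_nonneg ..))
  exact pow_le_pow_right₀ (one_le_two_mul_placements r ht)
    (Nat.mul_le_mul_left 2 (Nat.le_mul_of_pos_left t hr))

lemma Iab_le_condConst_mul_Iab_succ (hp : 0 < p) (hr : 1 ≤ r) (ht : 2 ≤ t) {X : ℝ} {ζ : ℤ}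
    (hI : Iab k p r (r * t) X a c ξ η ≤ 2 * placements r t * p *
      ∫ α in box k, ‖fexp k p X (c + 1) ζ α‖ ^ (t + 1) *
        ‖fexp k p X c η α‖ ^ (2 * (r * t) - (t + 1)) * ‖Fexp k p r X a ξ α‖ ^ 2) :
    Iab k p r (r * t) X a c ξ η ≤
      condConst r t * (p : ℝ) ^ (2 * (r * t : ℝ) / 3) * Iab k p r (r * t) X a (c + 1) ξ ζ := by
  have hf := continuous_fexp (k := k) (p := p) X c η
  have hf' := continuous_fexp (k := k) (p := p) X (c + 1) ζ
  have hFa := continuous_Fexp (k := k) (r := r) hp X a ξ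
  have hölder := integral_pow_mul_pow_mul_le (μ := volume.restrict (box k)) (i := t + 1)
    (j := 2 * (r * t) - (t + 1)) (u := fun α => ‖fexp k p X (c + 1) ζ α‖)
    (w := fun α => ‖fexp k p X c η α‖) (h := fun α => ‖Fexp k p r X a ξ α‖ ^ 2)
    (integrableOn_box (by fun_prop)) (integrableOn_box (by fun_prop)) (fun α => norm_nonneg _)
    (fun α => norm_nonneg _) (fun α => by positivity) (by omega)
  have hrt : t ≤ r * t := Nat.le_mul_of_pos_left t hr
  have hj : t + 1 + (2 * (r * t) - (t + 1)) = 2 * (r * t) := by omega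
  rw [hj] at hölder
  have hE := one_le_two_mul_placements r (one_le_two.trans ht)
  have hEp : 1 ≤ 2 * placements r t * (p : ℝ) :=
    one_le_mul_of_one_le_of_one_le hE (by exact_mod_cast hp)
  have h := pow_le_pow_mul_of_le_mul_of_pow_le (i := t + 1) (j := 2 * (r * t) - (t + 1))
    (Iab_nonneg ..) (by positivity) (Iab_nonneg k p r (r * t) X a (c + 1) ξ ζ) t.succ_ne_zero
    hI <| by
      rw [hj]
      simpa only [Iab, mul_comm (‖Fexp k p r X a ξ _‖ ^ 2)] using hölder
  rw [hj] at h
  refine (le_rpow_div_mul_of_pow_le hEp (Iab_nonneg ..) three_pos (by omega) h).trans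
    (mul_le_mul_of_nonneg_right ?_ (Iab_nonneg ..))
  rw [Real.mul_rpow (by positivity) (by positivity), condConst, ← Real.rpow_natCast]
  push_cast
  gcongr
  exact div_le_self (by positivity) (by norm_num)

theorem Iab_le_Kab_or_exists_Iab_succ (hp : 0 < p) (hr : 1 ≤ r) (ht : 2 ≤ t) (X : ℝ) (a c : ℕ)
    (ξ η : ℤ) :
    Iab k p r (r * t) X a c ξ η ≤ condConst r t * Kab k p r t X a c ξ η ∨
    ∃ ζ ∈ subclasses p c η, Iab k p r (r * t) X a c ξ η ≤
      condConst r t * (p : ℝ) ^ (2 * (r * t : ℝ) / 3) * Iab k p r (r * t) X a (c + 1) ξ ζ :=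
  (Iab_le_integral_or_exists_subclass hp (one_le_two.trans ht) X a c ξ η).imp
    (Iab_le_condConst_mul_Kab hp hr (one_le_two.trans ht))
    fun ⟨ζ, hζ, h⟩ => ⟨ζ, hζ, Iab_le_condConst_mul_Iab_succ hp hr ht h⟩

theorem exists_Kab_or_exists_Iab_add (hp : 0 < p) (hr : 1 ≤ r) (ht : 2 ≤ t) (X : ℝ) (a : ℕ)
    (hc : 1 ≤ c) {z : ℤ} (hz1 : 1 ≤ z) (hz2 : z ≤ (p : ℤ) ^ c) (hzξ : ¬(p : ℤ) ∣ z - ξ) (H : ℕ) :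
    (∃ h < H, ∃ η : ℤ, 1 ≤ η ∧ η ≤ (p : ℤ) ^ (c + h) ∧ ¬(p : ℤ) ∣ η - ξ ∧
      Iab k p r (r * t) X a c ξ z ≤ (condConst r t * (p : ℝ) ^ (2 * (r * t : ℝ) / 3)) ^ h *
        (condConst r t * Kab k p r t X a (c + h) ξ η)) ∨
    ∃ η : ℤ, 1 ≤ η ∧ η ≤ (p : ℤ) ^ (c + H) ∧ ¬(p : ℤ) ∣ η - ξ ∧
      Iab k p r (r * t) X a c ξ z ≤ (condConst r t * (p : ℝ) ^ (2 * (r * t : ℝ) / 3)) ^ H *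
        Iab k p r (r * t) X a (c + H) ξ η := by
  have hC := condConst_nonneg r t
  induction H with
  | zero => exact .inr ⟨z, hz1, hz2, hzξ, by simp⟩
  | succ H ih =>
    rcases ih with ⟨h, hh, hrest⟩ | ⟨η, hη1, hη2, hηξ, hI⟩
    · exact .inl ⟨h, hh.trans H.lt_succ_self, hrest⟩
    rcases Iab_le_Kab_or_exists_Iab_succ (k := k) hp hr ht X a (c + H) ξ η with hK | ⟨ζ, hζ, hI'⟩
    · refine .inl ⟨H, H.lt_succ_self, η, hη1, hη2, hηξ, hI.trans ?_⟩
      exact mul_le_mul_of_nonneg_left hK (by positivity)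
    · obtain ⟨⟨hζ1, hζ2⟩, hζη⟩ := mem_subclasses.1 hζ
      have hpζη : (p : ℤ) ∣ ζ - η := (dvd_pow_self _ (by omega)).trans hζη
      refine .inr ⟨ζ, hζ1, hζ2, fun hd => hηξ ?_, hI.trans ?_⟩
      · simpa using dvd_sub hd hpζη
      · rw [pow_succ, mul_assoc]
        exact mul_le_mul_of_nonneg_left hI' (by positivity)

end Conditioning

section Iteration

variable {k p r t a b : ℕ} {ξ η : ℤ}

lemma Iab_pow_le_Jcount (hp : 0 < p) {c : ℕ} {X Y Z : ℝ} (hξ1 : 1 ≤ ξ) (hξ2 : ξ ≤ (p : ℤ) ^ b)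
    (hη1 : 1 ≤ η) (hη2 : η ≤ (p : ℤ) ^ c) (hY : X / (p : ℝ) ^ b + 1 ≤ Y)
    (hZ : X / (p : ℝ) ^ c + 1 ≤ Z) :
    Iab k p r (r * t) X b c ξ η ^ (t + 1) ≤
      Jcount (r * (t + 1)) k Y * (Jcount (r * (t + 1)) k Z : ℝ) ^ t := by
  have hF := continuous_Fexp (k := k) (r := r) hp X b ξ
  have hf := continuous_fexp (k := k) (p := p) X c η
  have hölder := integral_pow_mul_pow_mul_le (μ := volume.restrict (box k)) (i := 1) (j := t)
    (u := fun α => ‖Fexp k p r X b ξ α‖ ^ 2) (w := fun α => ‖fexp k p X c η α‖ ^ (2 * r))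
    (h := fun _ => 1) (integrableOn_box (by fun_prop)) (integrableOn_box (by fun_prop))
    (fun α => by positivity) (fun α => by positivity) (fun _ => zero_le_one) (by omega)
  simp only [pow_one, mul_one, ← pow_mul, mul_assoc 2 r, add_comm 1 t] at hölder
  refine hölder.trans (mul_le_mul ?_ (pow_le_pow_left₀ (integral_nonneg fun α => by positivity)
    (integral_norm_fexp_pow_le_Jcount hp hη1 hη2 _ hZ) _) (by positivity) (by positivity))
  exact (integral_norm_Fexp_pow_le hp X b ξ (t + 1)).trans
    (integral_norm_fexp_pow_le_Jcount hp hξ1 hξ2 _ hY)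

lemma finite_setOf_Kab (k p r t : ℕ) (X : ℝ) (a b : ℕ) :
    {v : ℝ | ∃ ξ η : ℤ, 1 ≤ ξ ∧ ξ ≤ (p : ℤ) ^ a ∧ 1 ≤ η ∧ η ≤ (p : ℤ) ^ b ∧
      ¬Int.ModEq (p : ℤ) η ξ ∧ v = Kab k p r t X a b ξ η}.Finite := by
  refine ((Set.finite_Icc (1 : ℤ) ((p : ℤ) ^ a)).image2 (Kab k p r t X a b)
    (Set.finite_Icc (1 : ℤ) ((p : ℤ) ^ b))).subset ?_
  rintro v ⟨ξ, η, hξ1, hξ2, hη1, hη2, -, rfl⟩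
  exact Set.mem_image2_of_mem ⟨hξ1, hξ2⟩ ⟨hη1, hη2⟩

lemma Kab_le_Kmax (X : ℝ) (ha : a ≠ 0) (hξ1 : 1 ≤ ξ) (hξ2 : ξ ≤ (p : ℤ) ^ a) (hη1 : 1 ≤ η)
    (hη2 : η ≤ (p : ℤ) ^ b) (hηξ : ¬(p : ℤ) ∣ η - ξ) :
    Kab k p r t X a b ξ η ≤ Kmax k p r t X a b := by
  rw [Kmax, if_neg ha]
  exact le_csSup (finite_setOf_Kab k p r t X a b).bddAbove
    ⟨ξ, η, hξ1, hξ2, hη1, hη2, fun h => hηξ h.symm.dvd, rfl⟩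

lemma csSup_mem_of_finite_of_pos {S : Set ℝ} (hS : S.Finite) (h : 0 < sSup S) : sSup S ∈ S := by
  refine Set.Nonempty.csSup_mem (Set.nonempty_iff_ne_empty.2 fun hempty => ?_) hS
  rw [hempty, Real.sSup_empty] at h
  exact h.false

lemma exists_Kmax_zero_eq {X : ℝ} (hK : 0 < Kmax k p r t X 0 b) :
    ∃ η : ℤ, 1 ≤ η ∧ η ≤ (p : ℤ) ^ b ∧ Kmax k p r t X 0 b = Ktilde k p r t X b η := by
  rw [Kmax, if_pos rfl] at hK ⊢
  refine csSup_mem_of_finite_of_pos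
    (((Set.finite_Icc (1 : ℤ) ((p : ℤ) ^ b)).image (Ktilde k p r t X b)).subset ?_) hK
  rintro v ⟨η, hη1, hη2, rfl⟩
  exact Set.mem_image_of_mem _ ⟨hη1, hη2⟩

lemma exists_Kmax_eq_Kab {X : ℝ} (ha : a ≠ 0) (hK : 0 < Kmax k p r t X a b) :
    ∃ ξ η : ℤ, 1 ≤ ξ ∧ ξ ≤ (p : ℤ) ^ a ∧ 1 ≤ η ∧ η ≤ (p : ℤ) ^ b ∧ ¬Int.ModEq (p : ℤ) η ξ ∧
      Kmax k p r t X a b = Kab k p r t X a b ξ η := by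
  rw [Kmax, if_neg ha] at hK ⊢
  exact csSup_mem_of_finite_of_pos (finite_setOf_Kab k p r t X a b) hK

lemma exists_Kmax_eq_integral_separated {X : ℝ} (hp : p.Prime) (hK : 0 < Kmax k p r t X a b) :
    ∃ ξ η : ℤ, 1 ≤ η ∧ η ≤ (p : ℤ) ^ b ∧ ¬(p : ℤ) ∣ ξ - η ∧
      Kmax k p r t X a b = ∫ α in box k, ‖tupleSum k (tuples r X (Separated p a ξ η)) α‖ ^ 2 *
        ‖Fexp k p r X b η α‖ ^ (2 * t) := by
  rcases eq_or_ne a 0 with rfl | ha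
  · obtain ⟨η, hη1, hη2, hKη⟩ := exists_Kmax_zero_eq hK
    refine ⟨η + 1, η, hη1, hη2, ?_, ?_⟩
    · rw [add_sub_cancel_left]
      exact (Nat.prime_iff_prime_int.1 hp).not_dvd_one
    · simp only [hKη, Ktilde, Ftilde_eq hp.pos X (η + 1) η]
  · obtain ⟨ξ, η, -, -, hη1, hη2, hηξ, hKξη⟩ := exists_Kmax_eq_Kab ha hK
    have hξη : ¬(p : ℤ) ∣ ξ - η := fun h => hηξ (Int.modEq_iff_dvd.2 h)
    refine ⟨ξ, η, hη1, hη2, hξη, ?_⟩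
    simp only [hKξη, Kab, Fexp_eq_of_not_dvd hp.pos X (Nat.one_le_iff_ne_zero.2 ha) hξη]

/-- The exponent of `p` lost in the congruencing step: the number of admissible classes contributes
the sum, and the number of classes modulo `p^(tb)` in a class modulo `p^a` the last term. -/
def congExp (k r t a b : ℕ) : ℕ :=
  ∑ l ∈ Icc (k - r + 1) t, ((t - l) * b + (k - l) * a) + (t * b - a) * r

theorem exists_Kmax_pow_le (hp : p.Prime) (hr : 1 ≤ r) (hrk : r ≤ k) (hkp : k < p) (ht : 2 ≤ t)
    (htk : t ≤ k) (hkt : k ≤ 2 * t + 1) (hab : a < b) (htab : t * a ≤ b) {X Y : ℝ}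
    (hY : X / (p : ℝ) ^ b + 1 ≤ Y) (hK : 0 < Kmax k p r t X a b) :
    ∃ η : ℤ, 1 ≤ η ∧ η ≤ (p : ℤ) ^ b ∧
      ∃ z : ℤ, 1 ≤ z ∧ z ≤ (p : ℤ) ^ (t * b) ∧ ¬(p : ℤ) ∣ z - η ∧
        Kmax k p r t X a b ^ t ≤ ((r : ℝ) ^ (r + 1) * (p : ℝ) ^ congExp k r t a b) ^ t *
          (Iab k p r (r * t) X b (t * b) η z * (Jcount (r * (t + 1)) k Y : ℝ) ^ (t - 1)) := by
  obtain ⟨ξ, η, hη1, hη2, hξη, hKeq⟩ := exists_Kmax_eq_integral_separated hp hK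
  obtain ⟨z, hz1, hz2, hzη, hcong⟩ :=
    exists_integral_separated_le hp hr hrk hkp ht htk hkt hab htab hξη X
  refine ⟨η, hη1, hη2, z, hz1, hz2, hzη, ?_⟩
  set S := ∫ α in box k, ‖fexp k p X (t * b) z α‖ ^ (2 * r) * ‖Fexp k p r X b η α‖ ^ (2 * t)
  have hS : S ^ t ≤ Iab k p r (r * t) X b (t * b) η z *
      (Jcount (r * (t + 1)) k Y : ℝ) ^ (t - 1) := by
    refine (integral_fexp_mul_Fexp_pow_le hp.pos (by omega) X b (t * b) η z).trans ?_
    have hJ := (integral_norm_Fexp_pow_le (k := k) (r := r) hp.pos X b η (t + 1)).trans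
      (integral_norm_fexp_pow_le_Jcount hp.pos hη1 hη2 _ hY)
    exact mul_le_mul_of_nonneg_left
      (pow_le_pow_left₀ (integral_nonneg fun α => by positivity) hJ _) (Iab_nonneg ..)
  have hKS : Kmax k p r t X a b ≤ (r : ℝ) ^ (r + 1) * (p : ℝ) ^ congExp k r t a b * S := by
    refine (hKeq.trans_le hcong).trans_eq ?_
    rw [congExp, classBound, pow_add (p : ℝ), pow_mul, pow_succ]
    push_cast
    ring
  calc Kmax k p r t X a b ^ t ≤ _ := pow_le_pow_left₀ hK.le hKS t
    _ ≤ _ := by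
      rw [mul_pow]
      gcongr

theorem exists_le_Kmax_or_pow_le_Jcount (hp : 0 < p) (hr : 1 ≤ r) (ht : 2 ≤ t) (hb : 1 ≤ b)
    {X Y Z : ℝ} {z : ℤ} (hη1 : 1 ≤ η) (hη2 : η ≤ (p : ℤ) ^ b) (hz1 : 1 ≤ z)
    (hz2 : z ≤ (p : ℤ) ^ (t * b)) (hzη : ¬(p : ℤ) ∣ z - η) (H : ℕ)
    (hY : X / (p : ℝ) ^ b + 1 ≤ Y) (hZ : X / (p : ℝ) ^ (t * b + H) + 1 ≤ Z) :
    (∃ h < H, Iab k p r (r * t) X b (t * b) η z ≤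
      (condConst r t * (p : ℝ) ^ (2 * (r * t : ℝ) / 3)) ^ h *
        (condConst r t * Kmax k p r t X b (t * b + h))) ∨
    ∃ I : ℝ, Iab k p r (r * t) X b (t * b) η z ≤
        (condConst r t * (p : ℝ) ^ (2 * (r * t : ℝ) / 3)) ^ H * I ∧
      I ^ (t + 1) ≤ Jcount (r * (t + 1)) k Y * (Jcount (r * (t + 1)) k Z : ℝ) ^ t := by
  have hC := condConst_nonneg r t
  have htb : 1 ≤ t * b := Nat.mul_pos (by omega) hb
  rcases exists_Kab_or_exists_Iab_add (k := k) hp hr ht X b htb hz1 hz2 hzη H with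
    ⟨h, hh, ζ, hζ1, hζ2, hζη, hI⟩ | ⟨ζ, hζ1, hζ2, -, hI⟩
  · refine .inl ⟨h, hh, hI.trans ?_⟩
    gcongr
    exact Kab_le_Kmax X (by omega) hη1 hη2 hζ1 hζ2 hζη
  · exact .inr ⟨_, hI, Iab_pow_le_Jcount hp hη1 hη2 hζ1 hζ2 hY hZ⟩

end Iteration

section Exponents

lemma sum_Icc_comp_sub {α : Type*} [AddCommMonoid α] {n t : ℕ} (hn : n ≤ t) (f : ℕ → α) :
    ∑ l ∈ Icc (t - n + 1) t, f (t - l) = ∑ j ∈ range n, f j := by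
  refine sum_nbij' (t - ·) (t - ·) ?_ ?_ ?_ ?_ fun _ _ => rfl <;>
    simp only [mem_Icc, mem_range] <;> omega

lemma sum_range_mul_add_mul (n d a b : ℕ) :
    ((∑ j ∈ range n, (j * b + (d + j) * a) : ℕ) : ℝ) =
      (n : ℝ) * (n - 1) / 2 * b + (n * d + n * (n - 1) / 2) * a := by
  induction n with
  | zero => simp
  | succ n ih =>
    rw [sum_range_succ, Nat.cast_add, ih]
    push_cast
    ring

lemma congExp_eq {k r t a b : ℕ} (ht : t ≤ k) (hr : r ≤ k) (hrt : k ≤ r + t) (ha : a ≤ t * b) :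
    (congExp k r t a b : ℝ) = muC k r t * b + nuC k r t * a + (t * b - a) * r := by
  obtain ⟨n, hn⟩ := Nat.exists_eq_add_of_le hrt
  obtain ⟨d, rfl⟩ := Nat.exists_eq_add_of_le ht
  obtain rfl : r = d + n := by omega
  have hsum : ∑ l ∈ Icc (t + d - (d + n) + 1) t, ((t - l) * b + (t + d - l) * a) =
      ∑ j ∈ range n, (j * b + (d + j) * a) := by
    rw [← sum_Icc_comp_sub (by omega : n ≤ t), show t + d - (d + n) = t - n by omega]
    refine sum_congr rfl fun l hl => ?_
    rw [show t + d - l = d + (t - l) by have := mem_Icc.1 hl; omega]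
  rw [congExp, hsum, Nat.cast_add, sum_range_mul_add_mul, Nat.cast_mul, Nat.cast_sub ha, muC, nuC]
  push_cast
  ring

lemma muC_nonneg {k r t : ℕ} (hrt : k ≤ r + t) : 0 ≤ muC k r t := by
  obtain ⟨n, hn⟩ := Nat.exists_eq_add_of_le hrt
  have hcast : (t : ℝ) + r - k = n := by
    have : (r : ℝ) + t = k + n := by exact_mod_cast hn
    linarith
  rw [muC, hcast]
  rcases n.eq_zero_or_pos with rfl | hpos
  · simp
  · have : (1 : ℝ) ≤ n := by exact_mod_cast hpos
    exact mul_nonneg (by positivity) (by linarith)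

/-- The part of `r(t+1) - κ` in excess of `μ`; it also equals `(μ + ν)/(t-1)`, see
`muC_add_nuC`. -/
def betaC (k r t : ℕ) : ℝ := ((t : ℝ) + r - k) * (r - 1) / (t - 1)

lemma betaC_nonneg {k r t : ℕ} (hr : 1 ≤ r) (ht : 1 ≤ t) (hrt : k ≤ r + t) : 0 ≤ betaC k r t := by
  have hr : (1 : ℝ) ≤ r := by exact_mod_cast hr
  have ht : (1 : ℝ) ≤ t := by exact_mod_cast ht
  have hrt : (k : ℝ) ≤ r + t := by exact_mod_cast hrt
  exact div_nonneg (mul_nonneg (by linarith) (by linarith)) (by linarith)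

lemma kappa_eq (k r t : ℕ) : kappa k r t = r * (t + 1) - muC k r t - betaC k r t := by
  rw [kappa, muC, betaC]
  ring

lemma muC_add_nuC {k r t : ℕ} (ht : t ≠ 1) : muC k r t + nuC k r t = betaC k r t * (t - 1) := by
  have ht : (t : ℝ) - 1 ≠ 0 := sub_ne_zero.2 (by exact_mod_cast ht)
  rw [betaC, div_mul_cancel₀ _ ht, muC, nuC]
  ring

lemma kappa_le {k r t : ℕ} (hr : 1 ≤ r) (ht : 1 ≤ t) (hrt : k ≤ r + t) :
    kappa k r t ≤ r * (t + 1) := by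
  linarith [kappa_eq k r t, muC_nonneg hrt, betaC_nonneg hr ht hrt]

/-- The choice of `κ` makes the loss in the congruencing step fit the normalisation of the mean
values, with `t * betaC k r t * (b - t * a)` to spare. -/
lemma mul_congExp_le {k r t a b : ℕ} (hr : 1 ≤ r) (hrk : r ≤ k) (ht : 2 ≤ t) (htk : t ≤ k)
    (hrt : k ≤ r + t) (htab : t * a ≤ b) :
    (t : ℝ) * congExp k r t a b ≤ r * t * (b - t * a) + t * (kappa k r t - 2 * r) * a -
      (kappa k r t - 2 * r) * b + (2 * (r * (t + 1)) - kappa k r t) * (t - 1) * b := by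
  have hatb : a ≤ t * b := by nlinarith
  have hspare : 0 ≤ (t : ℝ) * betaC k r t * (b - t * a) := by
    have hβ := betaC_nonneg hr (one_le_two.trans ht) hrt
    have htab : (t : ℝ) * a ≤ b := by exact_mod_cast htab
    exact mul_nonneg (by positivity) (by linarith)
  have hν : nuC k r t = betaC k r t * (t - 1) - muC k r t := by
    linarith [muC_add_nuC (k := k) (r := r) (t := t) (by omega)]
  rw [congExp_eq htk hrk hrt hatb, hν, kappa_eq]
  linarith

lemma deep_exponent_le {r t a b ρ γ : ℝ} (hr : 1 ≤ r) (ht : 2 ≤ t) (ha : 0 ≤ a) (hb : 1 ≤ b)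
    (hρ : r ≤ ρ) (hγ : -(r * b) ≤ γ) :
    -(t * γ) + r * t * (b - t * a) + 2 * (r * t) / 3 * (15 * (t - 1) * b + 1) -
      ρ * (t * ((t - 1) * b + (15 * (t - 1) * b + 1))) + 2 * (r * t) * (t - 1) * b +
      (t + 1 / 2) ≤ -1 := by
  have htb : 1 ≤ (t - 1) * b := one_le_mul_of_one_le_of_one_le (by linarith) hb
  have hρ : r * (t * ((t - 1) * b + (15 * (t - 1) * b + 1))) ≤
      ρ * (t * ((t - 1) * b + (15 * (t - 1) * b + 1))) :=
    mul_le_mul_of_nonneg_right hρ (mul_nonneg (by linarith) (by linarith))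
  have hγ : t * -(r * b) ≤ t * γ := mul_le_mul_of_nonneg_left hγ (by linarith)
  have hrt : t ≤ r * t := le_mul_of_one_le_left (by linarith) hr
  have hrtb : r * t ≤ r * t * b := le_mul_of_one_le_right (by linarith) hb
  have hrta : 0 ≤ r * t * (t * a) := by positivity
  have hrttb : 0 ≤ r * t * b * (t - 2) := mul_nonneg (by linarith) (by linarith)
  linarith

end Exponents

section Thresholds

variable {t N : ℕ}

lemma thetaC_pos (ht : 1 ≤ t) : 0 < thetaC t N := by
  rw [thetaC]
  positivity

lemma deltaC_pos (ht : 1 ≤ t) (hN : 1 ≤ N) : 0 < deltaC t N :=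
  div_pos (thetaC_pos ht) (by positivity)

lemma deltaC_le (ht : 1 ≤ t) (hN : 1 ≤ N) : deltaC t N ≤ thetaC t N / 2 := by
  refine div_le_div_of_nonneg_left (thetaC_pos ht).le two_pos ?_
  have hpow : (1 : ℝ) ≤ (t : ℝ) ^ N := one_le_pow₀ (by exact_mod_cast ht)
  have hN : (1 : ℝ) ≤ N := by exact_mod_cast hN
  linarith [one_le_mul_of_one_le_of_one_le hN hpow]

end Thresholds

section Normalization

variable {k p r t a b : ℕ} {X M : ℝ}

/-- The normalised mean value `⟦K_{a,b}(X)⟧`, with `M` left free; `normK` is the case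
`M = Mval t N X`. -/
def normalizedMean (k p r t : ℕ) (X M : ℝ) (a b : ℕ) : ℝ :=
  Kmax k p r t X a b * (X / M ^ b) ^ (-(2 * ((r * t : ℕ) : ℝ))) *
    (X / M ^ a) ^ (kappa k r t - 2 * (r : ℝ))

lemma normalizedMean_pos_iff (hX : 0 < X) (hM : 0 < M) :
    0 < normalizedMean k p r t X M a b ↔ 0 < Kmax k p r t X a b := by
  rw [normalizedMean, mul_pos_iff_of_pos_right (by positivity),
    mul_pos_iff_of_pos_right (by positivity)]

/-- The logarithm of a mean value `V`, normalised as `⟦K_{a,b}(X)⟧` is. -/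
def logNormalized (k r t : ℕ) (X M : ℝ) (a b : ℕ) (V : ℝ) : ℝ :=
  Real.log V - 2 * (r * t) * (Real.log X - b * Real.log M) +
    (kappa k r t - 2 * r) * (Real.log X - a * Real.log M)

lemma log_rpow_mul_rpow (hX : 0 < X) (hM : 0 < M) (u v : ℝ) :
    Real.log (X ^ u * M ^ v) = u * Real.log X + v * Real.log M := by
  rw [Real.log_mul (by positivity) (by positivity), Real.log_rpow hX, Real.log_rpow hM]

lemma log_mul_normalizedMean {C : ℝ} (hC : 0 < C) (hX : 0 < X) (hM : 0 < M)
    (hK : 0 < Kmax k p r t X a b) (u v : ℝ) :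
    Real.log (C * X ^ u * M ^ v * normalizedMean k p r t X M a b) =
      Real.log C + u * Real.log X + v * Real.log M +
        logNormalized k r t X M a b (Kmax k p r t X a b) := by
  have hN := (normalizedMean_pos_iff hX hM).2 hK
  have hlog (e : ℕ) : Real.log (X / M ^ e) = Real.log X - e * Real.log M := by
    rw [Real.log_div hX.ne' (by positivity), Real.log_pow]
  rw [Real.log_mul (by positivity) hN.ne', mul_assoc C, Real.log_mul hC.ne' (by positivity),
    log_rpow_mul_rpow hX hM, normalizedMean, Real.log_mul (by positivity) (by positivity),
    Real.log_mul hK.ne' (by positivity), Real.log_rpow (by positivity),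
    Real.log_rpow (by positivity), hlog, hlog, logNormalized]
  push_cast
  ring

lemma log_le_add_log_two (hp : 0 < p) (hM : 0 < M) (hpM : (p : ℝ) ≤ 2 * M) :
    Real.log p ≤ Real.log M + Real.log 2 := by
  rw [← Real.log_mul hM.ne' two_ne_zero, mul_comm M]
  exact Real.log_le_log (by exact_mod_cast hp) hpM

lemma div_pow_add_one_le {e : ℕ} (hM : 0 < M) (hMp : M ≤ p) (hMX : M ^ e ≤ X) :
    X / (p : ℝ) ^ e + 1 ≤ 2 * (X / M ^ e) := by
  have hX : 0 < X := (pow_pos hM e).trans_le hMX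
  have hle : X / (p : ℝ) ^ e ≤ X / M ^ e := by gcongr
  linarith [(one_le_div (pow_pos hM e)).2 hMX]

lemma pow_le_rpow_half {d e : ℕ} (hX : 0 < X) (hM : 1 ≤ M) (hde : d ≤ e)
    (he : e * Real.log M ≤ Real.log X / 2) : M ^ d ≤ X ^ (1 / 2 : ℝ) := by
  have hM0 : 0 < M := one_pos.trans_le hM
  refine (pow_le_pow_right₀ hM hde).trans ?_
  rw [← Real.log_le_log_iff (pow_pos hM0 e) (by positivity), Real.log_pow, Real.log_rpow hX]
  linarith

lemma log_Jcount_le {n e : ℕ} {lam : ℝ} (hX : 0 < X) (hM : 0 < M)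
    (he : M ^ e ≤ X ^ (1 / 2 : ℝ))
    (hJ : ∀ Y : ℝ, X ^ (1 / 2 : ℝ) ≤ Y → (Jcount n k Y : ℝ) < Y ^ lam)
    (hpos : 0 < (Jcount n k (2 * (X / M ^ e)) : ℝ)) :
    Real.log (Jcount n k (2 * (X / M ^ e))) ≤
      lam * (Real.log X - e * Real.log M + Real.log 2) := by
  have hhalf : X ^ (1 / 2 : ℝ) ≤ X / M ^ e := by
    rw [le_div_iff₀ (by positivity)]
    calc X ^ (1 / 2 : ℝ) * M ^ e ≤ X ^ (1 / 2 : ℝ) * X ^ (1 / 2 : ℝ) := by gcongr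
      _ = X := by rw [← Real.rpow_add hX]; norm_num
  have hle : X / M ^ e ≤ 2 * (X / M ^ e) := le_mul_of_one_le_left (by positivity) one_le_two
  refine (Real.log_le_log hpos (hJ _ (hhalf.trans hle)).le).trans_eq ?_
  rw [Real.log_rpow (by positivity), Real.log_mul two_ne_zero (by positivity),
    Real.log_div hX.ne' (by positivity), Real.log_pow]
  ring

end Normalization

section Assembly

variable {k p r t a b : ℕ} {X M : ℝ}

/-- The logarithm of the constant lost in the congruencing step. -/
def congLoss (k r t : ℕ) (C : ℝ) (a b : ℕ) : ℝ :=
  t * (Real.log C + Real.log ((r : ℝ) ^ (r + 1)) + congExp k r t a b * Real.log 2)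

/-- The logarithm of the constant lost in one conditioning step. -/
def condLoss (r t : ℕ) : ℝ := Real.log (condConst r t) + 2 * (r * t) / 3 * Real.log 2

lemma one_le_condConst (ht : 1 ≤ t) : 1 ≤ condConst r t :=
  one_le_pow₀ (one_le_two_mul_placements r ht)

lemma condLoss_nonneg (r : ℕ) (ht : 1 ≤ t) : 0 ≤ condLoss r t := by
  have hcond := Real.log_nonneg (one_le_condConst (r := r) ht)
  have hlog := Real.log_nonneg one_le_two
  exact add_nonneg hcond (mul_nonneg (by positivity) hlog)

lemma log_condConst_mul_le (hp : 0 < p) (hM : 0 < M) (hpM : (p : ℝ) ≤ 2 * M) (ht : 1 ≤ t) :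
    Real.log (condConst r t * (p : ℝ) ^ (2 * (r * t : ℝ) / 3)) ≤
      condLoss r t + 2 * (r * t) / 3 * Real.log M := by
  have hC : 0 < condConst r t := zero_lt_one.trans_le (one_le_condConst ht)
  have hp0 : (0 : ℝ) < p := by exact_mod_cast hp
  rw [Real.log_mul hC.ne' (by positivity), Real.log_rpow hp0, condLoss, add_assoc, ← mul_add,
    add_comm (Real.log 2)]
  gcongr
  exact log_le_add_log_two hp hM hpM

lemma log_Kmax_le {I J : ℝ} (hp : 0 < p) (hM : 0 < M) (hpM : (p : ℝ) ≤ 2 * M) (hr : 1 ≤ r)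
    (ht : 1 ≤ t) (hK : 0 < Kmax k p r t X a b) (hI : 0 < I) (hJ : 0 < J)
    (h : Kmax k p r t X a b ^ t ≤
      ((r : ℝ) ^ (r + 1) * (p : ℝ) ^ congExp k r t a b) ^ t * (I * J ^ (t - 1))) :
    t * Real.log (Kmax k p r t X a b) ≤
      t * (Real.log ((r : ℝ) ^ (r + 1)) + congExp k r t a b * (Real.log M + Real.log 2)) +
        Real.log I + (t - 1) * Real.log J := by
  have hpow : 0 < (r : ℝ) ^ (r + 1) * (p : ℝ) ^ congExp k r t a b := by
    have : (0 : ℝ) < p := Nat.cast_pos.2 hp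
    positivity
  have h := Real.log_le_log (pow_pos hK t) h
  rw [Real.log_pow, Real.log_mul (pow_pos hpow t).ne' (by positivity), Real.log_pow,
    Real.log_mul (left_ne_zero_of_mul hpow.ne') (right_ne_zero_of_mul hpow.ne'),
    Real.log_mul hI.ne' (by positivity),
    Real.log_pow J, Real.log_pow (p : ℝ), Nat.cast_sub ht, Nat.cast_one] at h
  refine (h.trans ?_).trans_eq (add_assoc _ _ _).symm
  gcongr
  exact log_le_add_log_two hp hM hpM

lemma log_le_of_congruencing {C I J ψ c γ δ lam Λ : ℝ} (hr : 1 ≤ r) (hrk : r ≤ k)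
    (ht : 2 ≤ t) (htk : t ≤ k) (hrt : k ≤ r + t) (htab : t * a ≤ b) (hp : 0 < p) (hX : 1 ≤ X)
    (hM : 1 ≤ M) (hpM : (p : ℝ) ≤ 2 * M) (hC : 0 < C) (hδ : 0 ≤ δ)
    (hlam : Λ = lam - 2 * ((r * (t + 1) : ℕ) : ℝ) + kappa k r t)
    (hK : 0 < Kmax k p r t X a b) (hI : 0 < I) (hJ : 0 < J)
    (hyp : X ^ Λ * M ^ (Λ * ψ) ≤ C * X ^ (c * δ) * M ^ (-γ) * normalizedMean k p r t X M a b)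
    (hcong : Kmax k p r t X a b ^ t ≤
      ((r : ℝ) ^ (r + 1) * (p : ℝ) ^ congExp k r t a b) ^ t * (I * J ^ (t - 1)))
    (hlogJ : Real.log J ≤ (lam + δ) * (Real.log X - b * Real.log M + Real.log 2)) :
    Λ * Real.log X + Λ * (t * ψ + (t - 1) * b) * Real.log M ≤
      congLoss k r t C a b + (t - 1) * ((lam + δ) * Real.log 2) + t * (c + 1) * δ * Real.log X -
        (t * γ - r * t * (b - t * a)) * Real.log M + logNormalized k r t X M b (t * b) I := by
  have hX0 : 0 < X := one_pos.trans_le hX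
  have hM0 : 0 < M := one_pos.trans_le hM
  have hm := Real.log_nonneg hM
  have ht1 : (1 : ℝ) ≤ t := by exact_mod_cast one_le_two.trans ht
  have hlog := Real.log_le_log (by positivity) hyp
  rw [log_rpow_mul_rpow hX0 hM0, log_mul_normalizedMean hC hX0 hM0 hK] at hlog
  have hlog := mul_le_mul_of_nonneg_left hlog (Nat.cast_nonneg (α := ℝ) t)
  have hlogJ := mul_le_mul_of_nonneg_left hlogJ (sub_nonneg.2 ht1)
  have hlogK := log_Kmax_le hp hM0 hpM hr (one_le_two.trans ht) hK hI hJ hcong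
  have hexp := mul_le_mul_of_nonneg_right (mul_congExp_le hr hrk ht htk hrt htab) hm
  have hδx : 0 ≤ δ * (Real.log X + (t - 1) * (b * Real.log M)) :=
    mul_nonneg hδ (add_nonneg (Real.log_nonneg hX) (mul_nonneg (sub_nonneg.2 ht1) (by positivity)))
  obtain rfl : lam = Λ + 2 * (r * (t + 1)) - kappa k r t := by
    push_cast at hlam
    linarith
  rw [logNormalized] at hlog ⊢
  rw [congLoss]
  push_cast
  linarith

lemma le_exp_mul_of_conditioned {A I W ψ' c' γ' Λ : ℝ} {h : ℕ} (hp : 0 < p) (hX : 0 < X)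
    (hM : 0 < M) (hpM : (p : ℝ) ≤ 2 * M) (ht : 1 ≤ t) (hI : 0 < I)
    (hmain : Λ * Real.log X + Λ * ψ' * Real.log M ≤ A + c' * Real.log X -
      γ' * Real.log M + logNormalized k r t X M b (t * b) I)
    (hIK : I ≤ (condConst r t * (p : ℝ) ^ (2 * (r * t : ℝ) / 3)) ^ h *
      (condConst r t * Kmax k p r t X b (t * b + h)))
    (hW : A + (h + 1) * condLoss r t ≤ W) :
    X ^ Λ * M ^ (Λ * ψ') ≤
      Real.exp W * X ^ c' * M ^ (-(γ' + 4 / 3 * (r * t) * h)) *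
        normalizedMean k p r t X M b (t * b + h) := by
  have hC : 0 < condConst r t := zero_lt_one.trans_le (one_le_condConst ht)
  have hpow := pow_pos (mul_pos hC (Real.rpow_pos_of_pos (Nat.cast_pos.2 hp)
    (2 * (r * t : ℝ) / 3))) h
  have hK : 0 < Kmax k p r t X b (t * b + h) :=
    pos_of_mul_pos_right (pos_of_mul_pos_right (hI.trans_le hIK) hpow.le) hC.le
  have hN := (normalizedMean_pos_iff hX hM).2 hK
  rw [← Real.log_le_log_iff (by positivity) (by positivity), log_rpow_mul_rpow hX hM,
    log_mul_normalizedMean (Real.exp_pos W) hX hM hK, Real.log_exp]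
  have hlogI := Real.log_le_log hI hIK
  rw [Real.log_mul hpow.ne' (by positivity), Real.log_pow, Real.log_mul hC.ne' hK.ne'] at hlogI
  have hstep := mul_le_mul_of_nonneg_left (log_condConst_mul_le (r := r) hp hM hpM ht)
    (Nat.cast_nonneg (α := ℝ) h)
  have hcond : Real.log (condConst r t) ≤ condLoss r t :=
    le_add_of_nonneg_right (mul_nonneg (by positivity) (Real.log_nonneg one_le_two))
  rw [logNormalized] at hmain ⊢
  push_cast at hmain ⊢
  linarith

lemma log_le_of_meanValues {x m ℓ ρ t b e Λ δ I J J' : ℝ} (ht : 0 ≤ t) (hm : 0 ≤ m) (hb : 0 ≤ b)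
    (he : 0 ≤ e) (hΛδ : 0 ≤ Λ + δ) (hI : (t + 1) * I ≤ J + t * J')
    (hJ : J ≤ (Λ + (t + 1) * ρ + δ) * (x - b * m + ℓ))
    (hJ' : J' ≤ (Λ + (t + 1) * ρ + δ) * (x - e * m + ℓ)) :
    I ≤ (Λ + (t + 1) * ρ + δ) * (x + ℓ) - ρ * ((b + t * e) * m) := by
  have hJ' := mul_le_mul_of_nonneg_left hJ' ht
  have hspare : 0 ≤ (Λ + δ) * ((b + t * e) * m) := by positivity
  refine le_of_mul_le_mul_left (?_ : (t + 1) * _ ≤ (t + 1) * _) (by linarith)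
  linarith

theorem log_le_of_deep {x m ℓ ψ c γ Λ κ lam δ t r a b A C I I' J J' : ℝ} (hr : 1 ≤ r) (ht : 2 ≤ t)
    (ha : 0 ≤ a) (hb : 1 ≤ b) (hlam : Λ = lam - 2 * (r * (t + 1)) + κ) (hκ : κ ≤ r * (t + 1))
    (hm : 0 ≤ m) (hδ : 0 ≤ δ) (hδx : δ * x ≤ m / 2) (hcδx : c * δ * x ≤ m / 2) (hΛ : 0 ≤ Λ)
    (hψ : 0 ≤ ψ) (hγ : -(r * b) ≤ γ)
    (hmain : Λ * x + Λ * (t * ψ + (t - 1) * b) * m ≤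
      A + t * (c + 1) * δ * x - (t * γ - r * t * (b - t * a)) * m +
        (I - 2 * (r * t) * (x - t * b * m) + (κ - 2 * r) * (x - b * m)))
    (hI : I ≤ (15 * (t - 1) * b + 1) * (C + 2 * (r * t) / 3 * m) + I')
    (hI' : (t + 1) * I' ≤ J + t * J')
    (hJ : J ≤ (lam + δ) * (x - b * m + ℓ))
    (hJ' : J' ≤ (lam + δ) * (x - (t * b + (15 * (t - 1) * b + 1)) * m + ℓ)) :
    m ≤ A + (15 * (t - 1) * b + 1) * C + (lam + δ) * ℓ := by
  obtain ⟨ρ, rfl⟩ : ∃ ρ, κ = (t + 1) * (2 * r - ρ) :=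
    ⟨2 * r - κ / (t + 1), by field_simp; ring⟩
  obtain rfl : lam = Λ + (t + 1) * ρ := by linarith
  have hρ : r ≤ ρ := by
    have : 2 * r - ρ ≤ r := le_of_mul_le_mul_left (by linarith) (by linarith : 0 < t + 1)
    linarith
  have htb : 0 ≤ (t - 1) * b := mul_nonneg (by linarith) (by linarith)
  have hlogI' := log_le_of_meanValues (by linarith) hm (by linarith)
    (add_nonneg (mul_nonneg (by linarith) (by linarith)) (by linarith)) (by linarith) hI' hJ hJ'
  have hexp := mul_le_mul_of_nonneg_right (deep_exponent_le hr ht ha hb hρ hγ) hm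
  have hψ : 0 ≤ Λ * (t * ψ + (t - 1) * b) * m :=
    mul_nonneg (mul_nonneg hΛ (add_nonneg (mul_nonneg (by linarith) hψ) htb)) hm
  have hδx := mul_le_mul_of_nonneg_left hδx (by linarith : 0 ≤ t + 1)
  have hcδx := mul_le_mul_of_nonneg_left hcδx (by linarith : 0 ≤ t)
  linarith

lemma log_le_of_le_pow_mul {S I I' : ℝ} {n : ℕ} (hS : 0 < S) (hI : 0 < I) (h : I ≤ S ^ n * I') :
    0 < I' ∧ Real.log I ≤ n * Real.log S + Real.log I' := by
  have hI' : 0 < I' := pos_of_mul_pos_right (hI.trans_le h) (by positivity)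
  refine ⟨hI', (Real.log_le_log hI h).trans_eq ?_⟩
  rw [Real.log_mul (by positivity) hI'.ne', Real.log_pow]

lemma mul_log_le_of_pow_le {I J J' : ℝ} {n : ℕ} (hn : n ≠ 0) (hI : 0 < I) (hJ : 0 < J)
    (hJ' : 0 ≤ J') (h : I ^ (n + 1) ≤ J * J' ^ n) :
    0 < J' ∧ (n + 1) * Real.log I ≤ Real.log J + n * Real.log J' := by
  have hpos : 0 < J' ^ n := pos_of_mul_pos_right ((pow_pos hI _).trans_le h) hJ.le
  have hlog := Real.log_le_log (pow_pos hI _) h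
  rw [Real.log_pow, Real.log_mul hJ.ne' hpos.ne', Real.log_pow] at hlog
  exact ⟨lt_of_pow_lt_pow_left₀ n hJ' ((zero_pow hn).trans_lt hpos), by exact_mod_cast hlog⟩

/-- The number of conditioning steps after which the mean value bound contradicts `Λ ≥ 0`. -/
def condDepth (t b : ℕ) : ℕ := 15 * (t - 1) * b + 1

lemma cast_condDepth (ht : 1 ≤ t) (b : ℕ) : (condDepth t b : ℝ) = 15 * (t - 1) * b + 1 := by
  rw [condDepth]
  push_cast [Nat.cast_sub ht]
  rfl

lemma add_condDepth_le (ht : 1 ≤ t) (hb : 1 ≤ b) : t * b + condDepth t b ≤ 16 * t * b := by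
  obtain ⟨u, rfl⟩ := Nat.exists_eq_add_of_le ht
  rw [condDepth, add_tsub_cancel_left]
  linarith

/-- The logarithm of the constant lost in one step of the iteration, where `L` is the exponent in
the bound for the mean values. -/
def stepLoss (k r t : ℕ) (C L : ℝ) (a b : ℕ) : ℝ :=
  congLoss k r t C a b + t * (L * Real.log 2) + (15 * (t - 1) * b + 1) * condLoss r t

lemma log_le_stepLoss_of_deep {C ψ c γ δ lam Λ I I' : ℝ} (hp : 0 < p) (hr : 1 ≤ r) (ht : 2 ≤ t)
    (hrt : k ≤ r + t) (hb : 1 ≤ b) (hX : 0 < X) (hM : 1 ≤ M) (hpM : (p : ℝ) ≤ 2 * M)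
    (hbM : (16 * t * b : ℕ) * Real.log M ≤ Real.log X / 2) (hδ : 0 ≤ δ)
    (hδX : δ * Real.log X ≤ Real.log M / 2) (hcδX : c * δ * Real.log X ≤ Real.log M / 2)
    (hlam : Λ = lam - 2 * ((r * (t + 1) : ℕ) : ℝ) + kappa k r t) (hΛ : 0 ≤ Λ) (hψ : 0 ≤ ψ)
    (hγ : -((r : ℝ) * b) ≤ γ)
    (hJ : ∀ Y : ℝ, X ^ (1 / 2 : ℝ) ≤ Y → (Jcount (r * (t + 1)) k Y : ℝ) < Y ^ (lam + δ))
    (hJ0 : 0 < (Jcount (r * (t + 1)) k (2 * (X / M ^ b)) : ℝ)) (hI : 0 < I)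
    (hmain : Λ * Real.log X + Λ * (t * ψ + (t - 1) * b) * Real.log M ≤
      congLoss k r t C a b + (t - 1) * ((lam + δ) * Real.log 2) + t * (c + 1) * δ * Real.log X -
        (t * γ - r * t * (b - t * a)) * Real.log M + logNormalized k r t X M b (t * b) I)
    (hII' : I ≤ (condConst r t * (p : ℝ) ^ (2 * (r * t : ℝ) / 3)) ^ condDepth t b * I')
    (hI'J : I' ^ (t + 1) ≤ Jcount (r * (t + 1)) k (2 * (X / M ^ b)) *
      (Jcount (r * (t + 1)) k (2 * (X / M ^ (t * b + condDepth t b))) : ℝ) ^ t) :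
    Real.log M ≤ stepLoss k r t C (lam + δ) a b := by
  have hM0 : 0 < M := one_pos.trans_le hM
  have ht1 := one_le_two.trans ht
  have hS : 0 < condConst r t * (p : ℝ) ^ (2 * (r * t : ℝ) / 3) :=
    mul_pos (zero_lt_one.trans_le (one_le_condConst ht1))
      (Real.rpow_pos_of_pos (Nat.cast_pos.2 hp) _)
  obtain ⟨hI', hlogI⟩ := log_le_of_le_pow_mul hS hI hII'
  obtain ⟨hJ'0, hlogI'⟩ := mul_log_le_of_pow_le (by omega) hI' hJ0 (Nat.cast_nonneg _) hI'J
  have hlogJ := log_Jcount_le hX hM0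
    (pow_le_rpow_half hX hM (Nat.le_mul_of_pos_left b (by omega)) hbM) hJ hJ0
  have hlogJ' := log_Jcount_le hX hM0
    (pow_le_rpow_half hX hM (add_condDepth_le ht1 hb) hbM) hJ hJ'0
  have hlogS := mul_le_mul_of_nonneg_left (log_condConst_mul_le (r := r) hp hM0 hpM ht1)
    (Nat.cast_nonneg (α := ℝ) (condDepth t b))
  push_cast [cast_condDepth ht1, logNormalized] at hmain hlogI hlogS hlogJ'
  have hlogM := log_le_of_deep (by exact_mod_cast hr) (by exact_mod_cast ht) a.cast_nonneg
    (by exact_mod_cast hb) (by exact_mod_cast hlam) (kappa_le hr ht1 hrt) (Real.log_nonneg hM) hδ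
    hδX hcδX hΛ hψ hγ hmain (hlogI.trans (add_le_add_left hlogS _)) hlogI' hlogJ hlogJ'
  rw [stepLoss]
  linarith

lemma exists_log_le_of_congruencing {C ψ c γ δ lam Λ : ℝ} (hp : p.Prime) (hr : 1 ≤ r) (hrk : r ≤ k)
    (hkp : k < p) (ht : 2 ≤ t) (htk : t ≤ k) (hkt : k ≤ 2 * t + 1) (hrt : k ≤ r + t) (hab : a < b)
    (htab : t * a ≤ b) (hX : 1 ≤ X) (hM : 1 ≤ M) (hMp : M ≤ p) (hpM : (p : ℝ) ≤ 2 * M)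
    (hbM : M ^ b ≤ X ^ (1 / 2 : ℝ)) (hC : 0 < C) (hδ : 0 ≤ δ)
    (hlam : Λ = lam - 2 * ((r * (t + 1) : ℕ) : ℝ) + kappa k r t)
    (hJ : ∀ Y : ℝ, X ^ (1 / 2 : ℝ) ≤ Y → (Jcount (r * (t + 1)) k Y : ℝ) < Y ^ (lam + δ))
    (hyp : X ^ Λ * M ^ (Λ * ψ) ≤ C * X ^ (c * δ) * M ^ (-γ) * normalizedMean k p r t X M a b) :
    0 < (Jcount (r * (t + 1)) k (2 * (X / M ^ b)) : ℝ) ∧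
      ∃ η : ℤ, 1 ≤ η ∧ η ≤ (p : ℤ) ^ b ∧ ∃ z : ℤ, 1 ≤ z ∧ z ≤ (p : ℤ) ^ (t * b) ∧
        ¬(p : ℤ) ∣ z - η ∧ 0 < Iab k p r (r * t) X b (t * b) η z ∧
        Λ * Real.log X + Λ * (t * ψ + (t - 1) * b) * Real.log M ≤
          congLoss k r t C a b + (t - 1) * ((lam + δ) * Real.log 2) +
            t * (c + 1) * δ * Real.log X - (t * γ - r * t * (b - t * a)) * Real.log M +
            logNormalized k r t X M b (t * b) (Iab k p r (r * t) X b (t * b) η z) := by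
  have hX0 : 0 < X := one_pos.trans_le hX
  have hM0 : 0 < M := one_pos.trans_le hM
  have hK : 0 < Kmax k p r t X a b := (normalizedMean_pos_iff hX0 hM0).1 <|
    pos_of_mul_pos_right ((by positivity : (0 : ℝ) < X ^ Λ * M ^ (Λ * ψ)).trans_le hyp)
      (by positivity)
  obtain ⟨η, hη1, hη2, z, hz1, hz2, hzη, hcong⟩ :=
    exists_Kmax_pow_le hp hr hrk hkp ht htk hkt hab htab
      (div_pow_add_one_le hM0 hMp (hbM.trans (Real.rpow_le_self_of_one_le hX (by norm_num)))) hK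
  have hIJ := pos_of_mul_pos_right ((pow_pos hK t).trans_le hcong) (by positivity)
  have hI := pos_of_mul_pos_left hIJ (by positivity)
  have hJ0 := lt_of_pow_lt_pow_left₀ (t - 1) (Nat.cast_nonneg _)
    ((zero_pow (by omega)).trans_lt (pos_of_mul_pos_right hIJ hI.le))
  exact ⟨hJ0, η, hη1, hη2, z, hz1, hz2, hzη, hI,
    log_le_of_congruencing hr hrk ht htk hrt htab hp.pos hX hM hpM hC hδ hlam hK hI hJ0 hyp hcong
      (log_Jcount_le hX0 hM0 hbM hJ hJ0)⟩

theorem exists_normalizedMean_le {C W ψ c γ δ lam Λ : ℝ} (hp : p.Prime) (hr : 1 ≤ r) (hrk : r ≤ k)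
    (hkp : k < p) (ht : 2 ≤ t) (htk : t ≤ k) (hkt : k ≤ 2 * t + 1) (hrt : k ≤ r + t) (hab : a < b)
    (htab : t * a ≤ b) (hX : 1 ≤ X) (hM : 1 ≤ M) (hMp : M ≤ p) (hpM : (p : ℝ) ≤ 2 * M)
    (hbM : (16 * t * b : ℕ) * Real.log M ≤ Real.log X / 2) (hC : 0 < C) (hδ : 0 ≤ δ)
    (hδX : δ * Real.log X ≤ Real.log M / 2) (hcδX : c * δ * Real.log X ≤ Real.log M / 2)
    (hlam : Λ = lam - 2 * ((r * (t + 1) : ℕ) : ℝ) + kappa k r t) (hΛ : 0 ≤ Λ) (hψ : 0 ≤ ψ)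
    (hγ : -((r : ℝ) * b) ≤ γ)
    (hJ : ∀ Y : ℝ, X ^ (1 / 2 : ℝ) ≤ Y → (Jcount (r * (t + 1)) k Y : ℝ) < Y ^ (lam + δ))
    (hyp : X ^ Λ * M ^ (Λ * ψ) ≤ C * X ^ (c * δ) * M ^ (-γ) * normalizedMean k p r t X M a b)
    (hW : stepLoss k r t C (lam + δ) a b ≤ W) (hWM : W < Real.log M) :
    ∃ h : ℕ, h ≤ 15 * (t - 1) * b ∧
      X ^ Λ * M ^ (Λ * (t * ψ + (t - 1) * b)) ≤
        Real.exp W * X ^ (t * (c + 1) * δ) *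
          M ^ (-(t * γ - r * t * (b - t * a) + 4 / 3 * (r * t) * h)) *
          normalizedMean k p r t X M b (t * b + h) := by
  have hX0 : 0 < X := one_pos.trans_le hX
  have hM0 : 0 < M := one_pos.trans_le hM
  have ht1 := one_le_two.trans ht
  have hXhalf := Real.rpow_le_self_of_one_le hX (by norm_num : (1 / 2 : ℝ) ≤ 1)
  have hscaleY := pow_le_rpow_half hX0 hM (Nat.le_mul_of_pos_left b (by omega)) hbM
  have hscaleZ := pow_le_rpow_half hX0 hM (add_condDepth_le ht1 (by omega)) hbM
  obtain ⟨hJ0, η, hη1, hη2, z, hz1, hz2, hzη, hI, hmain⟩ := exists_log_le_of_congruencing hp hr hrk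
    hkp ht htk hkt hrt hab htab hX hM hMp hpM hscaleY hC hδ hlam hJ hyp
  rcases exists_le_Kmax_or_pow_le_Jcount hp.pos hr ht (by omega) hη1 hη2 hz1 hz2 hzη
    (condDepth t b) (div_pow_add_one_le hM0 hMp (hscaleY.trans hXhalf))
    (div_pow_add_one_le hM0 hMp (hscaleZ.trans hXhalf)) with ⟨h, hh, hIK⟩ | ⟨I', hII', hI'J⟩
  · refine ⟨h, Nat.le_of_lt_succ hh,
      le_exp_mul_of_conditioned hp.pos hX0 hM0 hpM ht1 hI hmain hIK ?_⟩
    have hL : 0 ≤ (lam + δ) * Real.log 2 := by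
      have : 0 ≤ (r : ℝ) * (t + 1) := by positivity
      have hκ := kappa_le hr ht1 hrt
      push_cast at hlam
      exact mul_nonneg (by linarith) (Real.log_nonneg one_le_two)
    have hh : (h : ℝ) + 1 ≤ 15 * (t - 1) * b + 1 := by
      rw [← cast_condDepth ht1]
      exact_mod_cast hh
    have hcond := mul_le_mul_of_nonneg_right hh (condLoss_nonneg r ht1)
    rw [stepLoss] at hW
    linarith
  · exact absurd (log_le_stepLoss_of_deep hp.pos hr ht hrt (by omega) hX0 hM hpM hbM hδ hδX hcδX
      hlam hΛ hψ hγ hJ hJ0 hI hmain hII' hI'J) (hW.trans_lt hWM).not_ge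

end Assembly

lemma mul_mul_le_half_of_le_inv {b t θ x : ℝ} (ht : 0 < t) (hθ : 0 < θ) (hx : 0 ≤ x)
    (hb : b ≤ (32 * t * θ)⁻¹) : 16 * t * b * (θ * x) ≤ x / 2 := by
  have hb1 : b * (32 * t * θ) ≤ 1 :=
    (mul_le_mul_of_nonneg_right hb (by positivity)).trans_eq (inv_mul_cancel₀ (by positivity))
  linarith [mul_le_mul_of_nonneg_right hb1 hx]

lemma exists_stepLoss_le (k r t : ℕ) (C L B : ℝ) :
    ∃ W : ℝ, ∀ a b : ℕ, a < b → (b : ℝ) ≤ B → stepLoss k r t C L a b ≤ W := by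
  obtain ⟨W, hW⟩ := ((Set.finite_Iic (⌊B⌋₊, ⌊B⌋₊)).image
    fun q => stepLoss k r t C L q.1 q.2).bddAbove
  refine ⟨W, fun a b hab hb => hW ⟨(a, b), ?_, rfl⟩⟩
  have hbB := Nat.le_floor hb
  exact ⟨hab.le.trans hbB, hbB⟩

theorem lemma7_1_general {k r t : ℕ} {θ δ lam Λ C₁ : ℝ} (hr : 1 ≤ r) (hrk : r ≤ k) (ht : 2 ≤ t)
    (htk : t ≤ k) (hkt : k ≤ 2 * t + 1) (hrt : k ≤ r + t) (hθ : 0 < θ) (hδ : 0 ≤ δ)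
    (hδθ : δ ≤ θ / 2) (hlam : Λ = lam - 2 * ((r * (t + 1) : ℕ) : ℝ) + kappa k r t)
    (hC₁ : 0 < C₁) :
    ∃ C₂ : ℝ, 0 < C₂ ∧ ∃ X₀ : ℝ, ∀ X : ℝ, X₀ ≤ X →
    (∀ Y : ℝ, X ^ (1 / 2 : ℝ) ≤ Y → (Jcount (r * (t + 1)) k Y : ℝ) < Y ^ (lam + δ)) →
    ∀ p : ℕ, p.Prime → k < p → X ^ θ ≤ p → (p : ℝ) ≤ 2 * X ^ θ → 0 ≤ Λ →
    ∀ a b : ℕ, a < b → (b : ℝ) ≤ (32 * t * θ)⁻¹ → t * a ≤ b →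
    ∀ ψ c γ : ℝ, c * δ ≤ θ / 2 → -((r : ℝ) * b) ≤ γ → 0 ≤ ψ →
    X ^ Λ * (X ^ θ) ^ (Λ * ψ) ≤
      C₁ * X ^ (c * δ) * (X ^ θ) ^ (-γ) * normalizedMean k p r t X (X ^ θ) a b →
    ∃ h : ℕ, h ≤ 15 * (t - 1) * b ∧
      X ^ Λ * (X ^ θ) ^ (Λ * (t * ψ + (t - 1) * b)) ≤
        C₂ * X ^ (t * (c + 1) * δ) *
          (X ^ θ) ^ (-(t * γ + 4 / 3 * (r * t) * h - r * t * (b - t * a))) *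
          normalizedMean k p r t X (X ^ θ) b (t * b + h) := by
  obtain ⟨W, hW⟩ := exists_stepLoss_le k r t C₁ (lam + δ) (32 * t * θ)⁻¹
  refine ⟨Real.exp W, Real.exp_pos W, Real.exp ((|W| + 1) / θ), ?_⟩
  intro X hX hJ p hp hkp hMp hpM hΛ a b hab hb htab ψ c γ hc hγ hψ hyp
  have hX0 : 0 < X := (Real.exp_pos _).trans_le hX
  have hlogM : Real.log (X ^ θ) = θ * Real.log X := Real.log_rpow hX0 θ
  have hlogX : |W| + 1 ≤ θ * Real.log X :=
    (div_le_iff₀' hθ).1 ((Real.le_log_iff_exp_le hX0).2 hX)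
  have hX1 : 1 ≤ X := (Real.one_le_exp (by positivity)).trans hX
  have hx := Real.log_nonneg hX1
  have ht0 : (0 : ℝ) < t := by exact_mod_cast (by omega : 0 < t)
  obtain ⟨h, hh, hle⟩ := exists_normalizedMean_le hp hr hrk hkp ht htk hkt hrt hab htab hX1
    (Real.one_le_rpow hX1 hθ.le) hMp hpM
    (by push_cast [hlogM]; exact mul_mul_le_half_of_le_inv ht0 hθ hx hb) hC₁ hδ
    (by linarith [mul_le_mul_of_nonneg_right hδθ hx])
    (by linarith [mul_le_mul_of_nonneg_right hc hx]) hlam hΛ hψ hγ hJ hyp (hW a b hab hb)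
    (by linarith [le_abs_self W])
  exact ⟨h, hh, by rwa [add_sub_right_comm]⟩

/-- Lemma 7.1: suppose Λ ≥ 0, 0 ≤ a < b ≤ (32tθ)⁻¹ with b ≥ ta, g = b - ta, and that
ψ, c, γ satisfy 0 ≤ c ≤ (2δ)⁻¹θ, γ ≥ -rb, ψ ≥ 0 together with
X^Λ M^{Λψ} ≤ C₁ X^{cδ} M^{-γ} ⟦K_{a,b}(X)⟧.  Then for some 0 ≤ h ≤ 15(t-1)b one has
X^Λ M^{Λψ'} ≤ C₂ X^{c'δ} M^{-γ'} ⟦K_{b,tb+h}(X)⟧, where ψ' = tψ + (t-1)b,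
c' = t(c+1) and γ' = tγ + (4/3)sh - sg. -/
theorem lemma7_1 (k r t : ℕ) (hk : 2 ≤ k)
    (ht1 : max 2 (((k : ℝ) - 1) / 2) ≤ (t : ℝ)) (ht2 : t ≤ k)
    (hr1 : 1 ≤ r) (hr2 : r ≤ k) (hrt : k ≤ r + t) (C₁ : ℝ) (hC₁ : 0 < C₁) :
    ∃ P₀ : ℝ, ∃ N₀ : ℕ, ∀ N : ℕ, N₀ ≤ N →
    ∃ C₂ : ℝ, 0 < C₂ ∧ ∃ X₀ : ℝ, ∀ X : ℝ, X₀ ≤ X →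
    (∀ Y : ℝ, X ^ ((1:ℝ)/2) ≤ Y →
        (Jcount (r*(t+1)) k Y : ℝ) < Y ^ (lamExp k (r*(t+1)) + deltaC t N)) →
    ∀ p : ℕ, p.Prime → P₀ < (p:ℝ) → Mval t N X < (p:ℝ) → (p:ℝ) ≤ 2 * Mval t N X →
    0 ≤ LamC k r t →
    ∀ a b : ℕ, a < b → (b:ℝ) ≤ (32*(t:ℝ)*thetaC t N)⁻¹ → t*a ≤ b →
    ∀ ψ c γ : ℝ, 0 ≤ c → c ≤ (2 * deltaC t N)⁻¹ * thetaC t N →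
      -((r:ℝ)*b) ≤ γ → 0 ≤ ψ →
    X ^ LamC k r t * Mval t N X ^ (LamC k r t * ψ) ≤
        C₁ * X ^ (c * deltaC t N) * Mval t N X ^ (-γ) * normK k p r t N X a b →
    ∃ h : ℕ, h ≤ 15*(t-1)*b ∧
      X ^ LamC k r t * Mval t N X ^ (LamC k r t * ((t:ℝ)*ψ + ((t:ℝ)-1)*b)) ≤
        C₂ * X ^ ((t:ℝ)*(c+1) * deltaC t N) *
          Mval t N X ^ (-((t:ℝ)*γ + (4/3)*((r*t : ℕ):ℝ)*(h:ℝ)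
            - ((r*t : ℕ):ℝ)*((b - t*a : ℕ):ℝ))) *
          normK k p r t N X b (t*b+h) := by
  have ht : 2 ≤ t := by exact_mod_cast (le_max_left _ _).trans ht1
  have hkt : k ≤ 2 * t + 1 := by
    have : ((k : ℝ) - 1) / 2 ≤ t := (le_max_right _ _).trans ht1
    exact_mod_cast (by linarith : (k : ℝ) ≤ 2 * t + 1)
  refine ⟨k, 1, fun N hN => ?_⟩
  have hδ : 0 < deltaC t N := deltaC_pos (by omega) hN
  obtain ⟨C₂, hC₂, X₀, hX₀⟩ := lemma7_1_general hr1 hr2 ht ht2 hkt hrt (thetaC_pos (by omega))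
    hδ.le (deltaC_le (by omega) hN) (rfl : LamC k r t = _) hC₁
  refine ⟨C₂, hC₂, X₀, fun X hX hJ p hp hkp hMp hpM hΛ a b hab hb htab ψ c γ _ hc hγ hψ hyp => ?_⟩
  have hcδ : c * deltaC t N ≤ thetaC t N / 2 := by
    rw [← div_eq_inv_mul, le_div_iff₀ (by positivity)] at hc
    linarith
  push_cast [Nat.cast_sub htab]
  exact hX₀ X hX hJ p hp (by exact_mod_cast hkp) hMp.le hpM hΛ a b hab hb htab ψ c γ hcδ hγ hψ hyp

end
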